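/- Let N be large, N ≤ N₁ ≤ 2N, and let k ≥ 3 be an integer. Suppose f : [N, N₁] → ℝ has continuous derivatives up to order k and there exist A ≥ 1 and λ_k > 0 with 0 < λ_k ≤ |f^{(k)}(t)| ≤ Aλ_k for all t ∈ [N, N₁]. Then ∑_{N<n≤N₁} e(f(n)) ≪_{A,k,ε} N^{1+ε} (λ_k^{1/(k(k−1))} + N^{−1/(k(k−1))} + N^{−2/(k(k−1))} λ_k^{−2/(k²(k−1))}). -/

import Mathlib

open scoped BigOperators Classical
open Real

noncomputable section

/-- `e(t) = e^{2πit}`. -/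
def eC (t : ℝ) : ℂ := Complex.exp (2 * Real.pi * Complex.I * t)

/-- The Piatetski-Shapiro set `ℕ^c = {⌊n^c⌋ : n ∈ ℕ}`. -/
def PS (c : ℝ) : Set ℕ := {m | ∃ n : ℕ, 0 < n ∧ m = ⌊(n : ℝ) ^ c⌋₊}

/-- The Fourier transform `f̂(α) = ∑_{n ∈ ℤ} f(n) e(αn)` of a finitely
supported function on `ℤ`. -/
def FT (f : ℤ → ℂ) (α : ℝ) : ℂ := ∑ᶠ n : ℤ, f n * eC (α * n)

/-- `w = (1/2) log log x`. -/
def wps (x : ℕ) : ℝ := Real.log (Real.log x) / 2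

/-- `W = 4 d³ ∏_{p ≤ w} p`. -/
def Wps (d x : ℕ) : ℕ :=
  4 * d ^ 3 * ∏ p ∈ Finset.filter Nat.Prime (Finset.Iic ⌊wps x⌋₊), p

/-- `σ(b) = #{z ∈ [W] : z^d ≡ -b (mod W)}`. -/
def sigmaPS (d W b : ℕ) : ℕ :=
  ((Finset.Icc 1 W).filter fun z => (z ^ d + b) % W = 0).card

/-- `N = ⌊x^d / W⌋ + 1`. -/
def Nps (d x : ℕ) : ℕ := ⌊(x : ℝ) ^ d / (Wps d x : ℝ)⌋₊ + 1

/-- `b ∈ [W]` and `-b ∈ (ℤ/Wℤ)^{×d}`. -/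
def bSpec (d x b : ℕ) : Prop :=
  b ∈ Finset.Icc 1 (Wps d x) ∧
    ∃ z : (ZMod (Wps d x))ˣ, (z : ZMod (Wps d x)) ^ d = -(b : ZMod (Wps d x))

/-- `S(d) = 2⌊d²/2⌋`. -/
def Sd (d : ℕ) : ℕ := 2 * (d ^ 2 / 2)

def hD (d : ℕ) : ℝ := 1 / ((d : ℝ) * ((d : ℝ) + 1) ^ 2 - 1)
def kD (d : ℕ) : ℝ := 2 / (27 * (d : ℝ) ^ 2 - 14)
def lD (d : ℕ) : ℝ := 2 / (27 * (d : ℝ) ^ 2 - 5)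

/-- `θ(d, c)`. -/
def θdc (d : ℕ) (c : ℝ) : ℝ :=
  if d = 2 then (4 * c + 7) / 13
  else if d = 3 then (15 * c + 14) / 30
  else if d ≤ 11 then (1 + c) / 2 * (1 - hD d)
  else if 2 ∣ d then (1 + c) / 2 * (1 - kD d)
  else (1 + c) / 2 * (1 - lD d)

/-- `c₂(d)`. -/
def c2ps (d : ℕ) : ℝ :=
  if d = 2 then 1 / 54
  else if d = 3 then 1 / 495
  else if d ≤ 11 then 2 * hD d / (4 * (Sd d : ℝ) + 1 - hD d)
  else if 2 ∣ d then 2 * kD d / (4 * (Sd d : ℝ) + 1 - kD d)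
  else 2 * lD d / (4 * (Sd d : ℝ) + 1 - lD d)

/-- The majorant `ν = ν_b` from the density transfer lemma, characterized by
its defining property. -/
def nuSpec (d x : ℕ) (c : ℝ) (b : ℕ) (ν : ℤ → ℝ) : Prop :=
  (∀ n : ℤ, ∀ p : ℕ, p.Prime → p ∈ PS c → p ≤ x →
      (Wps d x : ℤ) * n - (b : ℤ) = (p : ℤ) ^ d →
      ν n = c * (Nat.totient (Wps d x) : ℝ) /
          ((sigmaPS d (Wps d x) b : ℝ) * (Wps d x : ℝ)) *
          (p : ℝ) ^ ((d : ℝ) - 1 / c) * Real.log p) ∧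
  (∀ n : ℤ, (¬ ∃ p : ℕ, p.Prime ∧ p ∈ PS c ∧ p ≤ x ∧
      (Wps d x : ℤ) * n - (b : ℤ) = (p : ℤ) ^ d) → ν n = 0)

/-- The majorant `τ`, characterized by its defining property. -/
def tauSpec (d x : ℕ) (c : ℝ) (b : ℕ) (τ : ℤ → ℝ) : Prop :=
  (∀ n : ℤ, ∀ m : ℕ, m ∈ PS c → m ≤ x →
      (Wps d x : ℤ) * n - (b : ℤ) = (m : ℤ) ^ d →
      τ n = c / (sigmaPS d (Wps d x) b : ℝ) * (m : ℝ) ^ ((d : ℝ) - 1 / c)) ∧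
  (∀ n : ℤ, (¬ ∃ m : ℕ, m ∈ PS c ∧ m ≤ x ∧
      (Wps d x : ℤ) * n - (b : ℤ) = (m : ℤ) ^ d) → τ n = 0)

/-- The function `μ`, characterized by its defining property. -/
def muSpec (d x : ℕ) (b : ℕ) (μ : ℤ → ℝ) : Prop :=
  (∀ n : ℤ, ∀ m : ℕ, 1 ≤ m → m ≤ x →
      (Wps d x : ℤ) * n - (b : ℤ) = (m : ℤ) ^ d →
      μ n = (m : ℝ) ^ (d - 1) / (sigmaPS d (Wps d x) b : ℝ)) ∧
  (∀ n : ℤ, (¬ ∃ m : ℕ, 1 ≤ m ∧ m ≤ x ∧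
      (Wps d x : ℤ) * n - (b : ℤ) = (m : ℤ) ^ d) → μ n = 0)



/-!
Let `k = d + 1` and let `p > d` be prime. The `p`-adic form of `ℓ²` decoupling for the moment curve
of degree `d` is proved by induction on the degree. Lower-degree decoupling, applied to a product
whose two factors live in residue classes that differ modulo `p`, gives bilinear inequalities which
pass from a pair of scales to a pair of finer ones; affine rescaling of the moment curve turns any
exponent `η` of decoupling into a smaller one, so that the critical exponent is `0`.

Specialised to characters on `(ℤ / p ^ (d g)) ^ d`, this is Vinogradov's mean value theorem. For a
phase `f` with `f⁽ᵏ⁾ ≍ λ`, take `H = p ^ g` with `λ H ^ k ≍ 1` and average the sum over shifts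
`h ≤ H`. On each short sum `f` is a polynomial of degree `d` in `h` up to a phase of bounded
variation, so Hölder's inequality and the mean value theorem reduce the claim to counting the pairs
`(m, n)` for which the Taylor coefficients of `f` at `m` and at `n` lie in the same box of side
`H ^ (-j)` in the `j`-th coordinate, modulo `1`. The last two coordinates suffice: as `n` varies the
coefficient of degree `d` moves with speed about `λ`, and the one of degree `d - 1` then controls
the pairs whose top coefficients differ by an integer.
-/

/-! ### Additive characters -/

lemma eC_eq_fourierChar (a : ℝ) : eC a = Real.fourierChar a := by
  rw [eC, Real.fourierChar_apply]
  push_cast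
  ring_nf

lemma eC_add (a b : ℝ) : eC (a + b) = eC a * eC b := by
  simp only [eC_eq_fourierChar, AddChar.map_add_eq_mul, Circle.coe_mul]

lemma norm_eC (a : ℝ) : ‖eC a‖ = 1 := by
  rw [eC_eq_fourierChar, Circle.norm_coe]

lemma eC_add_intCast (a : ℝ) (n : ℤ) : eC (a + n) = eC a := by
  have h_int : eC n = 1 := Complex.exp_eq_one_iff.2 ⟨n, by push_cast; ring⟩
  rw [eC_add, h_int, mul_one]

lemma eC_neg (t : ℝ) : eC (-t) = (starRingEnd ℂ) (eC t) := by
  simp only [eC_eq_fourierChar, AddChar.map_neg_eq_inv, Circle.coe_inv_eq_conj]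

lemma norm_eC_sub_le (a b : ℝ) : ‖eC a - eC b‖ ≤ 2 * Real.pi * |a - b| := by
  have h_factor :
      eC a - eC b = eC b * (Complex.exp (Complex.I * ↑(2 * Real.pi * (a - b))) - 1) := by
    rw [show Complex.exp (Complex.I * ↑(2 * Real.pi * (a - b))) = eC (a - b) by
      rw [eC]; push_cast; ring_nf, mul_sub, ← eC_add]
    ring_nf
  rw [h_factor, norm_mul, norm_eC, one_mul]
  refine Real.norm_exp_I_mul_ofReal_sub_one_le.trans_eq ?_
  rw [Real.norm_eq_abs, abs_mul, abs_of_pos Real.two_pi_pos]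

lemma stdAddChar_intCast_eq_eC (M : ℕ) [NeZero M] (j : ℤ) :
    ZMod.stdAddChar (j : ZMod M) = eC (j / M) := by
  rw [ZMod.stdAddChar_coe, eC]
  push_cast
  ring_nf

lemma norm_stdAddChar {M : ℕ} [NeZero M] (j : ZMod M) : ‖ZMod.stdAddChar j‖ = 1 := by
  rw [ZMod.stdAddChar_apply, Circle.norm_coe]

lemma stdAddChar_mul_intCast {M a n : ℕ} [NeZero M] [NeZero n] (h : M = a * n) (x : ℤ) :
    ZMod.stdAddChar ((a * x : ℤ) : ZMod M) = ZMod.stdAddChar (x : ZMod n) := by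
  have ha : (a : ℝ) ≠ 0 := by
    rintro ha
    exact NeZero.ne M (by rw [h, Nat.cast_eq_zero.1 ha, zero_mul])
  rw [stdAddChar_intCast_eq_eC, stdAddChar_intCast_eq_eC, h]
  push_cast
  rw [mul_div_mul_left _ _ ha]

/-! ### Minkowski's and Hölder's inequalities -/

lemma sum_pow_rpow_one_div_le {X ι : Type*} [Fintype X] {s : ℕ} (hs : 0 < s) (T : Finset ι)
    {u : ι → X → ℝ} (hu : ∀ i x, 0 ≤ u i x) :
    (∑ x, (∑ i ∈ T, u i x) ^ s) ^ ((1 : ℝ) / s) ≤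
      ∑ i ∈ T, (∑ x, u i x ^ s) ^ ((1 : ℝ) / s) := by
  induction T using Finset.induction_on with
  | empty =>
    have hs' : (s : ℝ) ≠ 0 := by positivity
    simp only [Finset.sum_empty, zero_pow hs.ne', Finset.sum_const_zero]
    rw [Real.zero_rpow (one_div_ne_zero hs')]
  | insert a T ha ih =>
    simp only [Finset.sum_insert ha]
    refine le_trans ?_ (add_le_add_right ih _)
    simpa only [Real.rpow_natCast] using
      Real.Lp_add_le_of_nonneg (Finset.univ : Finset X) (f := u a)
        (g := fun x => ∑ i ∈ T, u i x) (p := s) (by exact_mod_cast hs) (fun x _ => hu a x)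
        (fun x _ => Finset.sum_nonneg fun i _ => hu i x)

lemma sum_rpow_mul_rpow_one_sub_le {X : Type*} (T : Finset X) {f g : X → ℝ} (hf : ∀ x, 0 ≤ f x)
    (hg : ∀ x, 0 ≤ g x) {θ : ℝ} (hθ0 : 0 ≤ θ) (hθ1 : θ ≤ 1) :
    ∑ x ∈ T, f x ^ θ * g x ^ (1 - θ) ≤ (∑ x ∈ T, f x) ^ θ * (∑ x ∈ T, g x) ^ (1 - θ) := by
  rcases hθ0.eq_or_lt with rfl | hθ0
  · simp
  rcases hθ1.eq_or_lt with rfl | hθ1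
  · simp
  have hθ1' : 0 < 1 - θ := sub_pos.2 hθ1
  have h_conj : (1 / θ).HolderConjugate (1 / (1 - θ)) := by
    rw [Real.holderConjugate_iff, lt_div_iff₀ hθ0]
    simpa using hθ1
  have h_holder := Real.inner_le_Lp_mul_Lq_of_nonneg T h_conj
    (fun x _ => Real.rpow_nonneg (hf x) θ) (fun x _ => Real.rpow_nonneg (hg x) (1 - θ))
  simpa only [← Real.rpow_mul (hf _), ← Real.rpow_mul (hg _), mul_one_div_cancel hθ0.ne',
    mul_one_div_cancel hθ1'.ne', Real.rpow_one, one_div_one_div] using h_holder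

lemma pow_rpow_mul_pow_rpow_one_sub {θ a : ℝ} (hθ0 : 0 ≤ θ) (hθ1 : θ ≤ 1) (ha : 0 ≤ a)
    {n n₁ n₂ : ℕ} (hn : (n : ℝ) = θ * n₁ + (1 - θ) * n₂) :
    (a ^ n₁) ^ θ * (a ^ n₂) ^ (1 - θ) = a ^ n := by
  have : 0 ≤ 1 - θ := sub_nonneg.2 hθ1
  rw [← Real.rpow_natCast, ← Real.rpow_natCast, ← Real.rpow_natCast, ← Real.rpow_mul ha,
    ← Real.rpow_mul ha, ← Real.rpow_add_of_nonneg ha (by positivity) (by positivity), hn]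
  ring_nf

lemma sum_pow_mul_pow_le_rpow_mul_rpow {X : Type*} (T : Finset X) {f g : X → ℝ}
    (hf : ∀ x, 0 ≤ f x) (hg : ∀ x, 0 ≤ g x) {θ : ℝ} (hθ0 : 0 ≤ θ) (hθ1 : θ ≤ 1)
    {m n m₁ n₁ m₂ n₂ : ℕ} (hm : (m : ℝ) = θ * m₁ + (1 - θ) * m₂)
    (hn : (n : ℝ) = θ * n₁ + (1 - θ) * n₂) :
    ∑ x ∈ T, f x ^ m * g x ^ n ≤
      (∑ x ∈ T, f x ^ m₁ * g x ^ n₁) ^ θ * (∑ x ∈ T, f x ^ m₂ * g x ^ n₂) ^ (1 - θ) := by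
  have hpos : ∀ i j x, 0 ≤ f x ^ i * g x ^ j := fun i j x =>
    mul_nonneg (pow_nonneg (hf x) i) (pow_nonneg (hg x) j)
  refine le_trans (Finset.sum_le_sum fun x _ => le_of_eq ?_)
    (sum_rpow_mul_rpow_one_sub_le T (hpos m₁ n₁) (hpos m₂ n₂) hθ0 hθ1)
  rw [Real.mul_rpow (pow_nonneg (hf x) _) (pow_nonneg (hg x) _),
    Real.mul_rpow (pow_nonneg (hf x) _) (pow_nonneg (hg x) _), mul_mul_mul_comm,
    pow_rpow_mul_pow_rpow_one_sub hθ0 hθ1 (hf x) hm,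
    pow_rpow_mul_pow_rpow_one_sub hθ0 hθ1 (hg x) hn]

/-! ### Polynomial congruences -/

open Polynomial in
lemma exists_polynomial_eval_pow_mul (q b K : ℕ) {P : ℤ[X]} (hP : P.natDegree ≤ K) :
    ∃ Q : ℤ[X], Q.natDegree ≤ K ∧
      ∀ y : ℤ, Q.eval ((q : ℤ) ^ b * y) = (q : ℤ) ^ (K * b) * P.eval y := by
  refine ⟨∑ j ∈ Finset.range (K + 1), C (P.coeff j * (q : ℤ) ^ ((K - j) * b)) * X ^ j, ?_,
    fun y => ?_⟩
  · refine natDegree_sum_le_of_forall_le _ _ fun j hj => ?_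
    exact (natDegree_C_mul_X_pow_le _ _).trans (Finset.mem_range_succ_iff.1 hj)
  · rw [eval_finsetSum, eval_eq_sum_range' (Nat.lt_succ_of_le hP), Finset.mul_sum]
    refine Finset.sum_congr rfl fun j hj => ?_
    have h_exp : K * b = (K - j) * b + b * j := by
      rw [mul_comm b j, ← add_mul, Nat.sub_add_cancel (Finset.mem_range_succ_iff.1 hj)]
    simp only [eval_mul, eval_C, eval_pow, eval_X]
    rw [h_exp, pow_add, mul_pow, ← pow_mul]
    ring

open PowerSeries in
lemma exists_X_add_C_pow_mul_eq_one {R : Type*} [CommRing R] {u v : R} (huv : u * v = 1) (a : ℕ) :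
    ∃ W : PowerSeries R, (X + C u) ^ (a + 1) * W = 1 ∧
      ∀ n, coeff n W = v ^ (a + 1) * (-v) ^ n * ((a + n).choose a : ℕ) := by
  have h_geom := congrArg (rescale (-v)) (invOneSubPow R (a + 1)).inv_val
  rw [invOneSubPow_val_succ_eq_mk_add_choose, invOneSubPow_inv_eq_one_sub_pow, map_mul, map_pow,
    map_sub, map_one, rescale_X] at h_geom
  have h_scale : (X + C u) * C v = 1 - C (-v) * X := by
    rw [add_mul, ← map_mul, huv]
    simp only [map_neg, map_one]
    ring
  refine ⟨C (v ^ (a + 1)) * rescale (-v) (mk fun n => ((a + n).choose a : R)), ?_, fun n => ?_⟩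
  · rw [map_pow, ← mul_assoc, ← mul_pow, h_scale, h_geom]
  · rw [coeff_C_mul, coeff_rescale, coeff_mk, mul_assoc]

-- The constant `c` is chosen to kill the coefficient of `X ^ l` in `(T + c) / (X + u) ^ (a + 1)`.
open PowerSeries in
lemma exists_polynomial_X_pow_dvd {R : Type*} [CommRing R] {u : R} (hu : IsUnit u) {a l : ℕ}
    (hl : 0 < l) (h_choose : IsUnit (((a + l).choose a : ℕ) : R)) (T : Polynomial R) :
    ∃ Q : Polynomial R, Q.natDegree < l ∧ ∃ c : R,
      Polynomial.X ^ (l + 1) ∣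
        (Polynomial.X + Polynomial.C u) ^ (a + 1) * Q - T - Polynomial.C c := by
  obtain ⟨v, huv⟩ := hu.exists_right_inv
  obtain ⟨W, hW, hW_coeff⟩ := exists_X_add_C_pow_mul_eq_one huv a
  have hv : IsUnit v := IsUnit.of_mul_eq_one u (by rw [mul_comm, huv])
  obtain ⟨w, hw⟩ : ∃ w, coeff l W * w = 1 :=
    IsUnit.exists_right_inv (by rw [hW_coeff]; exact ((hv.pow _).mul (hv.neg.pow _)).mul h_choose)
  set T' : PowerSeries R := (T : PowerSeries R)
  set c : R := -(w * coeff l (W * T')) with hc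
  set Y : PowerSeries R := W * (T' + C c) with hY
  have hY_coeff : coeff l Y = 0 := by
    rw [hY, mul_add, map_add, mul_comm W (C c), coeff_C_mul, hc]
    linear_combination (-coeff l (W * T')) * hw
  have h_trunc : (X : PowerSeries R) ^ (l + 1) ∣ (trunc l Y : PowerSeries R) - Y := by
    refine X_pow_dvd_iff.2 fun j hj => ?_
    rw [map_sub, Polynomial.coeff_coe, coeff_trunc]
    split_ifs with hjl
    · exact sub_self _
    · rw [show j = l by omega, hY_coeff, sub_zero]
  have h_eq : (((Polynomial.X + Polynomial.C u) ^ (a + 1) * trunc l Y - T - Polynomial.C c :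
      Polynomial R) : PowerSeries R) = (X + C u) ^ (a + 1) * ((trunc l Y : PowerSeries R) - Y) := by
    push_cast
    linear_combination (T' + C c) * hW
  refine ⟨trunc l Y, ?_, c, Polynomial.X_pow_dvd_iff.2 fun d hd => ?_⟩
  · obtain ⟨l, rfl⟩ := Nat.exists_eq_succ_of_ne_zero hl.ne'
    exact natDegree_trunc_lt Y l
  · rw [← Polynomial.coeff_coe, h_eq]
    exact X_pow_dvd_iff.1 (h_trunc.mul_left _) d hd

lemma isUnit_intCast_zmod_prime_pow {p : ℕ} (hp : p.Prime) (n : ℕ) {z : ℤ} (hz : ¬ (p : ℤ) ∣ z) :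
    IsUnit (z : ZMod (p ^ n)) := by
  rw [ZMod.coe_int_isUnit_iff_isCoprime, Nat.cast_pow]
  exact ((Nat.prime_iff_prime_int.1 hp).coprime_iff_not_dvd.2 hz).pow_left

lemma not_dvd_choose_of_lt_prime {p n k : ℕ} (hp : p.Prime) (hn : n < p) (hk : k ≤ n) :
    ¬ p ∣ n.choose k := fun h =>
  hn.not_ge <| hp.dvd_factorial.1 <| Nat.choose_mul_factorial_mul_factorial hk ▸
    (h.mul_right _).mul_right _

open Polynomial in
lemma exists_polynomial_dvd_add_pow_mul_eval_sub {p k l : ℕ} (hp : p.Prime) (hkp : k < p)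
    (hl : 0 < l) (hlk : l ≤ k) (c : ℕ) {u : ℤ} (hu : ¬ (p : ℤ) ∣ u) (T : ℤ[X]) :
    ∃ Q : ℤ[X], Q.natDegree < l ∧ ∃ c₀ : ℤ, ∀ h : ℤ, (p : ℤ) ^ c ∣ h →
      (p : ℤ) ^ ((l + 1) * c) ∣ (h + u) ^ (k - l + 1) * Q.eval h - T.eval h - c₀ := by
  set q := p ^ ((l + 1) * c) with hq
  let φ := Int.castRingHom (ZMod q)
  have h_choose : IsUnit (((k - l + l).choose (k - l) : ℕ) : ZMod q) := by
    rw [Nat.sub_add_cancel hlk, ← Int.cast_natCast]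
    exact isUnit_intCast_zmod_prime_pow hp _
      (by exact_mod_cast not_dvd_choose_of_lt_prime hp hkp (Nat.sub_le k l))
  obtain ⟨Q', hQ'_deg, c', hQ'⟩ := exists_polynomial_X_pow_dvd
    (isUnit_intCast_zmod_prime_pow hp _ hu) hl h_choose (T.map φ)
  obtain ⟨Q, rfl, hQ_deg⟩ := exists_natDegree_eq_of_mem_lifts
    (mem_lifts_of_surjective (f := φ) ZMod.intCast_surjective Q')
  obtain ⟨c₀, rfl⟩ := ZMod.intCast_surjective c'
  refine ⟨Q, hQ_deg ▸ hQ'_deg, c₀, fun h hh => ?_⟩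
  have h_pow : (h : ZMod q) ^ (l + 1) = 0 := by
    rw [← Int.cast_pow, ZMod.intCast_zmod_eq_zero_iff_dvd, hq, Nat.cast_pow, mul_comm, pow_mul]
    exact pow_dvd_pow_of_dvd hh _
  have h_eval := eval_dvd (x := (h : ZMod q)) hQ'
  simp only [eval_pow, eval_X, h_pow, zero_dvd_iff, eval_sub, eval_mul, eval_add, eval_C,
    eval_intCast_map, φ, eq_intCast] at h_eval
  rw [← Nat.cast_pow, ← hq, ← ZMod.intCast_zmod_eq_zero_iff_dvd]
  push_cast
  exact h_eval

/-! ### Decoupling constants -/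

/-- Half of the critical exponent `k(k+1)` for the decoupling of the moment curve
`(t, t², …, t^k)`. -/
def critExp (k : ℕ) : ℕ := k * (k + 1) / 2

/-- The square `‖f‖²_{2s}` of the `ℓ^{2s}` norm of a function on a finite set. -/
def lpNormSq {X : Type*} [Fintype X] (s : ℕ) (f : X → ℂ) : ℝ :=
  (∑ x, ‖f x‖ ^ (2 * s)) ^ ((1 : ℝ) / s)

/-- The indices in `S` whose frequency `t i` lies in the residue class `J` modulo `M`. -/
def residueClass {ι : Type*} (M : ℕ) (t : ι → ℤ) (S : Finset ι) (J : ZMod M) : Finset ι :=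
  S.filter fun i => (t i : ZMod M) = J

/-- The square-function side of an `ℓ²` decoupling inequality: the sum of `‖F_J‖²_{2s}` over the
pieces `F_J` of `∑ i ∈ S, F i` supported on the residue classes modulo `M`. -/
def classNormSum {X ι : Type*} [Fintype X] (M : ℕ) [NeZero M] (s : ℕ) (t : ι → ℤ)
    (F : ι → X → ℂ) (S : Finset ι) : ℝ :=
  ∑ J : ZMod M, lpNormSq s (∑ i ∈ residueClass M t S J, F i)

/-- An abstract form of the condition that `F i` has frequency `(t i, …, (t i)^k)` modulo `M`: every
integer polynomial `P` of degree at most `k` comes with a permutation of the domain which, up to a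
common unimodular factor, multiplies each `F i` by the phase `P (t i) / M`. -/
def IsModulated {X ι : Type*} (M : ℕ) [NeZero M] (k : ℕ) (t : ι → ℤ) (F : ι → X → ℂ)
    (S : Finset ι) : Prop :=
  ∀ P : Polynomial ℤ, P.natDegree ≤ k → ∃ τ : Equiv.Perm X, ∃ u : X → ℂ, (∀ x, ‖u x‖ = 1) ∧
    ∀ i ∈ S, ∀ x, F i (τ x) = u x * ZMod.stdAddChar ((P.eval (t i) : ℤ) : ZMod M) * F i x

/-- `D` is an admissible constant in the `p`-adic `ℓ²` decoupling inequality at the critical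
exponent `k(k+1)` for the moment curve of degree `k`, down to scale `p^{-m}`. -/
def DecouplingBound (p : ℕ) [NeZero p] (k m : ℕ) (D : ℝ) : Prop :=
  ∀ (X ι : Type) [Fintype X] (S : Finset ι) (t : ι → ℤ) (F : ι → X → ℂ),
    IsModulated (p ^ (k * m)) k t F S →
      lpNormSq (critExp k) (∑ i ∈ S, F i) ≤ D * classNormSum (p ^ m) (critExp k) t F S

lemma two_mul_critExp (k : ℕ) : 2 * critExp k = k * (k + 1) :=
  Nat.mul_div_cancel' (Nat.even_mul_succ_self k).two_dvd

lemma cast_critExp (k : ℕ) : (critExp k : ℝ) = k * (k + 1) / 2 := by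
  rw [eq_div_iff two_ne_zero, mul_comm]
  exact_mod_cast two_mul_critExp k

lemma critExp_pos {k : ℕ} (hk : 0 < k) : 0 < critExp k := by
  have := two_mul_critExp k
  nlinarith

lemma critExp_mono {l k : ℕ} (h : l ≤ k) : critExp l ≤ critExp k :=
  Nat.div_le_div_right (Nat.mul_le_mul h (Nat.succ_le_succ h))

section LpNormSq

variable {X ι : Type*} [Fintype X] {s : ℕ}

lemma lpNormSq_nonneg (s : ℕ) (f : X → ℂ) : 0 ≤ lpNormSq s f := by
  unfold lpNormSq
  positivity

lemma lpNormSq_pow (hs : 0 < s) (f : X → ℂ) : lpNormSq s f ^ s = ∑ x, ‖f x‖ ^ (2 * s) := by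
  rw [lpNormSq, one_div, Real.rpow_inv_natCast_pow (by positivity) hs.ne']

lemma lpNormSq_one (f : X → ℂ) : lpNormSq 1 f = ∑ x, ‖f x‖ ^ 2 := by
  simpa only [pow_one, mul_one] using lpNormSq_pow one_pos f

lemma lpNormSq_zero (hs : 0 < s) : lpNormSq s (0 : X → ℂ) = 0 := by
  rw [← pow_eq_zero_iff hs.ne', lpNormSq_pow hs]
  simp [hs.ne']

lemma sum_mul_norm_sq_pow_rpow (hs : 0 < s) {c : ℝ} (hc : 0 ≤ c) (f : X → ℂ) :
    (∑ x, (c * ‖f x‖ ^ 2) ^ s) ^ ((1 : ℝ) / s) = c * lpNormSq s f := by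
  simp only [mul_pow, ← pow_mul, ← Finset.mul_sum]
  rw [Real.mul_rpow (by positivity) (by positivity), one_div, Real.pow_rpow_inv_natCast hc hs.ne',
    lpNormSq, one_div]

lemma lpNormSq_le_sum (hs : 0 < s) (T : Finset ι) {f : X → ℂ} {u : ι → X → ℝ}
    (hu : ∀ i x, 0 ≤ u i x) (h : ∀ x, ‖f x‖ ^ 2 ≤ ∑ i ∈ T, u i x) :
    lpNormSq s f ≤ ∑ i ∈ T, (∑ x, u i x ^ s) ^ ((1 : ℝ) / s) := by
  refine le_trans ?_ (sum_pow_rpow_one_div_le hs T hu)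
  refine Real.rpow_le_rpow (by positivity) (Finset.sum_le_sum fun x _ => ?_) (by positivity)
  rw [pow_mul]
  exact pow_le_pow_left₀ (by positivity) (h x) s

end LpNormSq

section ResidueClass

variable {X ι : Type*} {M : ℕ} {t : ι → ℤ} {S : Finset ι} {J : ZMod M}

lemma residueClass_subset : residueClass M t S J ⊆ S := Finset.filter_subset _ _

lemma dvd_sub_of_mem_residueClass {i j : ι} (hi : i ∈ residueClass M t S J)
    (hj : j ∈ residueClass M t S J) : (M : ℤ) ∣ t i - t j :=
  (ZMod.intCast_eq_intCast_iff_dvd_sub _ _ _).1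
    ((Finset.mem_filter.1 hj).2.trans (Finset.mem_filter.1 hi).2.symm)

lemma sum_sum_residueClass [NeZero M] (t : ι → ℤ) (F : ι → X → ℂ) (S : Finset ι) :
    ∑ J : ZMod M, ∑ i ∈ residueClass M t S J, F i = ∑ i ∈ S, F i :=
  Finset.sum_fiberwise S (fun i => (t i : ZMod M)) F

lemma residueClass_residueClass {M' : ℕ} (h : M ∣ M') (K : ZMod M') :
    residueClass M' t (residueClass M t S J) K =
      if ZMod.castHom h (ZMod M) K = J then residueClass M' t S K else ∅ := by
  have h_cast : ∀ i, (t i : ZMod M') = K → (t i : ZMod M) = ZMod.castHom h (ZMod M) K := by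
    rintro i rfl
    rw [map_intCast]
  split_ifs with hK
  · ext i
    simp only [residueClass, Finset.mem_filter, and_assoc]
    exact and_congr_right fun _ => and_iff_right_of_imp fun hi => (h_cast i hi).trans hK
  · simp only [residueClass, Finset.filter_filter, Finset.filter_eq_empty_iff]
    rintro i _ ⟨hJ, hiK⟩
    exact hK ((h_cast i hiK).symm.trans hJ)

lemma sum_filter_sum_residueClass {M' : ℕ} [NeZero M'] (h : M ∣ M') (F : ι → X → ℂ) (J : ZMod M) :
    ∑ K with ZMod.castHom h (ZMod M) K = J, ∑ i ∈ residueClass M' t S K, F i =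
      ∑ i ∈ residueClass M t S J, F i := by
  rw [Finset.sum_filter, ← sum_sum_residueClass (M := M') t F]
  refine Finset.sum_congr rfl fun K _ => ?_
  rw [residueClass_residueClass h]
  split_ifs <;> simp

end ResidueClass

section ClassNormSum

variable {X ι : Type*} [Fintype X] {M : ℕ} [NeZero M] {s : ℕ} {t : ι → ℤ} {F : ι → X → ℂ}
  {S : Finset ι}

lemma classNormSum_nonneg : 0 ≤ classNormSum M s t F S :=
  Finset.sum_nonneg fun _ _ => lpNormSq_nonneg s _

lemma lpNormSq_sum_le_mul_classNormSum (hs : 0 < s) :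
    lpNormSq s (∑ i ∈ S, F i) ≤ M * classNormSum M s t F S := by
  have h_cauchy : ∀ x, ‖(∑ i ∈ S, F i) x‖ ^ 2 ≤
      ∑ J : ZMod M, M * ‖(∑ i ∈ residueClass M t S J, F i) x‖ ^ 2 := fun x => by
    rw [← sum_sum_residueClass (M := M) t F S, Finset.sum_apply, ← Finset.mul_sum]
    refine (pow_le_pow_left₀ (norm_nonneg _) (norm_sum_le _ _) 2).trans ?_
    refine sq_sum_le_card_mul_sum_sq.trans_eq ?_
    rw [Finset.card_univ, ZMod.card]
  refine (lpNormSq_le_sum hs _ (fun _ _ => by positivity) h_cauchy).trans_eq ?_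
  rw [classNormSum, Finset.mul_sum]
  exact Finset.sum_congr rfl fun J _ => sum_mul_norm_sq_pow_rpow hs (Nat.cast_nonneg M) _

lemma sum_classNormSum_residueClass (hs : 0 < s) {M' : ℕ} [NeZero M'] (h : M ∣ M') :
    ∑ J : ZMod M, classNormSum M' s t F (residueClass M t S J) = classNormSum M' s t F S := by
  unfold classNormSum
  rw [Finset.sum_comm]
  refine Finset.sum_congr rfl fun K _ => ?_
  rw [Finset.sum_eq_single (ZMod.castHom h (ZMod M) K), residueClass_residueClass h, if_pos rfl]
  · intro J _ hJ
    rw [residueClass_residueClass h, if_neg hJ.symm, Finset.sum_empty, lpNormSq_zero hs]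
  · simp

lemma classNormSum_residueClass_le (hs : 0 < s) {M' : ℕ} [NeZero M'] (h : M ∣ M')
    (J : ZMod M) : classNormSum M' s t F (residueClass M t S J) ≤ classNormSum M' s t F S := by
  rw [← sum_classNormSum_residueClass (S := S) hs h]
  exact Finset.single_le_sum (f := fun J => classNormSum M' s t F (residueClass M t S J))
    (fun _ _ => classNormSum_nonneg) (Finset.mem_univ J)

lemma classNormSum_le_of_affine {a M' : ℕ} [NeZero M'] (hM' : M' = a * M) {t' : ι → ℤ} {n₀ : ℤ}
    (h : ∀ i ∈ S, t' i = n₀ + a * t i) : classNormSum M s t F S ≤ classNormSum M' s t' F S := by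
  have ha : (a : ℤ) ≠ 0 := by
    rintro ha
    exact NeZero.ne M' (by rw [hM', Nat.cast_eq_zero.1 ha, zero_mul])
  have h_iff : ∀ y z : ℤ, ((n₀ + a * y : ℤ) : ZMod M') = ((n₀ + a * z : ℤ) : ZMod M') ↔
      (y : ZMod M) = (z : ZMod M) := fun y z => by
    rw [ZMod.intCast_eq_intCast_iff_dvd_sub, ZMod.intCast_eq_intCast_iff_dvd_sub,
      add_sub_add_left_eq_sub, ← mul_sub, hM', Nat.cast_mul, mul_dvd_mul_iff_left ha]
  let e : ZMod M ↪ ZMod M' :=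
    ⟨fun J => ((n₀ + a * (J.val : ℤ) : ℤ) : ZMod M'), fun J K hJK => by
      simpa using (h_iff _ _).1 hJK⟩
  have h_class : ∀ J, residueClass M t S J = residueClass M' t' S (e J) := fun J => by
    refine Finset.filter_congr fun i hi => ?_
    rw [h i hi]
    exact (by simp : (t i : ZMod M) = J ↔ (t i : ZMod M) = ((J.val : ℤ) : ZMod M)).trans
      (h_iff _ _).symm
  simp only [classNormSum, h_class]
  rw [← Finset.sum_map Finset.univ e fun K => lpNormSq s (∑ i ∈ residueClass M' t' S K, F i)]
  exact Finset.sum_le_sum_of_subset_of_nonneg (Finset.subset_univ _) fun _ _ _ =>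
    lpNormSq_nonneg s _

end ClassNormSum

section Modulation

variable {X ι : Type*} {M k : ℕ} [NeZero M] {t : ι → ℤ} {F : ι → X → ℂ} {S S' : Finset ι}

lemma IsModulated.mono (h : IsModulated M k t F S) (hS : S' ⊆ S) : IsModulated M k t F S' :=
  fun P hP =>
    let ⟨τ, u, hu, hτ⟩ := h P hP
    ⟨τ, u, hu, fun i hi => hτ i (hS hi)⟩

lemma IsModulated.of_affine {p b M' : ℕ} [NeZero M'] (h : IsModulated M k t F S)
    (hM : M = p ^ (k * b) * M') {t' : ι → ℤ} {n₀ : ℤ}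
    (ht : ∀ i ∈ S, t i = n₀ + (p : ℤ) ^ b * t' i) : IsModulated M' k t' F S := by
  intro P hP
  obtain ⟨Q, hQ_deg, hQ⟩ := exists_polynomial_eval_pow_mul p b k hP
  obtain ⟨τ, u, hu, hτ⟩ := h (Q.comp (Polynomial.X - Polynomial.C n₀)) (by
    rwa [Polynomial.natDegree_comp, Polynomial.natDegree_X_sub_C, mul_one])
  refine ⟨τ, u, hu, fun i hi x => ?_⟩
  rw [hτ i hi x, Polynomial.eval_comp, Polynomial.eval_sub, Polynomial.eval_X, Polynomial.eval_C,
    ht i hi, add_sub_cancel_left, hQ, ← Nat.cast_pow, stdAddChar_mul_intCast hM]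

lemma IsModulated.sum_mul_conj_residueClass_eq_zero [Fintype X] (h : IsModulated M 1 t F S)
    {J K : ZMod M} (hJK : J ≠ K) :
    ∑ x, (∑ i ∈ residueClass M t S J, F i) x *
      (starRingEnd ℂ) ((∑ i ∈ residueClass M t S K, F i) x) = 0 := by
  set f : ZMod M → X → ℂ := fun J => ∑ i ∈ residueClass M t S J, F i
  set ψ : AddChar (ZMod M) ℂ := ZMod.stdAddChar
  obtain ⟨τ, u, hu, hτ⟩ := h Polynomial.X Polynomial.natDegree_X_le
  have hf : ∀ J x, f J (τ x) = u x * ψ J * f J x := fun J x => by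
    simp only [f, Finset.sum_apply, Finset.mul_sum]
    refine Finset.sum_congr rfl fun i hi => ?_
    obtain ⟨hiS, rfl⟩ := Finset.mem_filter.1 hi
    rw [hτ i hiS, Polynomial.eval_X]
  have h_unit : ∀ {z : ℂ}, ‖z‖ = 1 → z * (starRingEnd ℂ) z = 1 := fun hz => by
    rw [Complex.mul_conj', hz, Complex.ofReal_one, one_pow]
  have h_invariant : ∑ x, f J x * (starRingEnd ℂ) (f K x) =
      ψ J * (starRingEnd ℂ) (ψ K) * ∑ x, f J x * (starRingEnd ℂ) (f K x) := by
    conv_lhs => rw [← Equiv.sum_comp τ]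
    rw [Finset.mul_sum]
    refine Finset.sum_congr rfl fun x _ => ?_
    rw [hf, hf, map_mul, map_mul]
    linear_combination (ψ J * f J x * (starRingEnd ℂ) (ψ K) * (starRingEnd ℂ) (f K x)) *
      h_unit (hu x)
  by_contra h_ne
  refine hJK (ZMod.injective_stdAddChar ?_)
  have h_one : ψ J * (starRingEnd ℂ) (ψ K) = 1 := mul_right_cancel₀ h_ne (by
    rw [one_mul, ← h_invariant])
  linear_combination ψ K * h_one - ψ J * h_unit (norm_stdAddChar K)

end Modulation

section DecouplingBound

variable {X ι : Type} [Fintype X] {t : ι → ℤ} {F : ι → X → ℂ} {S : Finset ι}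
  {p : ℕ} [NeZero p] {k m : ℕ}

lemma DecouplingBound.mono {D D' : ℝ} (h : DecouplingBound p k m D) (hD : D ≤ D') :
    DecouplingBound p k m D' := fun X ι _ S t F hF =>
  (h X ι S t F hF).trans (mul_le_mul_of_nonneg_right hD classNormSum_nonneg)

lemma decouplingBound_pow (hk : 0 < k) : DecouplingBound p k m (p ^ m) :=
  fun _ _ _ _ _ _ _ => by
    simpa only [Nat.cast_pow] using
      lpNormSq_sum_le_mul_classNormSum (M := p ^ m) (critExp_pos hk)

lemma DecouplingBound.lpNormSq_le_of_dvd_sub {b : ℕ} {D : ℝ} (hD : DecouplingBound p k (m - b) D)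
    (hk : 0 < k) (hD0 : 0 ≤ D) (hb : b ≤ m) (hF : IsModulated (p ^ (k * m)) k t F S)
    (hS : ∀ i ∈ S, ∀ j ∈ S, (p : ℤ) ^ b ∣ t i - t j) :
    lpNormSq (critExp k) (∑ i ∈ S, F i) ≤ D * classNormSum (p ^ m) (critExp k) t F S := by
  rcases S.eq_empty_or_nonempty with rfl | ⟨j, hj⟩
  · rw [Finset.sum_empty, lpNormSq_zero (critExp_pos hk)]
    exact mul_nonneg hD0 classNormSum_nonneg
  choose! t' ht' using fun i hi => hS i hi j hj
  have ht : ∀ i ∈ S, t i = t j + (p : ℤ) ^ b * t' i := fun i hi => by rw [← ht' i hi]; ring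
  have h_mul : k * m = k * b + k * (m - b) := by rw [← mul_add, Nat.add_sub_cancel' hb]
  refine (hD X ι S t' F (hF.of_affine (by rw [h_mul, pow_add]) ht)).trans
    (mul_le_mul_of_nonneg_left (classNormSum_le_of_affine (a := p ^ b) (n₀ := t j) ?_ ?_) hD0)
  · rw [← pow_add, Nat.add_sub_cancel' hb]
  · exact_mod_cast ht

lemma decouplingBound_one : DecouplingBound p 1 m 1 := by
  intro X ι _ S t F hF
  replace hF : IsModulated (p ^ m) 1 t F S := by simpa only [one_mul] using hF
  have h_norm : ∀ g : X → ℂ, ∑ x, ((‖g x‖ ^ 2 : ℝ) : ℂ) = ∑ x, g x * (starRingEnd ℂ) (g x) :=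
    fun g => by simp only [Complex.mul_conj', Complex.ofReal_pow]
  rw [one_mul, classNormSum]
  simp only [show critExp 1 = 1 from rfl, lpNormSq_one]
  refine le_of_eq (Complex.ofReal_injective ?_)
  simp only [Complex.ofReal_sum, h_norm]
  rw [← sum_sum_residueClass (M := p ^ m) t F S]
  simp only [Finset.sum_apply _ Finset.univ, map_sum (starRingEnd ℂ) _ Finset.univ,
    Finset.sum_mul_sum]
  rw [Finset.sum_comm]
  refine Finset.sum_congr rfl fun J _ => ?_
  rw [Finset.sum_comm, Finset.sum_eq_single J]
  · exact fun K _ hK => hF.sum_mul_conj_residueClass_eq_zero hK.symm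
  · simp

end DecouplingBound

/-! ### Decoupling in the lower degrees -/

/-- The family `F i · |∑ j ∈ S', F j|^ρ`. -/
def normWeighted {X ι : Type*} (ρ : ℝ) (F : ι → X → ℂ) (S' : Finset ι) : ι → X → ℂ :=
  fun i x => F i x * ((‖(∑ j ∈ S', F j) x‖ ^ ρ : ℝ) : ℂ)

/-- `E` is an admissible constant in the degree `l` decoupling inequality, down to scale `p^{-a}`,
for a family which is modulated along the degree `k` moment curve and weighted by a second
subfamily, whose frequencies are confined to an interval of length `p^{-b}` at distance `1` from
those of the first. -/
def WeightedDecouplingBound (p : ℕ) [NeZero p] (k l a b m : ℕ) (E : ℝ) : Prop :=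
  ∀ (X ι : Type) [Fintype X] (t : ι → ℤ) (F : ι → X → ℂ) (S S' : Finset ι) (n₀ : ℤ) (ρ : ℝ),
    IsModulated (p ^ (k * m)) k t F (S ∪ S') → (∀ i ∈ S, ¬ (p : ℤ) ∣ t i - n₀) →
    (∀ i ∈ S', (p : ℤ) ^ b ∣ t i - n₀) →
      lpNormSq (critExp l) (∑ i ∈ S, normWeighted ρ F S' i) ≤
        E * classNormSum (p ^ a) (critExp l) t (normWeighted ρ F S') S

lemma norm_sum_normWeighted {X ι : Type*} (ρ : ℝ) (F : ι → X → ℂ) (S S' : Finset ι) (x : X) :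
    ‖(∑ i ∈ S, normWeighted ρ F S' i) x‖ =
      ‖(∑ i ∈ S, F i) x‖ * ‖(∑ i ∈ S', F i) x‖ ^ ρ := by
  simp only [normWeighted, Finset.sum_apply]
  rw [← Finset.sum_mul, norm_mul, Complex.norm_real, Real.norm_of_nonneg (by positivity)]

lemma exists_polynomial_dvd_eval_and_dvd_eval_affine_sub {p k l b c M e : ℕ} (hp : p.Prime)
    (hkp : k < p) (hl : 0 < l) (hlk : l ≤ k) (hc : M ≤ (l + 1) * c) (hb : M ≤ (k - l + 1) * b)
    {n₀ n₁ : ℤ} (hn : ¬ (p : ℤ) ∣ n₁ - n₀) {β : Polynomial ℤ} (hβ : β.natDegree ≤ l) :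
    ∃ P : Polynomial ℤ, P.natDegree ≤ k ∧
      (∀ z, (p : ℤ) ^ b ∣ z - n₀ → (p : ℤ) ^ (e + M) ∣ P.eval z) ∧
      ∃ c₀ : ℤ, ∀ y, (p : ℤ) ^ (e + M) ∣
        P.eval (n₁ + (p : ℤ) ^ c * y) - (p : ℤ) ^ e * ((p : ℤ) ^ (l * c) * β.eval y + c₀) := by
  obtain ⟨T, -, hT⟩ := exists_polynomial_eval_pow_mul p c l hβ
  obtain ⟨Q, hQ_deg, c₀, hQ⟩ :=
    exists_polynomial_dvd_add_pow_mul_eval_sub hp hkp hl hlk c hn T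
  let P : Polynomial ℤ := Polynomial.C ((p : ℤ) ^ e) *
    ((Polynomial.X - Polynomial.C n₀) ^ (k - l + 1) * Q.comp (Polynomial.X - Polynomial.C n₁))
  have h_eval : ∀ z, P.eval z = (p : ℤ) ^ e * ((z - n₀) ^ (k - l + 1) * Q.eval (z - n₁)) := by
    simp [P]
  refine ⟨P, ?_, fun z hz => ?_, c₀, fun y => ?_⟩
  · have h_fst : ((Polynomial.X - Polynomial.C n₀ : Polynomial ℤ) ^ (k - l + 1)).natDegree ≤
        k - l + 1 :=
      Polynomial.natDegree_pow_le.trans_eq (by rw [Polynomial.natDegree_X_sub_C, mul_one])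
    have h_snd : (Q.comp (Polynomial.X - Polynomial.C n₁)).natDegree = Q.natDegree := by
      rw [Polynomial.natDegree_comp, Polynomial.natDegree_X_sub_C, mul_one]
    refine ((Polynomial.natDegree_C_mul_le _ _).trans Polynomial.natDegree_mul_le).trans ?_
    omega
  · rw [h_eval, pow_add]
    refine mul_dvd_mul_left _ (Dvd.dvd.mul_right ?_ _)
    refine (pow_dvd_pow _ hb).trans ?_
    rw [mul_comm, pow_mul]
    exact pow_dvd_pow_of_dvd hz _
  · rw [h_eval, pow_add, ← mul_sub]
    refine mul_dvd_mul_left _ ((pow_dvd_pow _ hc).trans ?_)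
    refine (hQ ((p : ℤ) ^ c * y) ⟨y, rfl⟩).trans (dvd_of_eq ?_)
    rw [hT, add_sub_cancel_left]
    ring

section WeightedDecoupling

variable {X ι : Type} {p k l b c g m : ℕ} [hp : Fact p.Prime] {t t' : ι → ℤ}
  {F : ι → X → ℂ} {S S' : Finset ι} {n₀ n₁ : ℤ}

lemma isModulated_normWeighted (hF : IsModulated (p ^ (k * m)) k t F (S ∪ S')) (hkp : k < p)
    (hl : 0 < l) (hlk : l ≤ k) (hg : l * g ≤ c) (hb : l * (c + g) ≤ (k - l + 1) * b)
    (hbm : b ≤ m) (hn : ¬ (p : ℤ) ∣ n₁ - n₀) (hS : ∀ i ∈ S, t i = n₁ + (p : ℤ) ^ c * t' i)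
    (hS' : ∀ i ∈ S', (p : ℤ) ^ b ∣ t i - n₀) (ρ : ℝ) :
    IsModulated (p ^ (l * g)) l t' (normWeighted ρ F S') S := by
  intro β hβ
  obtain ⟨e, he⟩ : ∃ e, k * m = e + l * (c + g) :=
    Nat.exists_eq_add_of_le' (hb.trans (Nat.mul_le_mul (by omega) hbm))
  obtain ⟨P, hP_deg, hP_zero, c₀, hP⟩ := exists_polynomial_dvd_eval_and_dvd_eval_affine_sub
    (e := e) hp.out hkp hl hlk (by linarith : l * (c + g) ≤ (l + 1) * c) hb hn hβ
  obtain ⟨τ, u, hu, hτ⟩ := hF P hP_deg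
  have h_zmod : ∀ z w : ℤ, (p : ℤ) ^ (e + l * (c + g)) ∣ z - w →
      (z : ZMod (p ^ (k * m))) = w := fun z w h => by
    rw [eq_comm, ZMod.intCast_eq_intCast_iff_dvd_sub, he]
    exact_mod_cast h
  have h_weight : ∀ x, ‖(∑ j ∈ S', F j) (τ x)‖ = ‖(∑ j ∈ S', F j) x‖ := fun x => by
    rw [← one_mul ‖(∑ j ∈ S', F j) x‖, ← hu x, ← norm_mul]
    simp only [Finset.sum_apply, Finset.mul_sum]
    refine congrArg _ (Finset.sum_congr rfl fun i hi => ?_)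
    rw [hτ i (Finset.mem_union_right _ hi), h_zmod _ 0 (by simpa using hP_zero _ (hS' i hi)),
      Int.cast_zero, AddChar.map_zero_eq_one, mul_one]
  have h_phase : ∀ i ∈ S, ZMod.stdAddChar ((P.eval (t i) : ℤ) : ZMod (p ^ (k * m))) =
      ZMod.stdAddChar ((c₀ : ℤ) : ZMod (p ^ (l * (c + g)))) *
        ZMod.stdAddChar ((β.eval (t' i) : ℤ) : ZMod (p ^ (l * g))) := fun i hi => by
    rw [hS i hi, h_zmod _ _ (hP (t' i)), ← Nat.cast_pow p e,
      stdAddChar_mul_intCast (by rw [he, pow_add]), Int.cast_add, AddChar.map_add_eq_mul,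
      ← Nat.cast_pow, stdAddChar_mul_intCast (by rw [mul_add, pow_add]), mul_comm]
  refine ⟨τ, fun x => u x * ZMod.stdAddChar ((c₀ : ℤ) : ZMod (p ^ (l * (c + g)))), fun x => ?_,
    fun i hi x => ?_⟩
  · rw [norm_mul, hu, norm_stdAddChar, one_mul]
  · simp only [normWeighted]
    rw [h_weight, hτ i (Finset.mem_union_left _ hi), h_phase i hi]
    ring

lemma DecouplingBound.lpNormSq_normWeighted_le [Fintype X] {D : ℝ} (hD : DecouplingBound p l g D)
    (hD0 : 0 ≤ D) (hkp : k < p) (hl : 0 < l) (hlk : l ≤ k) (hg : l * g ≤ c)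
    (hb : l * (c + g) ≤ (k - l + 1) * b) (hbm : b ≤ m)
    (hF : IsModulated (p ^ (k * m)) k t F (S ∪ S'))
    (hS : ∀ i ∈ S, ∀ j ∈ S, (p : ℤ) ^ c ∣ t i - t j) (hSn : ∀ i ∈ S, ¬ (p : ℤ) ∣ t i - n₀)
    (hS' : ∀ i ∈ S', (p : ℤ) ^ b ∣ t i - n₀) (ρ : ℝ) :
    lpNormSq (critExp l) (∑ i ∈ S, normWeighted ρ F S' i) ≤
      D * classNormSum (p ^ (c + g)) (critExp l) t (normWeighted ρ F S') S := by
  rcases S.eq_empty_or_nonempty with rfl | ⟨j, hj⟩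
  · rw [Finset.sum_empty, lpNormSq_zero (critExp_pos hl)]
    exact mul_nonneg hD0 classNormSum_nonneg
  choose! t' ht' using fun i hi => hS i hi j hj
  have ht : ∀ i ∈ S, t i = t j + (p : ℤ) ^ c * t' i := fun i hi => by rw [← ht' i hi]; ring
  refine (hD X ι S t' _
    (isModulated_normWeighted hF hkp hl hlk hg hb hbm (hSn j hj) ht hS' ρ)).trans
    (mul_le_mul_of_nonneg_left ?_ hD0)
  exact classNormSum_le_of_affine (a := p ^ c) (n₀ := t j) (pow_add p c g) (by exact_mod_cast ht)

end WeightedDecoupling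

/-- The decoupling inequality of degree `k` holds with constants `≪_ε p^{(η+ε)m}`. -/
def DecouplingExponent (p : ℕ) [NeZero p] (k : ℕ) (η : ℝ) : Prop :=
  ∀ ε : ℝ, 0 < ε → ∃ C : ℝ, 1 ≤ C ∧ ∀ m : ℕ, DecouplingBound p k m (C * (p : ℝ) ^ ((η + ε) * m))

section Prime

variable {p k l : ℕ} [hp : Fact p.Prime]

lemma WeightedDecouplingBound.trans {a b g m : ℕ} {E D : ℝ}
    (hE : WeightedDecouplingBound p k l a b m E) (hD : DecouplingBound p l g D) (hE0 : 0 ≤ E)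
    (hD0 : 0 ≤ D) (hkp : k < p) (hl : 0 < l) (hlk : l ≤ k) (hg : l * g ≤ a)
    (hb : l * (a + g) ≤ (k - l + 1) * b) (hbm : b ≤ m) :
    WeightedDecouplingBound p k l (a + g) b m (E * D) := by
  intro X ι _ t F S S' n₀ ρ hF hSn hS'
  refine (hE X ι t F S S' n₀ ρ hF hSn hS').trans ?_
  rw [mul_assoc, ← sum_classNormSum_residueClass (M := p ^ a) (critExp_pos hl)
    (pow_dvd_pow p (Nat.le_add_right a g)), Finset.mul_sum]
  refine mul_le_mul_of_nonneg_left (Finset.sum_le_sum fun J _ => ?_) hE0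
  refine hD.lpNormSq_normWeighted_le hD0 hkp hl hlk hg hb hbm
    (hF.mono (Finset.union_subset_union_left residueClass_subset)) (fun i hi j hj => ?_)
    (fun i hi => hSn i (residueClass_subset hi)) hS' ρ
  exact_mod_cast dvd_sub_of_mem_residueClass hi hj

lemma weightedDecouplingBound_pow (hl : 0 < l) (a b m : ℕ) :
    WeightedDecouplingBound p k l a b m (p ^ a) :=
  fun _ _ _ _ _ _ _ _ _ _ _ _ => by
    simpa only [Nat.cast_pow] using
      lpNormSq_sum_le_mul_classNormSum (M := p ^ a) (critExp_pos hl)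

lemma WeightedDecouplingBound.mono {a b m : ℕ} {E E' : ℝ}
    (h : WeightedDecouplingBound p k l a b m E) (hE : E ≤ E') :
    WeightedDecouplingBound p k l a b m E' := fun X ι _ t F S S' n₀ ρ hF hSn hS' =>
  (h X ι t F S S' n₀ ρ hF hSn hS').trans (mul_le_mul_of_nonneg_right hE classNormSum_nonneg)

lemma DecouplingExponent.exists_decouplingBound_rpow {η ε : ℝ} (h : DecouplingExponent p k η)
    (hε : 0 < ε) : ∃ g₀ : ℕ, ∀ g ≥ g₀, DecouplingBound p k g ((p : ℝ) ^ ((η + ε) * g)) := by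
  have hp1 : (1 : ℝ) < p := by exact_mod_cast hp.out.one_lt
  have hp0 : (0 : ℝ) < p := by positivity
  obtain ⟨C, -, hC⟩ := h (ε / 2) (half_pos hε)
  obtain ⟨g₀, hg₀⟩ := pow_unbounded_of_one_lt C (Real.one_lt_rpow hp1 (half_pos hε))
  refine ⟨g₀, fun g hg => (hC g).mono ?_⟩
  calc C * (p : ℝ) ^ ((η + ε / 2) * g)
      ≤ (p : ℝ) ^ (ε / 2 * g) * (p : ℝ) ^ ((η + ε / 2) * g) := by
        gcongr
        rw [Real.rpow_mul_natCast hp0.le]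
        exact hg₀.le.trans (pow_le_pow_right₀ (Real.one_le_rpow hp1.le (half_pos hε).le) hg)
    _ = (p : ℝ) ^ ((η + ε) * g) := by
        rw [← Real.rpow_add hp0]
        ring_nf

lemma DecouplingExponent.exists_weightedDecouplingBound (h : DecouplingExponent p l 0)
    (hkp : k < p) (hl : 0 < l) (hlk : l ≤ k) {ε : ℝ} (hε : 0 < ε) :
    ∃ C : ℝ, 1 ≤ C ∧ ∀ a b m : ℕ, b ≤ m → l * a ≤ (k - l + 1) * b →
      WeightedDecouplingBound p k l a b m (C * (p : ℝ) ^ (ε * a)) := by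
  have hp1 : (1 : ℝ) < p := by exact_mod_cast hp.out.one_lt
  have hp0 : (0 : ℝ) < p := by positivity
  obtain ⟨g₀, hg₀⟩ := h.exists_decouplingBound_rpow hε
  simp only [zero_add] at hg₀
  set a₀ := (l + 1) * (g₀ + 1) with ha₀
  refine ⟨(p : ℝ) ^ a₀, one_le_pow₀ hp1.le, fun a b m hbm ha => ?_⟩
  induction a using Nat.strong_induction_on with
  | _ a ih =>
  by_cases h_small : a < a₀
  · refine (weightedDecouplingBound_pow hl a b m).mono ?_
    refine (pow_le_pow_right₀ hp1.le h_small.le).trans (le_mul_of_one_le_right (by positivity) ?_)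
    exact Real.one_le_rpow hp1.le (by positivity)
  obtain ⟨g, hg_large, hga⟩ : ∃ g, g₀ + 1 ≤ g ∧ (l + 1) * g ≤ a :=
    ⟨a / (l + 1), (Nat.le_div_iff_mul_le l.succ_pos).2 (by linarith), Nat.mul_div_le a (l + 1)⟩
  obtain ⟨a', rfl⟩ : ∃ a', a = a' + g := Nat.exists_eq_add_of_le' (by nlinarith)
  refine ((ih a' (by omega) ((Nat.mul_le_mul_left l (Nat.le_add_right a' g)).trans ha)).trans
    (hg₀ g (by omega)) (by positivity) (by positivity) hkp hl hlk (by linarith) ha hbm).mono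
    (le_of_eq ?_)
  rw [mul_assoc, ← Real.rpow_add hp0, ← mul_add, Nat.cast_add]

end Prime

/-! ### Bilinear decoupling -/

/-- `B` is an admissible constant in the bilinear decoupling inequality of degree `k` at level `l`:
it bounds the mixed moment, of order `2 critExp l` in the first and `2 (critExp k - critExp l)` in
the second factor, of two subfamilies at distance `1`, the second one confined to an interval of
length `p^{-b}`. -/
def BilinearBound (p : ℕ) [NeZero p] (k l b m : ℕ) (B : ℝ) : Prop :=
  ∀ (X ι : Type) [Fintype X] (t : ι → ℤ) (F : ι → X → ℂ) (S S' : Finset ι),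
    IsModulated (p ^ (k * m)) k t F (S ∪ S') → (∀ i ∈ S', ∀ j ∈ S', (p : ℤ) ^ b ∣ t i - t j) →
    (∀ i ∈ S, ∀ j ∈ S', ¬ (p : ℤ) ∣ t i - t j) →
      ∑ x, ‖(∑ i ∈ S, F i) x‖ ^ (2 * critExp l) *
          ‖(∑ i ∈ S', F i) x‖ ^ (2 * (critExp k - critExp l)) ≤
        B ^ critExp k * (classNormSum (p ^ m) (critExp k) t F S ^ critExp l *
          classNormSum (p ^ m) (critExp k) t F S' ^ (critExp k - critExp l))

lemma critExp_lt {l k : ℕ} (h : l < k) : critExp l < critExp k := by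
  have := two_mul_critExp k
  have := two_mul_critExp l
  nlinarith

lemma critExp_eq_interpolation {l k : ℕ} (hl : 0 < l) (hlk : l ≤ k) :
    (critExp l : ℝ) = 1 / (k - l + 1) * (critExp k - critExp (k - l) : ℕ) +
      (1 - 1 / (k - l + 1)) * critExp (l - 1) := by
  have h_ne : (k : ℝ) - l + 1 ≠ 0 := by
    have : (l : ℝ) ≤ k := by exact_mod_cast hlk
    positivity [sub_nonneg.2 this]
  rw [Nat.cast_sub (critExp_mono (Nat.sub_le k l))]
  simp only [cast_critExp, Nat.cast_sub hlk, Nat.cast_sub hl, Nat.cast_one]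
  field_simp
  ring

section Interpolation

variable {X ι : Type} [Fintype X] {p : ℕ} [NeZero p] {k l a b m : ℕ} {t : ι → ℤ}
  {F : ι → X → ℂ} {S S' : Finset ι}

lemma BilinearBound.mono {B B' : ℝ} (h : BilinearBound p k l b m B) (hB0 : 0 ≤ B) (hB : B ≤ B') :
    BilinearBound p k l b m B' := fun X ι _ t F S S' hF hS' hSS' =>
  (h X ι t F S S' hF hS' hSS').trans <| mul_le_mul_of_nonneg_right (pow_le_pow_left₀ hB0 hB _)
    (mul_nonneg (pow_nonneg classNormSum_nonneg _) (pow_nonneg classNormSum_nonneg _))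

lemma sum_norm_pow_mul_norm_pow_le {s r : ℕ} (hs : 0 < s) (hr : r ≤ s) (f g : X → ℂ) :
    ∑ x, ‖f x‖ ^ (2 * r) * ‖g x‖ ^ (2 * (s - r)) ≤ lpNormSq s f ^ r * lpNormSq s g ^ (s - r) := by
  have hs' : (0 : ℝ) < s := by exact_mod_cast hs
  have h_compl : 1 - (r : ℝ) / s = (s - r : ℕ) / s := by
    rw [Nat.cast_sub hr, sub_div, div_self hs'.ne']
  have hθ1 : (r : ℝ) / s ≤ 1 := (div_le_one hs').2 (by exact_mod_cast hr)
  have h_two : ∀ n : ℕ, ((2 * n : ℕ) : ℝ) = n / s * (2 * s : ℕ) := fun n => by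
    push_cast
    field_simp
  have h_pow : ∀ {Q : ℝ}, 0 ≤ Q → ∀ n : ℕ, (Q ^ s) ^ ((n : ℝ) / s) = Q ^ n := fun hQ n => by
    rw [← Real.rpow_natCast, ← Real.rpow_mul hQ, mul_div_cancel₀ _ hs'.ne', Real.rpow_natCast]
  refine (sum_pow_mul_pow_le_rpow_mul_rpow _ (fun _ => norm_nonneg _) (fun _ => norm_nonneg _)
    (by positivity) hθ1 (m₁ := 2 * s) (n₁ := 0) (m₂ := 0) (n₂ := 2 * s)
    (by rw [h_two, Nat.cast_zero, mul_zero, add_zero])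
    (by rw [h_compl, h_two, Nat.cast_zero, mul_zero, zero_add])).trans_eq ?_
  simp only [pow_zero, mul_one, one_mul, ← lpNormSq_pow hs]
  rw [h_compl, h_pow (lpNormSq_nonneg s f), h_pow (lpNormSq_nonneg s g)]

lemma DecouplingBound.bilinearBound {D : ℝ} (hD : DecouplingBound p k m D) (hk : 0 < k)
    (hl : l ≤ k) (b : ℕ) : BilinearBound p k l b m D := by
  intro X ι _ t F S S' hF _ _
  refine (sum_norm_pow_mul_norm_pow_le (critExp_pos hk) (critExp_mono hl) _ _).trans ?_
  rw [← pow_mul_pow_sub D (critExp_mono hl), mul_mul_mul_comm, ← mul_pow, ← mul_pow]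
  exact mul_le_mul
    (pow_le_pow_left₀ (lpNormSq_nonneg _ _)
      (hD X ι S t F (hF.mono Finset.subset_union_left)) _)
    (pow_le_pow_left₀ (lpNormSq_nonneg _ _)
      (hD X ι S' t F (hF.mono Finset.subset_union_right)) _)
    (pow_nonneg (lpNormSq_nonneg _ _) _)
    (pow_nonneg ((lpNormSq_nonneg _ _).trans
      (hD X ι S t F (hF.mono Finset.subset_union_left))) _)

lemma DecouplingBound.bilinearBound_zero {D : ℝ} (hD : DecouplingBound p k (m - b) D)
    (hk : 0 < k) (hD0 : 0 ≤ D) (hb : b ≤ m) : BilinearBound p k 0 b m D := by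
  intro X ι _ t F S S' hF hS' _
  simp only [show critExp 0 = 0 from rfl, mul_zero, pow_zero, one_mul, Nat.sub_zero]
  rw [← lpNormSq_pow (critExp_pos hk), ← mul_pow]
  exact pow_le_pow_left₀ (lpNormSq_nonneg _ _)
    (hD.lpNormSq_le_of_dvd_sub hk hD0 hb (hF.mono Finset.subset_union_right) hS') _

lemma BilinearBound.interpolate {B₁ B₂ : ℝ} (h₁ : BilinearBound p k (k - l) a m B₁)
    (h₂ : BilinearBound p k (l - 1) b m B₂) (hl : 0 < l) (hlk : l ≤ k) (hB₁ : 0 ≤ B₁)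
    (hB₂ : 0 ≤ B₂) (hF : IsModulated (p ^ (k * m)) k t F (S ∪ S'))
    (hS : ∀ i ∈ S, ∀ j ∈ S, (p : ℤ) ^ a ∣ t i - t j)
    (hS' : ∀ i ∈ S', ∀ j ∈ S', (p : ℤ) ^ b ∣ t i - t j)
    (hSS' : ∀ i ∈ S, ∀ j ∈ S', ¬ (p : ℤ) ∣ t i - t j) :
    ∑ x, ‖(∑ i ∈ S, F i) x‖ ^ (2 * critExp l) *
        ‖(∑ i ∈ S', F i) x‖ ^ (2 * (critExp k - critExp l)) ≤
      (B₁ ^ ((1 : ℝ) / (k - l + 1)) * B₂ ^ (1 - (1 : ℝ) / (k - l + 1))) ^ critExp k *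
        (classNormSum (p ^ m) (critExp k) t F S ^ critExp l *
          classNormSum (p ^ m) (critExp k) t F S' ^ (critExp k - critExp l)) := by
  have hlk' : (l : ℝ) ≤ k := by exact_mod_cast hlk
  have h_fst := critExp_eq_interpolation hl hlk
  set θ : ℝ := 1 / (k - l + 1)
  have hθ0 : 0 ≤ θ := div_nonneg one_pos.le (by linarith)
  have hθ1 : θ ≤ 1 := (div_le_one (by linarith)).2 (by linarith)
  have h_snd : ((critExp k - critExp l : ℕ) : ℝ) =
      θ * critExp (k - l) + (1 - θ) * (critExp k - critExp (l - 1) : ℕ) := by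
    rw [Nat.cast_sub (critExp_mono (Nat.sub_le k l))] at h_fst
    rw [Nat.cast_sub (critExp_mono hlk), h_fst, Nat.cast_sub (critExp_mono (by omega))]
    ring
  have h_two : ∀ {n n₁ n₂ : ℕ}, (n : ℝ) = θ * n₁ + (1 - θ) * n₂ →
      ((2 * n : ℕ) : ℝ) = θ * (2 * n₁ : ℕ) + (1 - θ) * (2 * n₂ : ℕ) := fun h => by
    push_cast
    rw [h]
    ring
  have h_bil₁ := h₁ X ι t F S' S (by rwa [Finset.union_comm]) hS fun i hi j hj hd =>
    hSS' j hj i hi (by rwa [← dvd_neg, neg_sub])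
  have h_bil₂ := h₂ X ι t F S S' hF hS' hSS'
  simp only [mul_comm (‖(∑ i ∈ S', F i) _‖ ^ _)] at h_bil₁
  refine (sum_pow_mul_pow_le_rpow_mul_rpow _ (fun _ => norm_nonneg _) (fun _ => norm_nonneg _)
    hθ0 hθ1 (h_two h_fst) (h_two h_snd)).trans ?_
  have hN : 0 ≤ classNormSum (p ^ m) (critExp k) t F S := classNormSum_nonneg
  have hN' : 0 ≤ classNormSum (p ^ m) (critExp k) t F S' := classNormSum_nonneg
  have hθ1' : 0 ≤ 1 - θ := sub_nonneg.2 hθ1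
  refine (mul_le_mul (Real.rpow_le_rpow (by positivity) h_bil₁ hθ0)
    (Real.rpow_le_rpow (by positivity) h_bil₂ hθ1') (by positivity) (by positivity)).trans_eq ?_
  rw [← pow_rpow_mul_pow_rpow_one_sub hθ0 hθ1 hN h_fst,
    ← pow_rpow_mul_pow_rpow_one_sub hθ0 hθ1 hN' h_snd, mul_pow, Real.rpow_pow_comm hB₁,
    Real.rpow_pow_comm hB₂, Real.mul_rpow (by positivity) (by positivity),
    Real.mul_rpow (by positivity) (by positivity), Real.mul_rpow (by positivity) (by positivity),
    Real.mul_rpow (by positivity) (by positivity)]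
  ring

lemma lpNormSq_sum_normWeighted_pow {s : ℕ} (hs : 0 < s) (n : ℕ) (F : ι → X → ℂ)
    (S S' : Finset ι) :
    lpNormSq s (∑ i ∈ S, normWeighted ((n : ℝ) / s) F S' i) ^ s =
      ∑ x, ‖(∑ i ∈ S, F i) x‖ ^ (2 * s) * ‖(∑ i ∈ S', F i) x‖ ^ (2 * n) := by
  rw [lpNormSq_pow hs]
  refine Finset.sum_congr rfl fun x _ => ?_
  rw [norm_sum_normWeighted, mul_pow, ← Real.rpow_mul_natCast (norm_nonneg _), Nat.cast_mul,
    Nat.cast_two, show (n : ℝ) / s * (2 * s) = (2 * n : ℕ) by push_cast; field_simp,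
    Real.rpow_natCast]

lemma classNormSum_normWeighted_pow_le {A : ℝ} {s r n : ℕ} (hs : 0 < s) (hr : 0 < r)
    (ham : a ≤ m) (hA : 0 ≤ A) (h : ∀ J : ZMod (p ^ a),
      ∑ x, ‖(∑ i ∈ residueClass (p ^ a) t S J, F i) x‖ ^ (2 * r) *
          ‖(∑ i ∈ S', F i) x‖ ^ (2 * n) ≤
        A * classNormSum (p ^ m) s t F (residueClass (p ^ a) t S J) ^ r) :
    classNormSum (p ^ a) r t (normWeighted ((n : ℝ) / r) F S') S ^ r ≤
      A * classNormSum (p ^ m) s t F S ^ r := by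
  have hK : (A ^ ((1 : ℝ) / r)) ^ r = A := by
    rw [one_div, Real.rpow_inv_natCast_pow hA hr.ne']
  rw [← hK, ← mul_pow]
  refine pow_le_pow_left₀ classNormSum_nonneg ?_ _
  rw [← sum_classNormSum_residueClass hs (pow_dvd_pow p ham), Finset.mul_sum]
  refine Finset.sum_le_sum fun J _ => ?_
  refine le_of_pow_le_pow_left₀ hr.ne' (mul_nonneg (by positivity) classNormSum_nonneg) ?_
  rw [lpNormSq_sum_normWeighted_pow hr, mul_pow, hK]
  exact h J

lemma WeightedDecouplingBound.bilinearBound {E B₁ B₂ : ℝ}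
    (hE : WeightedDecouplingBound p k l a b m E) (h₁ : BilinearBound p k (k - l) a m B₁)
    (h₂ : BilinearBound p k (l - 1) b m B₂) (hl : 0 < l) (hlk : l < k) (ham : a ≤ m)
    (hE1 : 1 ≤ E) (hB₁ : 0 ≤ B₁) (hB₂ : 0 ≤ B₂) :
    BilinearBound p k l b m
      (E * (B₁ ^ ((1 : ℝ) / (k - l + 1)) * B₂ ^ (1 - (1 : ℝ) / (k - l + 1)))) := by
  intro X ι _ t F S S' hF hS' hSS'
  have hs : 0 < critExp l := critExp_pos hl
  set A := B₁ ^ ((1 : ℝ) / (k - l + 1)) * B₂ ^ (1 - (1 : ℝ) / (k - l + 1))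
  set n := critExp k - critExp l
  have hN : 0 ≤ classNormSum (p ^ m) (critExp k) t F S := classNormSum_nonneg
  have hN' : 0 ≤ classNormSum (p ^ m) (critExp k) t F S' := classNormSum_nonneg
  rcases S'.eq_empty_or_nonempty with rfl | ⟨j, hj⟩
  · have h_pos : 2 * n ≠ 0 := by have := critExp_lt hlk; omega
    simp only [Finset.sum_empty, Pi.zero_apply, norm_zero, zero_pow h_pos, mul_zero,
      Finset.sum_const_zero]
    positivity
  have h_class := classNormSum_normWeighted_pow_le (critExp_pos (hl.trans hlk)) hs ham
    (by positivity : 0 ≤ A ^ critExp k * classNormSum (p ^ m) (critExp k) t F S' ^ n)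
    fun J => (h₁.interpolate h₂ hl hlk.le hB₁ hB₂
      (hF.mono (Finset.union_subset_union_left residueClass_subset))
      (fun i hi j hj => by exact_mod_cast dvd_sub_of_mem_residueClass hi hj) hS'
      fun i hi => hSS' i (residueClass_subset hi)).trans_eq (by ring)
  rw [← lpNormSq_sum_normWeighted_pow hs]
  calc lpNormSq (critExp l) (∑ i ∈ S, normWeighted ((n : ℝ) / critExp l) F S' i) ^ critExp l
      ≤ (E * classNormSum (p ^ a) (critExp l) t (normWeighted ((n : ℝ) / critExp l) F S') S) ^
          critExp l :=
        pow_le_pow_left₀ (lpNormSq_nonneg _ _) (hE X ι t F S S' (t j) _ hF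
          (fun i hi => hSS' i hi j hj) fun i hi => hS' i hi j hj) _
    _ ≤ E ^ critExp k * (A ^ critExp k * classNormSum (p ^ m) (critExp k) t F S' ^ n *
          classNormSum (p ^ m) (critExp k) t F S ^ critExp l) := by
        rw [mul_pow]
        exact mul_le_mul (pow_le_pow_right₀ hE1 (critExp_lt hlk).le) h_class
          (pow_nonneg classNormSum_nonneg _) (by positivity)
    _ = _ := by
        rw [mul_pow E A]
        ring

end Interpolation

section BroadNarrow

lemma norm_sq_sum_le_sum_norm_sq_fiber_add {α β : Type*} [Fintype α] [Fintype β]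
    [DecidableEq β] (proj : α → β) (f : α → ℂ) :
    ‖∑ i, f i‖ ^ 2 ≤ ∑ b, ‖∑ i with proj i = b, f i‖ ^ 2 +
      ∑ q : α × α with proj q.1 ≠ proj q.2, ‖f q.1‖ * ‖f q.2‖ := by
  have h_diag : ∑ q : α × α with proj q.1 = proj q.2, f q.1 * (starRingEnd ℂ) (f q.2) =
      ∑ b, (∑ i with proj i = b, f i) * (starRingEnd ℂ) (∑ i with proj i = b, f i) := by
    simp only [map_sum, Finset.sum_mul_sum, ← Finset.sum_product']
    rw [← Finset.sum_fiberwise _ fun q : α × α => proj q.1]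
    refine Finset.sum_congr rfl fun b _ => Finset.sum_congr ?_ fun _ _ => rfl
    ext q
    simp only [Finset.mem_filter, Finset.mem_univ, Finset.mem_product, true_and]
    exact ⟨fun h => ⟨h.2, h.1 ▸ h.2⟩, fun h => ⟨h.1.trans h.2.symm, h.1⟩⟩
  have h_norm : ∀ z : ℂ, ‖z * (starRingEnd ℂ) z‖ = ‖z‖ ^ 2 := fun z => by
    rw [norm_mul, RCLike.norm_conj, sq]
  rw [← h_norm, map_sum, Finset.sum_mul_sum, ← Finset.sum_product', Finset.univ_product_univ,
    ← Finset.sum_filter_add_sum_filter_not _ fun q : α × α => proj q.1 = proj q.2, h_diag]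
  refine (norm_add_le _ _).trans (add_le_add ?_ ?_) <;> refine (norm_sum_le _ _).trans_eq ?_
  · simp only [h_norm]
  · simp only [norm_mul, RCLike.norm_conj, ne_eq]

lemma lpNormSq_sum_le_sum_fiber_add {X α β : Type*} [Fintype X] [Fintype α] [Fintype β]
    [DecidableEq β] {s : ℕ} (hs : 0 < s) (proj : α → β) (f : α → X → ℂ) :
    lpNormSq s (∑ i, f i) ≤ ∑ b, lpNormSq s (∑ i with proj i = b, f i) +
      ∑ q : α × α with proj q.1 ≠ proj q.2,
        (∑ x, (‖f q.1 x‖ * ‖f q.2 x‖) ^ s) ^ ((1 : ℝ) / s) := by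
  let u : β ⊕ α × α → X → ℝ :=
    Sum.elim (fun b x => ‖∑ i with proj i = b, f i x‖ ^ 2) fun q x => ‖f q.1 x‖ * ‖f q.2 x‖
  have hu : ∀ j x, 0 ≤ u j x := by
    rintro (b | q) x <;> simp only [u, Sum.elim_inl, Sum.elim_inr] <;> positivity
  refine (lpNormSq_le_sum hs (Finset.univ.disjSum {q | proj q.1 ≠ proj q.2}) hu
    fun x => ?_).trans_eq ?_
  · simpa only [Finset.sum_disjSum, u, Sum.elim_inl, Sum.elim_inr, Finset.sum_apply] using
      norm_sq_sum_le_sum_norm_sq_fiber_add proj fun i => f i x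
  · simp only [Finset.sum_disjSum, u, Sum.elim_inl, Sum.elim_inr, lpNormSq, Finset.sum_apply,
      pow_mul]

variable {X ι : Type} [Fintype X] {p : ℕ} [NeZero p] {k l b m : ℕ} {t : ι → ℤ}
  {F : ι → X → ℂ} {S S' : Finset ι}

lemma BilinearBound.sum_norm_mul_norm_pow_le {B N : ℝ} (hB : BilinearBound p k l b m B)
    (hl : l ≤ k) (hB0 : 0 ≤ B) (hF : IsModulated (p ^ (k * m)) k t F (S ∪ S'))
    (hS : ∀ i ∈ S, ∀ j ∈ S, (p : ℤ) ^ b ∣ t i - t j)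
    (hS' : ∀ i ∈ S', ∀ j ∈ S', (p : ℤ) ^ b ∣ t i - t j)
    (hSS' : ∀ i ∈ S, ∀ j ∈ S', ¬ (p : ℤ) ∣ t i - t j)
    (hN : classNormSum (p ^ m) (critExp k) t F S ≤ N)
    (hN' : classNormSum (p ^ m) (critExp k) t F S' ≤ N) :
    ∑ x, (‖(∑ i ∈ S, F i) x‖ * ‖(∑ i ∈ S', F i) x‖) ^ critExp k ≤ (B * N) ^ critExp k := by
  have hlk := critExp_mono hl
  have hN0 : 0 ≤ N := classNormSum_nonneg.trans hN
  have hBN0 : 0 ≤ (B * N) ^ critExp k := by positivity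
  have h_le : ∀ {u v : ℝ}, 0 ≤ u → 0 ≤ v → u ≤ N → v ≤ N →
      B ^ critExp k * (u ^ critExp l * v ^ (critExp k - critExp l)) ≤ (B * N) ^ critExp k :=
    fun hu hv huN hvN => by
      rw [mul_pow, ← pow_mul_pow_sub N hlk]
      gcongr
  have h_fst := (hB X ι t F S S' hF hS' hSS').trans
    (h_le classNormSum_nonneg classNormSum_nonneg hN hN')
  have h_snd := (hB X ι t F S' S (by rwa [Finset.union_comm]) hS fun i hi j hj hd =>
    hSS' j hj i hi (by rwa [← dvd_neg, neg_sub])).trans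
    (h_le classNormSum_nonneg classNormSum_nonneg hN' hN)
  simp only [mul_comm (‖(∑ i ∈ S', F i) _‖ ^ _)] at h_snd
  have h_mean : (critExp k : ℝ) = 1 / 2 * (2 * critExp l : ℕ) +
      (1 - 1 / 2) * (2 * (critExp k - critExp l) : ℕ) := by
    push_cast [Nat.cast_sub hlk]
    ring
  simp only [mul_pow (‖(∑ i ∈ S, F i) _‖)]
  calc _ ≤ _ := sum_pow_mul_pow_le_rpow_mul_rpow _ (fun _ => norm_nonneg _)
        (fun _ => norm_nonneg _) (by norm_num) (by norm_num) h_mean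
        (h_mean.trans (by ring) : (critExp k : ℝ) = 1 / 2 *
          (2 * (critExp k - critExp l) : ℕ) + (1 - 1 / 2) * (2 * critExp l : ℕ))
    _ ≤ ((B * N) ^ critExp k) ^ (1 / 2 : ℝ) * ((B * N) ^ critExp k) ^ (1 - 1 / 2 : ℝ) := by
        gcongr
    _ = (B * N) ^ critExp k := by
        rw [← Real.rpow_add_of_nonneg hBN0 (by norm_num) (by norm_num), add_sub_cancel,
          Real.rpow_one]

lemma BilinearBound.rpow_sum_norm_residueClass_mul_pow_le {B : ℝ}
    (hB : BilinearBound p k l b m B) (hk : 0 < k) (hl : l ≤ k) (hb : 1 ≤ b) (hbm : b ≤ m)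
    (hB0 : 0 ≤ B) (hF : IsModulated (p ^ (k * m)) k t F S) {I J : ZMod (p ^ b)}
    (hIJ : ZMod.castHom (pow_dvd_pow p hb) (ZMod (p ^ 1)) I ≠
      ZMod.castHom (pow_dvd_pow p hb) (ZMod (p ^ 1)) J) :
    (∑ x, (‖(∑ i ∈ residueClass (p ^ b) t S I, F i) x‖ *
      ‖(∑ i ∈ residueClass (p ^ b) t S J, F i) x‖) ^ critExp k) ^ ((1 : ℝ) / critExp k) ≤
        B * classNormSum (p ^ m) (critExp k) t F S := by
  have hs := critExp_pos hk
  have h_class : ∀ K, ∀ i ∈ residueClass (p ^ b) t S K, ∀ j ∈ residueClass (p ^ b) t S K,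
      (p : ℤ) ^ b ∣ t i - t j := fun K i hi j hj => by
    exact_mod_cast dvd_sub_of_mem_residueClass hi hj
  have h_cast : ∀ K, ∀ i ∈ residueClass (p ^ b) t S K,
      ZMod.castHom (pow_dvd_pow p hb) (ZMod (p ^ 1)) K = (t i : ZMod (p ^ 1)) := fun K i hi => by
    rw [← (Finset.mem_filter.1 hi).2, map_intCast]
  have h_norm : ∀ K, classNormSum (p ^ m) (critExp k) t F (residueClass (p ^ b) t S K) ≤
      classNormSum (p ^ m) (critExp k) t F S :=
    classNormSum_residueClass_le hs (pow_dvd_pow p hbm)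
  have hN : 0 ≤ classNormSum (p ^ m) (critExp k) t F S := classNormSum_nonneg
  rw [one_div, Real.rpow_inv_le_iff_of_pos (by positivity) (by positivity) (by positivity),
    Real.rpow_natCast]
  refine hB.sum_norm_mul_norm_pow_le hl hB0
    (hF.mono (Finset.union_subset residueClass_subset residueClass_subset)) (h_class I) (h_class J)
    (fun i hi j hj hd => hIJ ?_) (h_norm I) (h_norm J)
  rw [h_cast I i hi, h_cast J j hj, eq_comm, ZMod.intCast_eq_intCast_iff_dvd_sub, pow_one]
  exact hd

lemma BilinearBound.decouplingBound {D B : ℝ} (hB : BilinearBound p k l b m B)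
    (hD : DecouplingBound p k (m - 1) D) (hk : 0 < k) (hl : l ≤ k) (hb : 1 ≤ b) (hbm : b ≤ m)
    (hD0 : 0 ≤ D) (hB0 : 0 ≤ B) : DecouplingBound p k m (D + (p : ℝ) ^ (2 * b) * B) := by
  intro X ι _ S t F hF
  have hs := critExp_pos hk
  have h_dvd : p ^ 1 ∣ p ^ b := pow_dvd_pow p hb
  have hN : 0 ≤ classNormSum (p ^ m) (critExp k) t F S := classNormSum_nonneg
  have h_narrow : ∀ J, lpNormSq (critExp k) (∑ i ∈ residueClass (p ^ 1) t S J, F i) ≤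
      D * classNormSum (p ^ m) (critExp k) t F (residueClass (p ^ 1) t S J) := fun J =>
    hD.lpNormSq_le_of_dvd_sub hk hD0 (hb.trans hbm) (hF.mono residueClass_subset)
      fun i hi j hj => by exact_mod_cast dvd_sub_of_mem_residueClass (J := J) hi hj
  rw [← sum_sum_residueClass (M := p ^ b) t F S, add_mul]
  refine (lpNormSq_sum_le_sum_fiber_add hs (ZMod.castHom h_dvd (ZMod (p ^ 1))) _).trans
    (add_le_add ?_ ?_)
  · simp only [sum_filter_sum_residueClass h_dvd]
    rw [← sum_classNormSum_residueClass hs (pow_dvd_pow p (hb.trans hbm)), Finset.mul_sum]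
    exact Finset.sum_le_sum fun J _ => h_narrow J
  · refine (Finset.sum_le_card_nsmul _ _ (B * classNormSum (p ^ m) (critExp k) t F S)
      fun q hq => hB.rpow_sum_norm_residueClass_mul_pow_le hk hl hb hbm hB0 hF
        (Finset.mem_filter.1 hq).2).trans ?_
    rw [nsmul_eq_mul, mul_assoc]
    refine mul_le_mul_of_nonneg_right ?_ (by positivity)
    refine (Nat.cast_le.2 (Finset.card_filter_le _ _)).trans_eq ?_
    rw [Finset.card_univ, Fintype.card_prod, ZMod.card, two_mul, pow_add]
    push_cast
    rfl

end BroadNarrow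

/-! ### Vanishing of the decoupling exponent -/

/-- The bilinear estimates of type `(k, l)` at sufficiently divisible scales `b ≪ m` improve on the
exponent `η` by `A b`, up to `ε`-losses. One parameter `R` serves both as the divisor of `b` and as
the lower bound for `m / b`. -/
def HasBilinearGain (p : ℕ) [NeZero p] (k : ℕ) (η : ℝ) (l : ℕ) (A : ℝ) : Prop :=
  ∃ R : ℕ, 0 < R ∧ ∀ ε : ℝ, 0 < ε → ∃ C : ℝ, 1 ≤ C ∧ ∀ b m : ℕ, 0 < b → R ∣ b → R * b ≤ m →
    BilinearBound p k l b m (C * (p : ℝ) ^ ((η + ε) * m - A * b))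

/-- The gain `A` in `HasBilinearGain p k η l A` reached after `r` rounds of the bilinear
iteration. -/
def bilinearGain (k : ℕ) (η : ℝ) : ℕ → ℕ → ℝ
  | _, 0 => η
  | 0, _ + 1 => 0
  | r + 1, l + 1 => bilinearGain k η r (k - (l + 1)) / (l + 1 : ℕ) +
      (1 - 1 / (k - (l + 1 : ℕ) + 1)) * bilinearGain k η r l

lemma mul_rpow_rpow_mul_mul_rpow_rpow_le {P C₁ C₂ θ : ℝ} (hP : 0 < P) (hC₁ : 1 ≤ C₁)
    (hC₂ : 1 ≤ C₂) (hθ0 : 0 ≤ θ) (hθ1 : θ ≤ 1) (u v : ℝ) :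
    (C₁ * P ^ u) ^ θ * (C₂ * P ^ v) ^ (1 - θ) ≤ C₁ * C₂ * P ^ (u * θ + v * (1 - θ)) := by
  rw [Real.mul_rpow (by positivity) (by positivity), Real.mul_rpow (by positivity) (by positivity),
    ← Real.rpow_mul hP.le, ← Real.rpow_mul hP.le, mul_mul_mul_comm, ← Real.rpow_add hP]
  gcongr
  · exact Real.rpow_le_self_of_one_le hC₁ hθ1
  · exact Real.rpow_le_self_of_one_le hC₂ (by linarith)

lemma bilinear_const_le {P C₀ C₁ C₂ η ε A₁ A₂ θ a b l m : ℝ} (hP : 1 ≤ P) (hε : 0 ≤ ε)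
    (hC₀ : 1 ≤ C₀) (hC₁ : 1 ≤ C₁) (hC₂ : 1 ≤ C₂) (hθ0 : 0 ≤ θ) (hθ1 : θ ≤ 1) (ham : a ≤ m)
    (haθ : a * θ = b / l) :
    C₀ * P ^ (ε / 2 * a) * ((C₁ * P ^ ((η + ε / 2) * m - A₁ * a)) ^ θ *
      (C₂ * P ^ ((η + ε / 2) * m - A₂ * b)) ^ (1 - θ)) ≤
    C₀ * (C₁ * C₂) * P ^ ((η + ε) * m - (A₁ / l + (1 - θ) * A₂) * b) := by
  have hP0 : 0 < P := zero_lt_one.trans_le hP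
  calc _ ≤ C₀ * P ^ (ε / 2 * m) * (C₁ * C₂ * P ^
          (((η + ε / 2) * m - A₁ * a) * θ + ((η + ε / 2) * m - A₂ * b) * (1 - θ))) := by
        refine mul_le_mul ?_ (mul_rpow_rpow_mul_mul_rpow_rpow_le hP0 hC₁ hC₂ hθ0 hθ1 _ _)
          (by positivity) (by positivity)
        gcongr
    _ = _ := by
        rw [mul_mul_mul_comm, ← Real.rpow_add hP0]
        congr 2
        linear_combination -A₁ * haθ

-- At the scale `a` given by `l a = (k - l + 1) b` the weighted decoupling in degree `l` is sharp.
lemma exists_bilinear_scale {R₁ R₂ k l : ℕ} (hR₁ : 0 < R₁) (hR₂ : 0 < R₂) (hl : 0 < l)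
    (hlk : l < k) :
    ∃ R : ℕ, 0 < R ∧ ∀ b, 0 < b → R ∣ b → ∃ a, 0 < a ∧ l * a = (k - l + 1) * b ∧ R₁ ∣ a ∧
      R₂ ∣ b ∧ ∀ m, R * b ≤ m → R₁ * a ≤ m ∧ R₂ * b ≤ m := by
  have hk := hl.trans hlk
  refine ⟨l * (k * (R₁ * R₂)), by positivity, ?_⟩
  rintro _ hb ⟨q, rfl⟩
  set c := k * (R₁ * R₂) * q with hc
  rw [mul_assoc l, ← hc] at hb ⊢
  have hc0 : 0 < c := pos_of_mul_pos_right hb l.zero_le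
  refine ⟨(k - l + 1) * c, by positivity, by ring, ⟨(k - l + 1) * (k * R₂ * q), by rw [hc]; ring⟩,
    ⟨l * (k * R₁ * q), by rw [hc]; ring⟩, fun m hm => ⟨?_, ?_⟩⟩ <;> refine le_trans ?_ hm
  · calc R₁ * ((k - l + 1) * c) ≤ R₁ * (k * c) := by gcongr; omega
      _ ≤ l * l * R₂ * (R₁ * (k * c)) := Nat.le_mul_of_pos_left _ (by positivity)
      _ = l * (k * (R₁ * R₂)) * (l * c) := by ring
  · calc R₂ * (l * c) ≤ l * k * R₁ * (R₂ * (l * c)) := Nat.le_mul_of_pos_left _ (by positivity)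
      _ = l * (k * (R₁ * R₂)) * (l * c) := by ring

lemma sum_gain_recurrence (A : ℕ → ℝ) (n : ℕ) :
    ∑ i ∈ Finset.range n, (A (n - i) / (i + 1) + (1 - 1 / ((n : ℝ) - i + 1)) * A i) =
      ∑ i ∈ Finset.range n, A (i + 1) + (1 - 1 / ((n : ℝ) + 1)) * A 0 := by
  have h_reflect : ∑ i ∈ Finset.range n, A (n - i) / (i + 1) =
      ∑ i ∈ Finset.range n, 1 / ((n : ℝ) - i) * A (i + 1) := by
    rw [← Finset.sum_range_reflect]
    refine Finset.sum_congr rfl fun i hi => ?_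
    rw [Finset.mem_range] at hi
    rw [show n - (n - 1 - i) = i + 1 by omega, show n - 1 - i = n - (i + 1) by omega,
      Nat.cast_sub hi, Nat.cast_succ, div_eq_mul_inv, mul_comm, one_div]
    ring_nf
  have h_shift : ∑ i ∈ Finset.range n, (1 - 1 / ((n : ℝ) - i + 1)) * A i =
      ∑ i ∈ Finset.range n, (1 - 1 / ((n : ℝ) - i)) * A (i + 1) +
        (1 - 1 / ((n : ℝ) + 1)) * A 0 := by
    have := (Finset.sum_range_succ' (fun i : ℕ => (1 - 1 / ((n : ℝ) - i + 1)) * A i) n).symm.trans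
      (Finset.sum_range_succ _ n)
    simpa [← sub_sub] using this.symm
  rw [Finset.sum_add_distrib, h_reflect, h_shift, ← add_assoc, ← Finset.sum_add_distrib]
  simp only [← add_mul, add_sub_cancel, one_mul]

lemma sum_bilinearGain (n : ℕ) (η : ℝ) (r : ℕ) :
    ∑ i ∈ Finset.range n, bilinearGain (n + 1) η r (i + 1) = r * (n / (n + 1) * η) := by
  induction r with
  | zero => simp [bilinearGain]
  | succ r ih =>
    have h_zero : bilinearGain (n + 1) η r 0 = η := by simp only [bilinearGain]
    have := sum_gain_recurrence (bilinearGain (n + 1) η r) n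
    simp only [bilinearGain, Nat.add_sub_add_right]
    push_cast
    simp only [add_sub_add_right_eq_sub]
    rw [this, ih, h_zero]
    field_simp
    ring

section Prime

variable {p k l : ℕ} [hp : Fact p.Prime] {η A : ℝ}

lemma DecouplingExponent.hasBilinearGain_bot (h : DecouplingExponent p k η) (hk : 0 < k)
    (hl : l ≤ k) : HasBilinearGain p k η l 0 := by
  refine ⟨1, one_pos, fun ε hε => ?_⟩
  obtain ⟨C, hC, hD⟩ := h ε hε
  exact ⟨C, hC, fun b m _ _ _ => by simpa using (hD m).bilinearBound hk hl b⟩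

lemma DecouplingExponent.hasBilinearGain_zero (h : DecouplingExponent p k η) (hk : 0 < k) :
    HasBilinearGain p k η 0 η := by
  have hp1 : (1 : ℝ) ≤ p := by exact_mod_cast hp.out.one_le
  refine ⟨1, one_pos, fun ε hε => ?_⟩
  obtain ⟨C, hC, hD⟩ := h ε hε
  refine ⟨C, hC, fun b m _ _ hbm => ?_⟩
  rw [one_mul] at hbm
  refine ((hD (m - b)).bilinearBound_zero hk (by positivity) hbm).mono (by positivity) ?_
  refine mul_le_mul_of_nonneg_left (Real.rpow_le_rpow_of_exponent_le hp1 ?_) (by positivity)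
  rw [Nat.cast_sub hbm]
  nlinarith [(Nat.cast_nonneg b : (0 : ℝ) ≤ b)]

lemma HasBilinearGain.recurrence {A₁ A₂ : ℝ} (h₁ : HasBilinearGain p k η (k - l) A₁)
    (h₂ : HasBilinearGain p k η (l - 1) A₂) (hH : DecouplingExponent p l 0) (hkp : k < p)
    (hl : 0 < l) (hlk : l < k) :
    HasBilinearGain p k η l (A₁ / l + (1 - 1 / (k - l + 1)) * A₂) := by
  have hp1 : (1 : ℝ) ≤ p := by exact_mod_cast hp.out.one_le
  obtain ⟨R₁, hR₁, h₁⟩ := h₁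
  obtain ⟨R₂, hR₂, h₂⟩ := h₂
  obtain ⟨R, hR, h_scale⟩ := exists_bilinear_scale hR₁ hR₂ hl hlk
  refine ⟨R, hR, fun ε hε => ?_⟩
  obtain ⟨C₀, hC₀, h₀⟩ := hH.exists_weightedDecouplingBound hkp hl hlk.le (half_pos hε)
  obtain ⟨C₁, hC₁, h₁⟩ := h₁ (ε / 2) (half_pos hε)
  obtain ⟨C₂, hC₂, h₂⟩ := h₂ (ε / 2) (half_pos hε)
  refine ⟨C₀ * (C₁ * C₂), one_le_mul_of_one_le_of_one_le hC₀
    (one_le_mul_of_one_le_of_one_le hC₁ hC₂), fun b m hb hRb hm => ?_⟩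
  obtain ⟨a, ha, hla, hR₁a, hR₂b, h_le⟩ := h_scale b hb hRb
  obtain ⟨ham, hbm⟩ := h_le m hm
  have ham' : a ≤ m := (Nat.le_mul_of_pos_left _ hR₁).trans ham
  have hbm' : b ≤ m := (Nat.le_mul_of_pos_left _ hR₂).trans hbm
  refine ((h₀ a b m hbm' hla.le).bilinearBound (h₁ a m ha hR₁a ham) (h₂ b m hb hR₂b hbm) hl hlk
    ham' (one_le_mul_of_one_le_of_one_le hC₀ (Real.one_le_rpow hp1 (by positivity)))
    (by positivity) (by positivity)).mono (by positivity) ?_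
  have hlkR : (l : ℝ) + 1 ≤ k := by exact_mod_cast hlk
  have h_denom : 0 < (k : ℝ) - l + 1 := by linarith
  refine bilinear_const_le hp1 hε.le hC₀ hC₁ hC₂ (by positivity) ?_ (by exact_mod_cast ham') ?_
  · rw [div_le_one h_denom]
    linarith
  · have : (l : ℝ) * a = (k - l + 1) * b := by
      rw [← Nat.cast_sub hlk.le]
      exact_mod_cast hla
    field_simp
    linarith

lemma exists_decouplingBound_of_step {x C₁ : ℝ} (hk : 0 < k) (hx : 0 < x) (hC₁ : 0 ≤ C₁)
    (m₀ : ℕ) (h_step : ∀ m ≥ m₀, ∀ D : ℝ, 0 ≤ D → DecouplingBound p k m D →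
      DecouplingBound p k (m + 1) (D + C₁ * (p : ℝ) ^ (x * (m + 1 : ℕ)))) :
    ∃ C : ℝ, 1 ≤ C ∧ ∀ m : ℕ, DecouplingBound p k m (C * (p : ℝ) ^ (x * m)) := by
  have hp1 : (1 : ℝ) < p := by exact_mod_cast hp.out.one_lt
  have hp0 : (0 : ℝ) < p := zero_lt_one.trans hp1
  set q := (p : ℝ) ^ (-x) with hq
  have hq1 : 0 < 1 - q := sub_pos.2 (Real.rpow_lt_one_of_one_lt_of_neg hp1 (neg_lt_zero.2 hx))
  have hC₁q : 0 ≤ C₁ / (1 - q) := by positivity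
  have h_pow : (1 : ℝ) ≤ p ^ m₀ := one_le_pow₀ hp1.le
  set C := (p : ℝ) ^ m₀ + C₁ / (1 - q) with hC
  refine ⟨C, by linarith, fun m => ?_⟩
  have h_small : ∀ m ≤ m₀, DecouplingBound p k m (C * (p : ℝ) ^ (x * m)) := fun m hm => by
    refine (decouplingBound_pow hk).mono ?_
    calc (p : ℝ) ^ m ≤ C * 1 := by linarith [pow_le_pow_right₀ hp1.le hm]
      _ ≤ C * (p : ℝ) ^ (x * m) := by
        gcongr
        exact Real.one_le_rpow hp1.le (by positivity)
  induction m with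
  | zero => exact h_small 0 (Nat.zero_le _)
  | succ m ih =>
    rcases lt_or_ge m m₀ with hm | hm
    · exact h_small _ hm
    refine (h_step m hm _ (by positivity) ih).mono ?_
    have h_scale : (p : ℝ) ^ (x * m) = q * (p : ℝ) ^ (x * (m + 1 : ℕ)) := by
      rw [hq, ← Real.rpow_add hp0]
      congr 1
      push_cast
      ring
    have h_const : C * q + C₁ ≤ C := by
      have : C * (1 - q) = p ^ m₀ * (1 - q) + C₁ := by
        rw [hC, add_mul, div_mul_cancel₀ _ hq1.ne']
      nlinarith
    rw [h_scale, ← mul_assoc, ← add_mul]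
    gcongr

lemma HasBilinearGain.decouplingExponent (h : HasBilinearGain p k η l A) (hA : 4 ≤ A)
    (hk : 0 < k) (hl : l ≤ k) : ∃ δ : ℝ, 0 < δ ∧ DecouplingExponent p k (max 0 (η - δ)) := by
  have hp1 : (1 : ℝ) ≤ p := by exact_mod_cast hp.out.one_le
  have hp0 : (0 : ℝ) < p := by exact_mod_cast hp.out.pos
  obtain ⟨R, hR, h⟩ := h
  refine ⟨2 / R, by positivity, fun ε hε => ?_⟩
  obtain ⟨C, hC, h_bil⟩ := h ε hε
  set x := max 0 (η - 2 / R) + ε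
  refine exists_decouplingBound_of_step (C₁ := C * (p : ℝ) ^ (2 * R)) hk (by positivity)
    (by positivity) (R * R) fun m hm D hD0 hD => ?_
  -- The bilinear bound is applied at `b = R * d`, its largest admissible scale.
  obtain ⟨d, hd⟩ : ∃ d, d = (m + 1) / (R * R) := ⟨_, rfl⟩
  have hd_pos : 0 < d := hd ▸ Nat.div_pos (by omega) (by positivity)
  have hd_le : R * (R * d) ≤ m + 1 := by
    rw [← mul_assoc, hd]
    exact Nat.mul_div_le _ _
  have hd_lt : ((m + 1 : ℕ) : ℝ) ≤ R * (R * d) + R * R := by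
    exact_mod_cast (hd ▸ Nat.lt_mul_div_succ (m + 1) (Nat.mul_pos hR hR)).le.trans_eq (by ring)
  have hb_pos : 0 < R * d := Nat.mul_pos hR hd_pos
  refine ((h_bil (R * d) (m + 1) hb_pos ⟨d, rfl⟩ hd_le).decouplingBound hD hk hl hb_pos
    ((Nat.le_mul_of_pos_left _ hR).trans hd_le) hD0 (by positivity)).mono ?_
  gcongr D + ?_
  rw [← Real.rpow_natCast, ← Real.rpow_natCast, mul_left_comm, ← Real.rpow_add hp0, mul_assoc,
    ← Real.rpow_add hp0]
  refine mul_le_mul_of_nonneg_left (Real.rpow_le_rpow_of_exponent_le hp1 ?_) (by positivity)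
  have h_saving : 2 / R * ((m + 1 : ℕ) : ℝ) ≤ 2 * (R * d + R) := by
    rw [div_mul_eq_mul_div, div_le_iff₀ (by positivity)]
    linarith
  have h_gain : 4 * ((R * d : ℕ) : ℝ) ≤ A * (R * d : ℕ) := by gcongr
  have hx_ge : (η - 2 / R + ε) * ((m + 1 : ℕ) : ℝ) ≤ x * (m + 1 : ℕ) := by
    gcongr
    exact add_le_add_left (le_max_right _ _) ε
  push_cast at *
  linarith

lemma DecouplingExponent.hasBilinearGain (h : DecouplingExponent p k η) (hkp : k < p)
    (h_lower : ∀ j, 0 < j → j < k → DecouplingExponent p j 0) (r : ℕ) (hl : l < k) :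
    HasBilinearGain p k η l (bilinearGain k η r l) := by
  induction r generalizing l with
  | zero =>
    rcases l with - | l
    · simpa only [bilinearGain] using h.hasBilinearGain_zero hl
    · simpa only [bilinearGain] using h.hasBilinearGain_bot (by omega) hl.le
  | succ r ih =>
    rcases l with - | l
    · simpa only [bilinearGain] using h.hasBilinearGain_zero hl
    · exact (ih (Nat.sub_lt (by omega) l.succ_pos)).recurrence (ih (by omega))
        (h_lower _ l.succ_pos hl) hkp l.succ_pos hl

lemma DecouplingExponent.exists_lt (h : DecouplingExponent p k η) (hkp : k < p) (hk : 2 ≤ k)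
    (h_lower : ∀ j, 0 < j → j < k → DecouplingExponent p j 0) (hη : 0 < η) :
    ∃ η', 0 ≤ η' ∧ η' < η ∧ DecouplingExponent p k η' := by
  obtain ⟨n, rfl⟩ : ∃ n, k = n + 1 := ⟨k - 1, by omega⟩
  have hn : (0 : ℝ) < n := by exact_mod_cast (by omega : 0 < n)
  obtain ⟨r, hr⟩ := exists_nat_gt (4 * (n + 1) / η)
  obtain ⟨i, hi, h_gain⟩ : ∃ i ∈ Finset.range n, 4 ≤ bilinearGain (n + 1) η r (i + 1) := by
    refine Finset.exists_le_of_sum_le (Finset.nonempty_range_iff.2 (by omega)) ?_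
    rw [sum_bilinearGain, Finset.sum_const, Finset.card_range, nsmul_eq_mul]
    rw [div_lt_iff₀ hη] at hr
    calc (n : ℝ) * 4 = n / (n + 1) * (4 * (n + 1)) := by field_simp
      _ ≤ n / (n + 1) * (r * η) := by gcongr
      _ = r * (n / (n + 1) * η) := by ring
  have hi_lt : i + 1 < n + 1 := Nat.succ_lt_succ (Finset.mem_range.1 hi)
  obtain ⟨δ, hδ, hH⟩ := (h.hasBilinearGain hkp h_lower r hi_lt).decouplingExponent h_gain
    n.succ_pos hi_lt.le
  exact ⟨max 0 (η - δ), le_max_left _ _, max_lt hη (sub_lt_self _ hδ), hH⟩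

lemma DecouplingExponent.of_forall_exists_lt
    (h : ∀ ε > 0, ∃ η' < η + ε, DecouplingExponent p k η') : DecouplingExponent p k η := by
  intro ε hε
  obtain ⟨η', hη', hH⟩ := h (ε / 2) (half_pos hε)
  obtain ⟨C, hC, hD⟩ := hH (ε / 2) (half_pos hε)
  refine ⟨C, hC, fun m => (hD m).mono ?_⟩
  gcongr ?_ * ?_ ^ (?_ * _)
  · exact_mod_cast hp.out.one_le
  · linarith

lemma decouplingExponent_one (hk : 0 < k) : DecouplingExponent p k 1 := by
  refine fun ε hε => ⟨1, le_rfl, fun m => (decouplingBound_pow hk).mono ?_⟩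
  rw [one_mul, ← Real.rpow_natCast]
  refine Real.rpow_le_rpow_of_exponent_le (by exact_mod_cast hp.out.one_le) ?_
  exact le_mul_of_one_le_left (Nat.cast_nonneg m) (by linarith)

theorem decouplingExponent_zero (hk : 0 < k) (hkp : k < p) : DecouplingExponent p k 0 := by
  induction k using Nat.strong_induction_on with
  | _ k ih =>
  obtain rfl | hk2 : k = 1 ∨ 2 ≤ k := by omega
  · refine fun ε hε => ⟨1, le_rfl, fun m => decouplingBound_one.mono ?_⟩
    rw [one_mul]
    exact Real.one_le_rpow (by exact_mod_cast hp.out.one_le) (by positivity)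
  set Z : Set ℝ := {η | 0 ≤ η ∧ DecouplingExponent p k η}
  have hZ : Z.Nonempty := ⟨1, zero_le_one, decouplingExponent_one hk⟩
  have hZ_bdd : BddBelow Z := ⟨0, fun η h => h.1⟩
  have hη₀ : 0 ≤ sInf Z := le_csInf hZ fun η h => h.1
  have h_inf : DecouplingExponent p k (sInf Z) := .of_forall_exists_lt fun ε hε =>
    let ⟨η, hη, hlt⟩ := exists_lt_of_csInf_lt hZ (lt_add_of_pos_right (sInf Z) hε)
    ⟨η, hlt, hη.2⟩
  rcases hη₀.eq_or_lt with h | h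
  · rwa [h]
  · obtain ⟨η', h_nonneg, h_lt, hH⟩ := h_inf.exists_lt hkp hk2
      (fun j hj hjk => ih j hjk hj (hjk.trans hkp)) h
    exact absurd (csInf_le hZ_bdd ⟨h_nonneg, hH⟩) h_lt.not_ge

end Prime

/-! ### Vinogradov's mean value -/

/-- The character `e((x₁ i + ⋯ + x_d i^d) / M)` attached to the point `i` of the moment curve;
the frequency `x_{j+1}` is stored as `x j`. -/
def momentChar {M d : ℕ} [NeZero M] (i : ℕ) (x : Fin d → ZMod M) : ℂ :=
  ZMod.stdAddChar (∑ j, x j * (i : ZMod M) ^ ((j : ℕ) + 1))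

lemma card_residueClass_Icc_le_one {M h : ℕ} (hM : h ≤ M) (J : ZMod M) :
    (residueClass M (fun i : ℕ => (i : ℤ)) (Finset.Icc 1 h) J).card ≤ 1 := by
  refine Finset.card_le_one.2 fun i hi j hj => ?_
  have h_dvd := dvd_sub_of_mem_residueClass hi hj
  have hi' := Finset.mem_Icc.1 (residueClass_subset hi)
  have hj' := Finset.mem_Icc.1 (residueClass_subset hj)
  have h_zero := Int.eq_zero_of_abs_lt_dvd h_dvd (abs_lt.2 ⟨by omega, by omega⟩)
  omega

section MeanValue

variable {M d : ℕ} [NeZero M]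

lemma norm_momentChar (i : ℕ) (x : Fin d → ZMod M) : ‖momentChar i x‖ = 1 :=
  norm_stdAddChar _

lemma isModulated_momentChar (S : Finset ℕ) :
    IsModulated M d (fun i : ℕ => (i : ℤ)) (momentChar (M := M) (d := d)) S := by
  intro P hP
  let c : Fin d → ZMod M := fun j => ((P.coeff ((j : ℕ) + 1) : ℤ) : ZMod M)
  refine ⟨Equiv.addRight c, fun _ => ZMod.stdAddChar (-((P.coeff 0 : ℤ) : ZMod M)),
    fun _ => norm_stdAddChar _, fun i _ x => ?_⟩
  simp only [momentChar, ← AddChar.map_add_eq_mul, Equiv.coe_addRight]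
  congr 1
  rw [Polynomial.eval_eq_sum_range' (Nat.lt_succ_of_le hP), Finset.sum_range_succ',
    Finset.sum_range]
  push_cast
  simp only [Pi.add_apply, add_mul, Finset.sum_add_distrib, c, pow_zero, mul_one]
  ring

lemma classNormSum_le_of_card_residueClass_le_one {X ι : Type*} [Fintype X] (s : ℕ) {t : ι → ℤ}
    {F : ι → X → ℂ} {S : Finset ι} (hS : ∀ J, (residueClass M t S J).card ≤ 1)
    (hF : ∀ i x, ‖F i x‖ ≤ 1) :
    classNormSum M s t F S ≤ M * (Fintype.card X : ℝ) ^ ((1 : ℝ) / s) := by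
  have h_le_one : ∀ J x, ‖(∑ i ∈ residueClass M t S J, F i) x‖ ≤ 1 := fun J x => by
    rw [Finset.sum_apply]
    refine (norm_sum_le_of_le _ fun i _ => hF i x).trans ?_
    rw [Finset.sum_const, nsmul_one]
    exact_mod_cast hS J
  calc classNormSum M s t F S ≤ ∑ _J : ZMod M, (Fintype.card X : ℝ) ^ ((1 : ℝ) / s) := by
        refine Finset.sum_le_sum fun J _ => ?_
        refine Real.rpow_le_rpow (by positivity) ?_ (by positivity)
        refine (Finset.sum_le_card_nsmul _ _ 1 fun x _ => ?_).trans_eq (by simp)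
        exact pow_le_one₀ (norm_nonneg _) (h_le_one J x)
    _ = M * (Fintype.card X : ℝ) ^ ((1 : ℝ) / s) := by
        rw [Finset.sum_const, Finset.card_univ, ZMod.card, nsmul_eq_mul]

lemma DecouplingBound.sum_norm_sum_momentChar_pow_le {p g : ℕ} [Fact p.Prime] (hd : 0 < d) {D : ℝ}
    (hD : 0 ≤ D) (hDec : DecouplingBound p d g D) (hM : M = (p ^ g) ^ d) {h : ℕ} (hh : h ≤ p ^ g) :
    ∑ x : Fin d → ZMod M, ‖∑ i ∈ Finset.Icc 1 h, momentChar i x‖ ^ (2 * critExp d) ≤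
      (D * (p ^ g : ℕ)) ^ critExp d * (M : ℝ) ^ d := by
  obtain rfl : M = p ^ (d * g) := by rw [hM, pow_mul']
  have hs : critExp d ≠ 0 := (critExp_pos hd).ne'
  have h_card : (Fintype.card (Fin d → ZMod (p ^ (d * g))) : ℝ) = ((p ^ (d * g) : ℕ) : ℝ) ^ d := by
    simp
  calc _ = lpNormSq (critExp d)
          (∑ i ∈ Finset.Icc 1 h, momentChar (M := p ^ (d * g)) (d := d) i) ^ critExp d := by
        simp only [lpNormSq_pow (critExp_pos hd), Finset.sum_apply]
    _ ≤ (D * ((p ^ g : ℕ) * (Fintype.card (Fin d → ZMod (p ^ (d * g))) : ℝ) ^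
          ((1 : ℝ) / critExp d))) ^ critExp d := by
        refine pow_le_pow_left₀ (lpNormSq_nonneg _ _)
          ((hDec _ _ _ _ _ (isModulated_momentChar _)).trans ?_) _
        refine mul_le_mul_of_nonneg_left ?_ hD
        exact classNormSum_le_of_card_residueClass_le_one _ (card_residueClass_Icc_le_one hh)
          fun i x => (norm_momentChar i x).le
    _ = _ := by
        rw [← mul_assoc, mul_pow, one_div, Real.rpow_inv_natCast_pow (Nat.cast_nonneg _) hs, h_card]

lemma momentChar_natCast_eq_eC (i : ℕ) (y : Fin d → ℕ) :
    momentChar i (fun j => (y j : ZMod M)) = eC (∑ j, (y j : ℝ) / M * (i : ℝ) ^ ((j : ℕ) + 1)) := by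
  rw [momentChar, show ∑ j, (y j : ZMod M) * (i : ZMod M) ^ ((j : ℕ) + 1) =
    ((∑ j, (y j : ℤ) * (i : ℤ) ^ ((j : ℕ) + 1) : ℤ) : ZMod M) by push_cast; rfl,
    stdAddChar_intCast_eq_eC]
  push_cast
  rw [Finset.sum_div]
  simp only [div_mul_eq_mul_div]

end MeanValue

/-! ### From polynomial phases to collisions of coefficients -/

/-- The number of pairs of indices in `I` on which `c` takes the same value. -/
def collisionCount {ι β : Type*} [DecidableEq β] (I : Finset ι) (c : ι → β) : ℕ :=
  ((I ×ˢ I).filter fun q => c q.1 = c q.2).card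

section CollisionCount

variable {ι β : Type*} [DecidableEq β]

lemma collisionCount_eq_sum_sq (I : Finset ι) (c : ι → β) :
    collisionCount I c = ∑ v ∈ I.image c, (I.filter fun n => c n = v).card ^ 2 := by
  rw [collisionCount, Finset.card_eq_sum_card_fiberwise (f := fun q => c q.1) (t := I.image c)
    fun q hq => Finset.mem_image_of_mem c (Finset.mem_product.1 (Finset.mem_filter.1 hq).1).1]
  refine Finset.sum_congr rfl fun v _ => ?_
  rw [sq, ← Finset.card_product]
  congr 1
  ext ⟨a, b⟩
  simp only [Finset.mem_product, Finset.mem_filter]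
  constructor
  · rintro ⟨⟨⟨ha, hb⟩, hab⟩, hv⟩
    exact ⟨⟨ha, hv⟩, hb, hab ▸ hv⟩
  · rintro ⟨⟨ha, hv⟩, hb, hv'⟩
    exact ⟨⟨⟨ha, hb⟩, hv.trans hv'.symm⟩, hv⟩

lemma sum_comp_pow_le_collisionCount_mul (I : Finset ι) (c : ι → β) {s : ℕ} (hs : 0 < s)
    {G : β → ℝ} (hG : ∀ v, 0 ≤ G v) :
    (∑ n ∈ I, G (c n)) ^ (2 * s) ≤
      (I.card : ℝ) ^ (2 * s - 2) * collisionCount I c * ∑ v ∈ I.image c, G v ^ (2 * s) := by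
  obtain ⟨s, rfl⟩ := Nat.exists_eq_succ_of_ne_zero hs.ne'
  have h_power : (∑ n ∈ I, G (c n)) ^ (s + 1) ≤
      (I.card : ℝ) ^ s * ∑ n ∈ I, G (c n) ^ (s + 1) :=
    pow_sum_le_card_mul_sum_pow (fun n _ => hG _) s
  have h_fibres : ∑ n ∈ I, G (c n) ^ (s + 1) =
      ∑ v ∈ I.image c, ((I.filter fun n => c n = v).card : ℝ) * G v ^ (s + 1) := by
    rw [Finset.sum_comp (fun v => G v ^ (s + 1)) c]
    simp only [nsmul_eq_mul]
  have h_cauchy : (∑ n ∈ I, G (c n) ^ (s + 1)) ^ 2 ≤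
      collisionCount I c * ∑ v ∈ I.image c, (G v ^ (s + 1)) ^ 2 := by
    rw [h_fibres, collisionCount_eq_sum_sq]
    push_cast
    exact Finset.sum_mul_sq_le_sq_mul_sq _ _ _
  calc (∑ n ∈ I, G (c n)) ^ (2 * (s + 1)) = ((∑ n ∈ I, G (c n)) ^ (s + 1)) ^ 2 := by
        rw [← pow_mul, mul_comm]
    _ ≤ ((I.card : ℝ) ^ s * ∑ n ∈ I, G (c n) ^ (s + 1)) ^ 2 :=
        pow_le_pow_left₀ (pow_nonneg (Finset.sum_nonneg fun n _ => hG _) _) h_power 2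
    _ = (I.card : ℝ) ^ (2 * s) * (∑ n ∈ I, G (c n) ^ (s + 1)) ^ 2 := by
        rw [mul_pow, ← pow_mul, mul_comm s]
    _ ≤ (I.card : ℝ) ^ (2 * s) *
          (collisionCount I c * ∑ v ∈ I.image c, (G v ^ (s + 1)) ^ 2) := by gcongr
    _ = _ := by
        simp only [← pow_mul, mul_assoc, mul_comm (s + 1) 2, Nat.succ_eq_add_one, mul_add_one,
          Nat.add_sub_cancel]

lemma card_mul_pow_le_collisionCount_mul {ρ X : Type*} [Fintype ρ] [Fintype X] (I : Finset ι)
    (c : ι → β) {s : ℕ} (hs : 0 < s) {G : X → ℝ} (hG : ∀ x, 0 ≤ G x) {φ : β → ρ → X}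
    (hφ : ∀ n ∈ I, ∀ n' ∈ I, ∀ r r', φ (c n) r = φ (c n') r' → c n = c n' ∧ r = r') {T : ℝ}
    (hT₀ : 0 ≤ T) (hT : ∀ r, T ≤ ∑ n ∈ I, G (φ (c n) r)) :
    Fintype.card ρ * T ^ (2 * s) ≤
      (I.card : ℝ) ^ (2 * s - 2) * collisionCount I c * ∑ x, G x ^ (2 * s) := by
  have h_inj : Set.InjOn (fun q : ρ × β => φ q.2 q.1)
      (Finset.univ ×ˢ I.image c : Finset (ρ × β)) := by
    rintro ⟨r, v⟩ hq ⟨r', v'⟩ hq' h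
    simp only [Finset.coe_product, Set.mem_prod, Finset.mem_coe, Finset.mem_image] at hq hq'
    obtain ⟨-, n, hn, rfl⟩ := hq
    obtain ⟨-, n', hn', rfl⟩ := hq'
    obtain ⟨hv, hr⟩ := hφ n hn n' hn' r r' h
    exact Prod.ext hr hv
  calc (Fintype.card ρ : ℝ) * T ^ (2 * s) = ∑ _r : ρ, T ^ (2 * s) := by
        rw [Finset.sum_const, Finset.card_univ, nsmul_eq_mul]
    _ ≤ ∑ r : ρ, (I.card : ℝ) ^ (2 * s - 2) * collisionCount I c *
          ∑ v ∈ I.image c, G (φ v r) ^ (2 * s) :=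
        Finset.sum_le_sum fun r _ => (pow_le_pow_left₀ hT₀ (hT r) _).trans
          (sum_comp_pow_le_collisionCount_mul I c hs fun v => hG (φ v r))
    _ = (I.card : ℝ) ^ (2 * s - 2) * collisionCount I c *
          ∑ x ∈ (Finset.univ ×ˢ I.image c).image (fun q : ρ × β => φ q.2 q.1), G x ^ (2 * s) := by
        rw [← Finset.mul_sum, Finset.sum_image h_inj, Finset.sum_product]
    _ ≤ _ := by
        gcongr
        · exact fun x _ _ => pow_nonneg (hG x) _
        · exact Finset.subset_univ _

end CollisionCount

lemma norm_sum_mul_eC_le (H : ℕ) (a : ℕ → ℂ) {ψ : ℕ → ℝ} {κ : ℝ}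
    (hψ : ∀ h, 0 < h → h < H → |ψ (h + 1) - ψ h| ≤ κ) :
    ‖∑ h ∈ Finset.Icc 1 H, a h * eC (ψ h)‖ ≤ ‖∑ h ∈ Finset.Icc 1 H, a h‖ +
      2 * Real.pi * κ * ∑ h ∈ Finset.range H, ‖∑ i ∈ Finset.Icc 1 h, a i‖ := by
  have h_abel : ∀ n ≤ H, ‖∑ h ∈ Finset.Icc 1 n, a h * eC (ψ h) -
      (∑ h ∈ Finset.Icc 1 n, a h) * eC (ψ n)‖ ≤
      2 * Real.pi * κ * ∑ h ∈ Finset.range n, ‖∑ i ∈ Finset.Icc 1 h, a i‖ := by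
    intro n
    induction n with
    | zero => simp
    | succ n ih =>
      intro hn
      rw [Finset.sum_Icc_succ_top (by omega), Finset.sum_Icc_succ_top (by omega),
        Finset.sum_range_succ]
      set S := ∑ h ∈ Finset.Icc 1 n, a h with hS
      set T := ∑ h ∈ Finset.Icc 1 n, a h * eC (ψ h)
      rw [show T + a (n + 1) * eC (ψ (n + 1)) - (S + a (n + 1)) * eC (ψ (n + 1)) =
        (T - S * eC (ψ n)) - S * (eC (ψ (n + 1)) - eC (ψ n)) by ring, mul_add]
      refine (norm_sub_le _ _).trans (add_le_add (ih (by omega)) ?_)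
      rcases n.eq_zero_or_pos with rfl | hn0
      · simp [hS]
      · rw [norm_mul, mul_comm]
        gcongr
        refine (norm_eC_sub_le _ _).trans ?_
        gcongr
        exact hψ n hn0 hn
  set S := ∑ h ∈ Finset.Icc 1 H, a h
  set T := ∑ h ∈ Finset.Icc 1 H, a h * eC (ψ h)
  calc ‖T‖ = ‖S * eC (ψ H) + (T - S * eC (ψ H))‖ := by rw [add_sub_cancel]
    _ ≤ _ := (norm_add_le _ _).trans
        (add_le_add (by rw [norm_mul, norm_eC, mul_one]) (h_abel H le_rfl))

/-- The majorant `‖S_H(x)‖ + (C/H) ∑_{h < H} ‖S_h(x)‖`, with `S_h` the sum of the first `h` moment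
characters, which partial summation produces for a sum of length `H`. -/
def momentMajorant {M d : ℕ} [NeZero M] (H : ℕ) (C : ℝ) (x : Fin d → ZMod M) : ℝ :=
  ‖∑ i ∈ Finset.Icc 1 H, momentChar i x‖ +
    C / H * ∑ h ∈ Finset.range H, ‖∑ i ∈ Finset.Icc 1 h, momentChar i x‖

lemma momentMajorant_nonneg {M d : ℕ} [NeZero M] (H : ℕ) {C : ℝ} (hC : 0 ≤ C)
    (x : Fin d → ZMod M) : 0 ≤ momentMajorant H C x := by
  unfold momentMajorant
  positivity

lemma sum_weighted_sum_pow_le {X κ : Type*} [Fintype X] {n : ℕ} (hn : 0 < n) (T : Finset κ)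
    {w : κ → ℝ} (hw : ∀ i, 0 ≤ w i) {z : κ → X → ℝ} (hz : ∀ i x, 0 ≤ z i x) {E : ℝ} (hE₀ : 0 ≤ E)
    (hE : ∀ i ∈ T, ∑ x, z i x ^ n ≤ E) :
    ∑ x, (∑ i ∈ T, w i * z i x) ^ n ≤ (∑ i ∈ T, w i) ^ n * E := by
  have h_sum : ∀ i, 0 ≤ ∑ x, z i x ^ n := fun i =>
    Finset.sum_nonneg fun x _ => pow_nonneg (hz i x) n
  have h_total : 0 ≤ ∑ x, (∑ i ∈ T, w i * z i x) ^ n := Finset.sum_nonneg fun x _ =>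
    pow_nonneg (Finset.sum_nonneg fun i _ => mul_nonneg (hw i) (hz i x)) n
  have h_root : (∑ x, (∑ i ∈ T, w i * z i x) ^ n) ^ ((1 : ℝ) / n) ≤
      (∑ i ∈ T, w i) * E ^ ((1 : ℝ) / n) := by
    refine (sum_pow_rpow_one_div_le hn T fun i x => mul_nonneg (hw i) (hz i x)).trans ?_
    rw [Finset.sum_mul]
    refine Finset.sum_le_sum fun i hi => ?_
    simp only [mul_pow, ← Finset.mul_sum]
    rw [Real.mul_rpow (pow_nonneg (hw i) n) (h_sum i), one_div,
      Real.pow_rpow_inv_natCast (hw i) hn.ne']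
    exact mul_le_mul_of_nonneg_left
      (Real.rpow_le_rpow (h_sum i) (hE i hi) (by positivity)) (hw i)
  have h_pow := pow_le_pow_left₀ (Real.rpow_nonneg h_total _) h_root n
  rwa [one_div, mul_pow, Real.rpow_inv_natCast_pow h_total hn.ne',
    Real.rpow_inv_natCast_pow hE₀ hn.ne'] at h_pow

lemma sum_momentMajorant_pow_le {M d n H : ℕ} [NeZero M] (hn : 0 < n) (hH : 0 < H) {C E : ℝ}
    (hC : 0 ≤ C)
    (hE : ∀ h ≤ H, ∑ x : Fin d → ZMod M, ‖∑ i ∈ Finset.Icc 1 h, momentChar i x‖ ^ n ≤ E) :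
    ∑ x : Fin d → ZMod M, momentMajorant H C x ^ n ≤ (1 + C) ^ n * E := by
  let w : ℕ → ℝ := fun i => if i = H then 1 else C / H
  have hw : ∀ i, 0 ≤ w i := fun i => by dsimp only [w]; split_ifs <;> positivity
  have h_split : ∀ y : ℕ → ℝ, ∑ i ∈ Finset.range (H + 1), w i * y i =
      y H + C / H * ∑ i ∈ Finset.range H, y i := fun y => by
    rw [Finset.sum_range_succ, add_comm, Finset.mul_sum]
    congr 1
    · simp [w]
    · exact Finset.sum_congr rfl fun i hi => by simp [w, (Finset.mem_range.1 hi).ne]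
  have h_weight : ∑ i ∈ Finset.range (H + 1), w i = 1 + C := by
    have h_one := h_split fun _ => 1
    simp only [mul_one, Finset.sum_const, Finset.card_range, nsmul_one] at h_one
    rw [h_one, div_mul_cancel₀ _ (by positivity)]
  have hE₀ : 0 ≤ E := le_trans (by positivity) (hE 0 H.zero_le)
  have h_mean := sum_weighted_sum_pow_le hn (Finset.range (H + 1)) hw
    (z := fun h (x : Fin d → ZMod M) => ‖∑ i ∈ Finset.Icc 1 h, momentChar i x‖)
    (fun _ _ => norm_nonneg _) hE₀ fun h hh => hE h (Finset.mem_range_succ_iff.1 hh)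
  rw [h_weight] at h_mean
  simpa only [h_split, momentMajorant] using h_mean

/-- The index of the box `∏_j [c_j / H^{j+1}, (c_j + 1) / H^{j+1})` of the torus containing the
fractional parts of `α`. -/
def cell {d : ℕ} (H : ℕ) (α : Fin d → ℝ) (j : Fin d) : ℕ :=
  ⌊(H : ℝ) ^ ((j : ℕ) + 1) * Int.fract (α j)⌋₊

/-- The points of denominator `H^d` in the box of index `v`, enumerated by their offset `r` from
its lower corner. -/
def cellPoint {H d : ℕ} (v : Fin d → ℕ) (r : (j : Fin d) → Fin (H ^ (d - ((j : ℕ) + 1))))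
    (j : Fin d) : ℕ :=
  v j * H ^ (d - ((j : ℕ) + 1)) + r j

section Cell

variable {H d : ℕ}

lemma pow_succ_mul_pow_sub (H : ℕ) (j : Fin d) :
    H ^ ((j : ℕ) + 1) * H ^ (d - ((j : ℕ) + 1)) = H ^ d := by
  rw [← pow_add, Nat.add_sub_cancel' j.isLt]

lemma cell_lt (hH : 0 < H) (α : Fin d → ℝ) (j : Fin d) : cell H α j < H ^ ((j : ℕ) + 1) := by
  rw [cell, Nat.floor_lt (mul_nonneg (by positivity) (Int.fract_nonneg _)), Nat.cast_pow]
  exact mul_lt_of_lt_one_right (by positivity) (Int.fract_lt_one _)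

lemma cellPoint_lt {v : Fin d → ℕ} (hv : ∀ j, v j < H ^ ((j : ℕ) + 1))
    (r : (j : Fin d) → Fin (H ^ (d - ((j : ℕ) + 1)))) (j : Fin d) : cellPoint v r j < H ^ d :=
  calc cellPoint v r j < (v j + 1) * H ^ (d - ((j : ℕ) + 1)) := by
        rw [cellPoint, add_one_mul]
        exact Nat.add_lt_add_left (r j).isLt _
    _ ≤ H ^ ((j : ℕ) + 1) * H ^ (d - ((j : ℕ) + 1)) := Nat.mul_le_mul_right _ (hv j)
    _ = H ^ d := pow_succ_mul_pow_sub H j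

lemma eq_and_eq_of_cellPoint_eq {v v' : Fin d → ℕ}
    {r r' : (j : Fin d) → Fin (H ^ (d - ((j : ℕ) + 1)))}
    (hv : ∀ j, v j < H ^ ((j : ℕ) + 1)) (hv' : ∀ j, v' j < H ^ ((j : ℕ) + 1))
    (h : (fun j => (cellPoint v r j : ZMod (H ^ d))) =
      fun j => (cellPoint v' r' j : ZMod (H ^ d))) :
    v = v' ∧ r = r' := by
  have h_digits : ∀ j, v j = v' j ∧ r j = r' j := fun j => by
    have hB : 0 < H ^ (d - ((j : ℕ) + 1)) := (Nat.zero_le _).trans_lt (r j).isLt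
    have h_eq : cellPoint v r j = cellPoint v' r' j := by
      have h_mod := (ZMod.natCast_eq_natCast_iff' _ _ _).1 (congrFun h j)
      rwa [Nat.mod_eq_of_lt (cellPoint_lt hv r j), Nat.mod_eq_of_lt (cellPoint_lt hv' r' j)]
        at h_mod
    have h_rem := congrArg (· % H ^ (d - ((j : ℕ) + 1))) h_eq
    simp only [cellPoint, Nat.mul_add_mod', Nat.mod_eq_of_lt (r j).isLt,
      Nat.mod_eq_of_lt (r' j).isLt] at h_rem
    rw [cellPoint, cellPoint, h_rem] at h_eq
    exact ⟨Nat.eq_of_mul_eq_mul_right hB (Nat.add_right_cancel h_eq), Fin.ext h_rem⟩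
  exact ⟨funext fun j => (h_digits j).1, funext fun j => (h_digits j).2⟩

lemma prod_card_offsets_mul (H d : ℕ) :
    Fintype.card ((j : Fin d) → Fin (H ^ (d - ((j : ℕ) + 1)))) * H ^ critExp d = (H ^ d) ^ d := by
  have h_critExp : critExp d = ∑ j : Fin d, ((j : ℕ) + 1) := by
    rw [Fin.sum_univ_eq_sum_range (· + 1), ← add_zero (∑ i ∈ Finset.range d, (i + 1)),
      ← Finset.sum_range_succ' (fun i => i), Finset.sum_range_id, critExp, Nat.add_sub_cancel,
      mul_comm]
  rw [h_critExp, ← Finset.prod_pow_eq_pow_sum, Fintype.card_pi, ← Finset.prod_mul_distrib]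
  simp only [Fintype.card_fin, mul_comm (H ^ (d - _)), pow_succ_mul_pow_sub, Finset.prod_const,
    Finset.card_univ]

lemma pow_mul_abs_fract_sub_cellPoint_le (hH : 0 < H) (α : Fin d → ℝ)
    (r : (j : Fin d) → Fin (H ^ (d - ((j : ℕ) + 1)))) (j : Fin d) :
    (H : ℝ) ^ ((j : ℕ) + 1) *
      |Int.fract (α j) - cellPoint (cell H α) r j / (H ^ d : ℕ)| ≤ 1 := by
  have hB : (0 : ℝ) < (H ^ (d - ((j : ℕ) + 1)) : ℕ) := by positivity
  have h_scaled : (H : ℝ) ^ ((j : ℕ) + 1) * (cellPoint (cell H α) r j / (H ^ d : ℕ)) =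
      cell H α j + (r j : ℕ) / (H ^ (d - ((j : ℕ) + 1)) : ℕ) := by
    rw [cellPoint, ← pow_succ_mul_pow_sub H j]
    push_cast
    field_simp
  have h_floor := Nat.floor_le
    (a := (H : ℝ) ^ ((j : ℕ) + 1) * Int.fract (α j)) (by have := Int.fract_nonneg (α j); positivity)
  have h_lt_floor := Nat.lt_floor_add_one ((H : ℝ) ^ ((j : ℕ) + 1) * Int.fract (α j))
  have h_offset : ((r j : ℕ) : ℝ) / (H ^ (d - ((j : ℕ) + 1)) : ℕ) < 1 :=
    (div_lt_one hB).2 (by exact_mod_cast (r j).isLt)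
  have h_offset₀ : 0 ≤ ((r j : ℕ) : ℝ) / (H ^ (d - ((j : ℕ) + 1)) : ℕ) := by positivity
  rw [← abs_of_nonneg (by positivity : 0 ≤ (H : ℝ) ^ ((j : ℕ) + 1)), ← abs_mul, mul_sub,
    h_scaled, abs_le]
  rw [← cell] at h_floor h_lt_floor
  constructor <;> linarith

lemma abs_sum_mul_pow_succ_sub_le {θ : Fin d → ℝ}
    (hθ : ∀ j : Fin d, (H : ℝ) ^ ((j : ℕ) + 1) * |θ j| ≤ 1) {h : ℕ} (hh : h < H) :
    |∑ j, θ j * ((h + 1 : ℕ) : ℝ) ^ ((j : ℕ) + 1) -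
      ∑ j : Fin d, θ j * (h : ℝ) ^ ((j : ℕ) + 1)| ≤
      d ^ 2 / H := by
  have hH : (0 : ℝ) < H := by exact_mod_cast (Nat.zero_le h).trans_lt hh
  have hhH : (h : ℝ) + 1 ≤ H := by exact_mod_cast hh
  have h_term : ∀ j : Fin d,
      |θ j * (((h + 1 : ℕ) : ℝ) ^ ((j : ℕ) + 1) - (h : ℝ) ^ ((j : ℕ) + 1))| ≤ d / H := fun j => by
    have h_pow := abs_pow_sub_pow_le ((h : ℝ) + 1) h ((j : ℕ) + 1)
    rw [add_sub_cancel_left, abs_one, one_mul, abs_of_nonneg (by positivity : 0 ≤ (h : ℝ) + 1),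
      abs_of_nonneg (Nat.cast_nonneg h : (0 : ℝ) ≤ h), max_eq_left (by linarith),
      Nat.add_sub_cancel] at h_pow
    have hj : (((j : ℕ) + 1 : ℕ) : ℝ) ≤ d := by exact_mod_cast j.isLt
    rw [abs_mul, le_div_iff₀ hH, Nat.cast_add_one]
    calc _ ≤ |θ j| * ((((j : ℕ) + 1 : ℕ) : ℝ) * (H : ℝ) ^ (j : ℕ)) * H := by
          gcongr
          exact h_pow.trans (by gcongr)
      _ = (((j : ℕ) + 1 : ℕ) : ℝ) * ((H : ℝ) ^ ((j : ℕ) + 1) * |θ j|) := by ring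
      _ ≤ d * 1 := mul_le_mul hj (hθ j) (by positivity) (by positivity)
      _ = d := mul_one _
  rw [← Finset.sum_sub_distrib]
  simp only [← mul_sub]
  calc _ ≤ ∑ _j : Fin d, (d : ℝ) / H :=
        (Finset.abs_sum_le_sum_abs _ _).trans (Finset.sum_le_sum fun j _ => h_term j)
    _ = d ^ 2 / H := by
        rw [Finset.sum_const, Finset.card_univ, Fintype.card_fin, nsmul_eq_mul]
        ring

lemma eC_sum_eq_momentChar_mul {M : ℕ} [NeZero M] (α : Fin d → ℝ) (y : Fin d → ℕ) (h : ℕ) (ρ : ℝ) :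
    eC (∑ j, α j * (h : ℝ) ^ ((j : ℕ) + 1) + ρ) = momentChar h (fun j => (y j : ZMod M)) *
      eC (∑ j, (Int.fract (α j) - y j / M) * (h : ℝ) ^ ((j : ℕ) + 1) + ρ) := by
  symm
  rw [momentChar_natCast_eq_eC, ← eC_add,
    ← eC_add_intCast _ (∑ j, ⌊α j⌋ * (h : ℤ) ^ ((j : ℕ) + 1)), ← add_assoc,
    ← Finset.sum_add_distrib]
  push_cast
  rw [add_right_comm, ← Finset.sum_add_distrib]
  congr 2
  refine Finset.sum_congr rfl fun j _ => ?_
  rw [← add_mul, ← add_mul, add_sub_cancel, Int.fract_add_floor]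

lemma norm_sum_eC_le_momentMajorant [NeZero (H ^ d)] (hH : 0 < H) (α : Fin d → ℝ) {R : ℕ → ℝ}
    {A : ℝ} (hR : ∀ h, 0 < h → h < H → |R (h + 1) - R h| ≤ A / H)
    (r : (j : Fin d) → Fin (H ^ (d - ((j : ℕ) + 1)))) :
    ‖∑ h ∈ Finset.Icc 1 H, eC (∑ j, α j * (h : ℝ) ^ ((j : ℕ) + 1) + R h)‖ ≤
      momentMajorant H (2 * Real.pi * (d ^ 2 + A))
        (fun j => (cellPoint (cell H α) r j : ZMod (H ^ d))) := by
  simp only [eC_sum_eq_momentChar_mul (M := H ^ d) α (cellPoint (cell H α) r)]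
  refine (norm_sum_mul_eC_le H _ (κ := (d ^ 2 + A) / H) fun h h₀ hh => ?_).trans_eq ?_
  · rw [add_sub_add_comm, add_div]
    exact (abs_add_le _ _).trans (add_le_add (abs_sum_mul_pow_succ_sub_le
      (pow_mul_abs_fract_sub_cellPoint_le hH α r) hh) (hR h h₀ hh))
  · rw [momentMajorant, mul_div_assoc]

end Cell

/-- By partial summation the coefficients of each phase may be moved to any point of denominator
`H ^ d` in their box; averaging over these points turns the short sums into a full moment. -/
theorem DecouplingBound.sum_norm_sum_eC_pow_le {ι : Type*} {p d g : ℕ} [hp : Fact p.Prime]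
    (hd : 0 < d) {D : ℝ} (hD : 0 ≤ D) (hDec : DecouplingBound p d g D) {A : ℝ} (hA : 0 ≤ A)
    (I : Finset ι) (α : ι → Fin d → ℝ) {R : ι → ℕ → ℝ}
    (hR : ∀ n ∈ I, ∀ h, 0 < h → h < p ^ g → |R n (h + 1) - R n h| ≤ A / (p ^ g : ℕ)) :
    (∑ n ∈ I, ‖∑ h ∈ Finset.Icc 1 (p ^ g),
        eC (∑ j, α n j * (h : ℝ) ^ ((j : ℕ) + 1) + R n h)‖) ^ (2 * critExp d) ≤
      (I.card : ℝ) ^ (2 * critExp d - 2) * collisionCount I (fun n => cell (p ^ g) (α n)) *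
        ((1 + 2 * Real.pi * (d ^ 2 + A)) ^ 2 * D * ((p ^ g : ℕ) : ℝ) ^ 2) ^ critExp d := by
  have hs := critExp_pos hd
  have hH : 0 < p ^ g := pow_pos hp.out.pos g
  set H := p ^ g with hH_def
  have : NeZero (H ^ d) := ⟨(pow_pos hH d).ne'⟩
  set C := 2 * Real.pi * (d ^ 2 + A) with hC_def
  have hC : 0 ≤ C := by positivity
  set V := Fintype.card ((j : Fin d) → Fin (H ^ (d - ((j : ℕ) + 1))))
  have hV : (V : ℝ) * (H : ℝ) ^ critExp d = ((H ^ d : ℕ) : ℝ) ^ d := by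
    exact_mod_cast prod_card_offsets_mul H d
  have hV₀ : (0 : ℝ) < V := by
    refine pos_of_mul_pos_left (hV ▸ ?_) (by positivity : 0 ≤ (H : ℝ) ^ critExp d)
    positivity
  have h_average := card_mul_pow_le_collisionCount_mul I (fun n => cell H (α n)) hs
    (momentMajorant_nonneg (M := H ^ d) (d := d) H hC)
    (φ := fun v r j => (cellPoint v r j : ZMod (H ^ d)))
    (fun n _ n' _ r r' => eq_and_eq_of_cellPoint_eq (cell_lt hH _) (cell_lt hH _))
    (Finset.sum_nonneg fun n _ => norm_nonneg _) fun r => Finset.sum_le_sum fun n hn =>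
      norm_sum_eC_le_momentMajorant hH (α n) (hR n hn) r
  have h_moment := sum_momentMajorant_pow_le (M := H ^ d) (d := d) (n := 2 * critExp d) (by omega)
    hH hC fun h hh => hDec.sum_norm_sum_momentChar_pow_le hd hD rfl hh
  refine le_of_mul_le_mul_left (h_average.trans
    ((mul_le_mul_of_nonneg_left h_moment (by positivity)).trans_eq ?_)) hV₀
  rw [← hV, pow_mul (1 + C), mul_pow _ _ (critExp d), mul_pow _ _ (critExp d),
    mul_pow _ _ (critExp d)]
  ring

/-! ### Counting collisions -/

section Spacing

lemma sub_le_mul_of_increment_le {J : Finset ℤ} {φ : ℤ → ℝ} {κ X : ℝ} (hκ : 0 ≤ κ)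
    (hX : ∀ m ∈ J, ∀ n ∈ J, (m : ℝ) - n ≤ X)
    (hφ : ∀ m ∈ J, ∀ n ∈ J, n < m → 0 ≤ φ m - φ n ∧ φ m - φ n ≤ κ * ((m : ℝ) - n)) :
    ∀ m ∈ J, ∀ n ∈ J, φ m - φ n ≤ κ * X := by
  intro m hm n hn
  have hX₀ : 0 ≤ X := sub_self (m : ℝ) ▸ hX m hm m hm
  rcases lt_trichotomy n m with h | rfl | h
  · exact (hφ m hm n hn h).2.trans (mul_le_mul_of_nonneg_left (hX m hm n hn) hκ)
  · rw [sub_self]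
    positivity
  · linarith [(hφ n hn m hm h).1, mul_nonneg hκ hX₀]

lemma card_Icc_eq_sub_add_one {a b : ℤ} (hab : a ≤ b) :
    ((Finset.Icc a b).card : ℝ) = b - a + 1 := by
  have h : ((Finset.Icc a b).card : ℤ) = b - a + 1 := by
    rw [Int.card_Icc, Int.toNat_of_nonneg (by omega)]
    ring
  exact_mod_cast h

lemma card_Ioc_eq_sub {a b : ℤ} (hab : a ≤ b) : ((Finset.Ioc a b).card : ℝ) = b - a := by
  have h : ((Finset.Ioc a b).card : ℤ) = b - a := by
    rw [Int.card_Ioc, Int.toNat_of_nonneg (by omega)]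
  exact_mod_cast h

lemma card_image_floor_le {ι : Type*} (J : Finset ι) {a : ι → ℝ} {B : ℝ} (hB : 0 ≤ B)
    (h : ∀ m ∈ J, ∀ n ∈ J, a m - a n ≤ B) : ((J.image fun n => ⌊a n⌋).card : ℝ) ≤ B + 2 := by
  rcases J.eq_empty_or_nonempty with rfl | h_nonempty
  · simpa using add_nonneg hB zero_le_two
  obtain ⟨m₀, hm₀, h_min⟩ := Finset.exists_min_image J a h_nonempty
  obtain ⟨m₁, hm₁, h_max⟩ := Finset.exists_max_image J a h_nonempty
  have h_sub : (J.image fun n => ⌊a n⌋) ⊆ Finset.Icc ⌊a m₀⌋ ⌊a m₁⌋ :=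
    Finset.image_subset_iff.2 fun n hn =>
      Finset.mem_Icc.2 ⟨Int.floor_mono (h_min n hn), Int.floor_mono (h_max n hn)⟩
  calc ((J.image fun n => ⌊a n⌋).card : ℝ) ≤ (Finset.Icc ⌊a m₀⌋ ⌊a m₁⌋).card := by
        exact_mod_cast Finset.card_le_card h_sub
    _ = ⌊a m₁⌋ - ⌊a m₀⌋ + 1 := card_Icc_eq_sub_add_one (Int.floor_mono (h_min m₁ hm₁))
    _ ≤ B + 2 := by
        linarith [Int.floor_le (a m₁), Int.lt_floor_add_one (a m₀), h m₁ hm₁ m₀ hm₀]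

lemma card_le_div_add_one (J : Finset ℤ) {η B : ℝ} (hη : 0 < η) (hB : 0 ≤ B)
    (h : ∀ m ∈ J, ∀ n ∈ J, n < m → η * ((m : ℝ) - n) ≤ B) : (J.card : ℝ) ≤ B / η + 1 := by
  rcases J.eq_empty_or_nonempty with rfl | h_nonempty
  · rw [Finset.card_empty, Nat.cast_zero]
    positivity
  set m₀ := J.min' h_nonempty
  set m₁ := J.max' h_nonempty
  have h_le : m₀ ≤ m₁ := J.min'_le _ (J.max'_mem h_nonempty)
  have h_diam : (m₁ : ℝ) - m₀ ≤ B / η := by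
    rcases h_le.eq_or_lt with h_eq | h_lt
    · rw [h_eq, sub_self]
      positivity
    · rw [le_div_iff₀' hη]
      exact h m₁ (J.max'_mem _) m₀ (J.min'_mem _) h_lt
  calc (J.card : ℝ) ≤ (Finset.Icc m₀ m₁).card := by
        exact_mod_cast Finset.card_le_card fun z hz =>
          Finset.mem_Icc.2 ⟨J.min'_le z hz, J.le_max' z hz⟩
    _ = m₁ - m₀ + 1 := card_Icc_eq_sub_add_one h_le
    _ ≤ B / η + 1 := by gcongr

lemma card_le_of_forall_near_int (J : Finset ℤ) {φ : ℤ → ℝ} {η B τ : ℝ} (hη : 0 < η)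
    (hB : 0 ≤ B) (hτ : 0 ≤ τ)
    (h_slope : ∀ m ∈ J, ∀ n ∈ J, n < m → η * ((m : ℝ) - n) ≤ φ m - φ n)
    (h_range : ∀ m ∈ J, ∀ n ∈ J, φ m - φ n ≤ B) (h_near : ∀ n ∈ J, ∃ w : ℤ, |φ n - w| ≤ τ) :
    (J.card : ℝ) ≤ (B + 2) * (2 * τ / η + 1) := by
  set T := J.image fun n => round (φ n)
  have h_image : (T.card : ℝ) ≤ B + 2 := by
    simpa only [T, round_eq] using card_image_floor_le J (a := fun n => φ n + 1 / 2) hB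
      fun m hm n hn => by linarith [h_range m hm n hn]
  have h_round : ∀ n ∈ J, |φ n - round (φ n)| ≤ τ := fun n hn =>
    let ⟨w, hw⟩ := h_near n hn
    (round_le _ w).trans hw
  have h_fibre : ∀ w ∈ T, ((J.filter fun n => round (φ n) = w).card : ℝ) ≤ 2 * τ / η + 1 := by
    refine fun w _ => card_le_div_add_one _ hη (by positivity) fun m hm n hn hnm => ?_
    obtain ⟨hmJ, hmw⟩ := Finset.mem_filter.1 hm
    obtain ⟨hnJ, hnw⟩ := Finset.mem_filter.1 hn
    have hm_near := abs_le.1 (hmw ▸ h_round m hmJ)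
    have hn_near := abs_le.1 (hnw ▸ h_round n hnJ)
    linarith [h_slope m hmJ n hnJ hnm, hm_near.2, hn_near.1]
  calc (J.card : ℝ) = ∑ w ∈ T, ((J.filter fun n => round (φ n) = w).card : ℝ) := by
        rw [← Nat.cast_sum, Finset.card_eq_sum_card_image fun n => round (φ n)]
    _ ≤ T.card * (2 * τ / η + 1) := by
        rw [← nsmul_eq_mul]
        exact Finset.sum_le_card_nsmul _ _ _ h_fibre
    _ ≤ (B + 2) * (2 * τ / η + 1) := by gcongr

lemma sum_Icc_inv_le_one_add_log {Δ : ℝ} (hΔ : 1 ≤ Δ) :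
    ∑ δ ∈ Finset.Icc 1 ⌊Δ⌋₊, (δ : ℝ)⁻¹ ≤ 1 + Real.log Δ := by
  have h_harmonic := harmonic_le_one_add_log ⌊Δ⌋₊
  rw [harmonic_eq_sum_Icc] at h_harmonic
  push_cast at h_harmonic
  refine h_harmonic.trans (add_le_add_right (Real.log_le_log ?_ (Nat.floor_le (by linarith))) 1)
  exact_mod_cast Nat.floor_pos.2 hΔ

end Spacing

section Collisions

variable {ι β γ : Type*} [DecidableEq β] [DecidableEq γ]

lemma collisionCount_le_card_image_mul (I : Finset ι) (c : ι → β) (z : ι → γ) :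
    collisionCount I c ≤ (I.image z).card * collisionCount I fun n => (c n, z n) := by
  have h_refine : collisionCount I (fun n => (c n, z n)) =
      ∑ v ∈ I.image c, collisionCount (I.filter fun n => c n = v) z := by
    rw [collisionCount, Finset.card_eq_sum_card_fiberwise (f := fun q => c q.1) (t := I.image c)]
    · refine Finset.sum_congr rfl fun v _ => congrArg _ ?_
      ext ⟨m, n⟩
      simp only [Finset.mem_filter, Finset.mem_product, Prod.mk.injEq]
      grind
    · exact fun q hq => Finset.mem_coe.2 (Finset.mem_image_of_mem c
        (Finset.mem_product.1 (Finset.mem_filter.1 hq).1).1)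
  rw [h_refine, collisionCount_eq_sum_sq, Finset.mul_sum]
  refine Finset.sum_le_sum fun v _ => ?_
  rw [collisionCount_eq_sum_sq, Finset.card_eq_sum_card_image z (I.filter fun n => c n = v)]
  exact sq_sum_le_card_mul_sum_sq.trans (Nat.mul_le_mul_right _
    (Finset.card_le_card (Finset.image_subset_image (Finset.filter_subset _ _))))

lemma collisionCount_Ioc_le {K L : ℤ} {c : ℤ → β} {M : ℕ}
    (h : ∀ m ∈ Finset.Ioc K L, ∀ n ∈ Finset.Ioc K L, n < m → c m = c n → m - n ≤ M) :
    collisionCount (Finset.Ioc K L) c ≤ (Finset.Ioc K L).card +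
      2 * ∑ δ ∈ Finset.Icc 1 M, ((Finset.Ioc K (L - δ)).filter fun n => c (n + δ) = c n).card := by
  set J : ℕ → Finset ℤ := fun δ => (Finset.Ioc K (L - δ)).filter fun n => c (n + δ) = c n
  have h_shift : ∀ m ∈ Finset.Ioc K L, ∀ n ∈ Finset.Ioc K L, n < m → c m = c n →
      ∃ δ ∈ Finset.Icc 1 M, n ∈ J δ ∧ n + (δ : ℤ) = m := by
    intro m hm n hn hnm hmn
    obtain ⟨δ, rfl⟩ : ∃ δ : ℕ, m = n + (δ : ℤ) := ⟨(m - n).toNat, by omega⟩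
    have h_diff := h _ hm n hn hnm hmn
    rw [Finset.mem_Ioc] at hm hn
    refine ⟨δ, Finset.mem_Icc.2 ⟨by omega, by omega⟩, ?_, rfl⟩
    exact Finset.mem_filter.2 ⟨Finset.mem_Ioc.2 ⟨hn.1, by omega⟩, hmn⟩
  have h_cover : (((Finset.Ioc K L) ×ˢ (Finset.Ioc K L)).filter fun q => c q.1 = c q.2) ⊆
      (Finset.Ioc K L).image (fun n => (n, n)) ∪
        (((Finset.Icc 1 M).biUnion fun δ => (J δ).image fun n => (n + (δ : ℤ), n)) ∪
          (Finset.Icc 1 M).biUnion fun δ => (J δ).image fun n => (n, n + (δ : ℤ))) := by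
    rintro ⟨m, n⟩ hq
    simp only [Finset.mem_filter, Finset.mem_product] at hq
    obtain ⟨⟨hm, hn⟩, hmn⟩ := hq
    simp only [Finset.mem_union, Finset.mem_biUnion, Finset.mem_image, Prod.mk.injEq]
    rcases lt_trichotomy n m with hnm | rfl | hnm
    · obtain ⟨δ, hδ, hnJ, h_eq⟩ := h_shift m hm n hn hnm hmn
      exact Or.inr (Or.inl ⟨δ, hδ, n, hnJ, h_eq, rfl⟩)
    · exact Or.inl ⟨n, hn, rfl, rfl⟩
    · obtain ⟨δ, hδ, hmJ, h_eq⟩ := h_shift n hn m hm hnm hmn.symm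
      exact Or.inr (Or.inr ⟨δ, hδ, m, hmJ, rfl, h_eq⟩)
  have h_biUnion : ∀ G : ℕ → ℤ → ℤ × ℤ,
      ((Finset.Icc 1 M).biUnion fun δ => (J δ).image (G δ)).card ≤
        ∑ δ ∈ Finset.Icc 1 M, (J δ).card := fun G =>
    Finset.card_biUnion_le.trans (Finset.sum_le_sum fun _ _ => Finset.card_image_le)
  rw [two_mul]
  exact (Finset.card_le_card h_cover).trans <| (Finset.card_union_le _ _).trans <|
    add_le_add Finset.card_image_le <| (Finset.card_union_le _ _).trans <|
      add_le_add (h_biUnion _) (h_biUnion _)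

end Collisions

section SecondDifference

variable {K L : ℤ} {b : ℤ → ℝ} {A ν τ : ℝ}

lemma card_le_of_second_difference (hA : 0 ≤ A) (hν : 0 < ν) (hτ : 0 ≤ τ) (hKL : K ≤ L)
    {δ : ℕ} (hδ : 0 < δ)
    (hb : ∀ m n : ℤ, K < n → n < m → m + δ ≤ L →
      ν * δ * ((m : ℝ) - n) ≤ (b (m + δ) - b m) - (b (n + δ) - b n) ∧
      (b (m + δ) - b m) - (b (n + δ) - b n) ≤ A * (ν * δ) * ((m : ℝ) - n))
    {J : Finset ℤ} (hJ : J ⊆ Finset.Ioc K (L - δ))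
    (h_near : ∀ n ∈ J, ∃ w : ℤ, |b (n + δ) - b n - w| ≤ τ) :
    (J.card : ℝ) ≤ 2 * A * ((L : ℝ) - K) * τ + 2 + A * ν * ((L : ℝ) - K) * δ +
      4 * τ / ν * (δ : ℝ)⁻¹ := by
  have hδ' : (0 : ℝ) < δ := by exact_mod_cast hδ
  have hX : (0 : ℝ) ≤ (L : ℝ) - K := sub_nonneg.2 (by exact_mod_cast hKL)
  have h_diff : ∀ m ∈ J, ∀ n ∈ J, (m : ℝ) - n ≤ (L : ℝ) - K := by
    intro m hm n hn
    have hmL := (Finset.mem_Ioc.1 (hJ hm)).2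
    have hKn := (Finset.mem_Ioc.1 (hJ hn)).1
    exact_mod_cast (by omega : m - n ≤ L - K)
  have h_slope : ∀ m ∈ J, ∀ n ∈ J, n < m → _ := fun m hm n hn hnm =>
    hb m n (Finset.mem_Ioc.1 (hJ hn)).1 hnm (by have := (Finset.mem_Ioc.1 (hJ hm)).2; omega)
  have h_range := sub_le_mul_of_increment_le (φ := fun n => b (n + δ) - b n) (by positivity) h_diff
    fun m hm n hn hnm => ⟨le_trans (mul_nonneg (by positivity)
      (sub_nonneg.2 (by exact_mod_cast hnm.le))) (h_slope m hm n hn hnm).1,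
      (h_slope m hm n hn hnm).2⟩
  refine (card_le_of_forall_near_int J (mul_pos hν hδ') (by positivity) hτ
    (fun m hm n hn hnm => (h_slope m hm n hn hnm).1) h_range h_near).trans_eq ?_
  field_simp
  ring

lemma collisionCount_Ioc_le_of_second_difference {β : Type*} [DecidableEq β] {c : ℤ → β} {Δ : ℝ}
    (hKL : K ≤ L) (hA : 0 ≤ A) (hν : 0 < ν) (hΔ : 1 ≤ Δ) (hτ : 0 ≤ τ)
    (hb : ∀ δ : ℕ, 0 < δ → ∀ m n : ℤ, K < n → n < m → m + δ ≤ L →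
      ν * δ * ((m : ℝ) - n) ≤ (b (m + δ) - b m) - (b (n + δ) - b n) ∧
      (b (m + δ) - b m) - (b (n + δ) - b n) ≤ A * (ν * δ) * ((m : ℝ) - n))
    (hc : ∀ m ∈ Finset.Ioc K L, ∀ n ∈ Finset.Ioc K L, n < m → c m = c n →
      (m : ℝ) - n ≤ Δ ∧ ∃ w : ℤ, |b m - b n - w| ≤ τ) :
    (collisionCount (Finset.Ioc K L) c : ℝ) ≤
      ((L : ℝ) - K) + 2 * (Δ * (2 * A * ((L : ℝ) - K) * τ + 2) +
        A * ν * ((L : ℝ) - K) * Δ ^ 2 + 4 * τ / ν * (1 + Real.log Δ)) := by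
  set X : ℝ := (L : ℝ) - K with hX_def
  have hX : 0 ≤ X := sub_nonneg.2 (by exact_mod_cast hKL)
  have hΔ_floor : (⌊Δ⌋₊ : ℝ) ≤ Δ := Nat.floor_le (by linarith)
  set J : ℕ → Finset ℤ := fun δ => (Finset.Ioc K (L - δ)).filter fun n => c (n + δ) = c n
  have h_pairs : (collisionCount (Finset.Ioc K L) c : ℝ) ≤
      X + 2 * ∑ δ ∈ Finset.Icc 1 ⌊Δ⌋₊, ((J δ).card : ℝ) := by
    rw [hX_def, ← card_Ioc_eq_sub hKL]
    exact_mod_cast collisionCount_Ioc_le fun m hm n hn hnm h_eq => by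
      have h_le := Int.le_floor.2
        (by exact_mod_cast (hc m hm n hn hnm h_eq).1 : ((m - n : ℤ) : ℝ) ≤ Δ)
      rwa [← Int.natCast_floor_eq_floor (by linarith)] at h_le
  have h_shift : ∀ δ ∈ Finset.Icc 1 ⌊Δ⌋₊, ((J δ).card : ℝ) ≤
      2 * A * X * τ + 2 + A * ν * X * Δ + 4 * τ / ν * (δ : ℝ)⁻¹ := by
    intro δ hδ
    obtain ⟨hδ₁, hδ₂⟩ := Finset.mem_Icc.1 hδ
    have hδΔ : (δ : ℝ) ≤ Δ := (Nat.cast_le.2 hδ₂).trans hΔ_floor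
    refine (card_le_of_second_difference hA hν hτ hKL hδ₁ (hb δ hδ₁) (Finset.filter_subset _ _)
      fun n hn => ?_).trans (by gcongr)
    rw [Finset.mem_filter, Finset.mem_Ioc] at hn
    exact (hc (n + δ) (Finset.mem_Ioc.2 ⟨by omega, by omega⟩) n
      (Finset.mem_Ioc.2 ⟨by omega, by omega⟩) (by omega) hn.2).2
  refine h_pairs.trans ?_
  gcongr
  calc ∑ δ ∈ Finset.Icc 1 ⌊Δ⌋₊, ((J δ).card : ℝ)
      ≤ (⌊Δ⌋₊ : ℝ) * (2 * A * X * τ + 2 + A * ν * X * Δ) +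
          4 * τ / ν * ∑ δ ∈ Finset.Icc 1 ⌊Δ⌋₊, (δ : ℝ)⁻¹ := by
        refine (Finset.sum_le_sum h_shift).trans_eq ?_
        rw [Finset.sum_add_distrib, Finset.sum_const, Nat.card_Icc, nsmul_eq_mul,
          ← Finset.mul_sum, Nat.add_sub_cancel]
    _ ≤ Δ * (2 * A * X * τ + 2 + A * ν * X * Δ) + 4 * τ / ν * (1 + Real.log Δ) := by
        gcongr
        exact sum_Icc_inv_le_one_add_log hΔ
    _ = _ := by ring

lemma collisionCount_Ioc_le_of_spacing {β : Type*} [DecidableEq β] {c : ℤ → β} {a : ℤ → ℝ}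
    {μ Δ : ℝ} (hKL : K ≤ L) (hA : 0 ≤ A) (hμ : 0 ≤ μ) (hν : 0 < ν) (hΔ : 1 ≤ Δ) (hτ : 0 ≤ τ)
    (ha : ∀ m ∈ Finset.Ioc K L, ∀ n ∈ Finset.Ioc K L, n < m →
      0 ≤ a m - a n ∧ a m - a n ≤ A * μ * ((m : ℝ) - n))
    (hb : ∀ δ : ℕ, 0 < δ → ∀ m n : ℤ, K < n → n < m → m + δ ≤ L →
      ν * δ * ((m : ℝ) - n) ≤ (b (m + δ) - b m) - (b (n + δ) - b n) ∧
      (b (m + δ) - b m) - (b (n + δ) - b n) ≤ A * (ν * δ) * ((m : ℝ) - n))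
    (hc : ∀ m ∈ Finset.Ioc K L, ∀ n ∈ Finset.Ioc K L, n < m → c m = c n → ⌊a m⌋ = ⌊a n⌋ →
      (m : ℝ) - n ≤ Δ ∧ ∃ w : ℤ, |b m - b n - w| ≤ τ) :
    (collisionCount (Finset.Ioc K L) c : ℝ) ≤
      (A * μ * ((L : ℝ) - K) + 2) * (((L : ℝ) - K) + 2 * (Δ * (2 * A * ((L : ℝ) - K) * τ + 2) +
        A * ν * ((L : ℝ) - K) * Δ ^ 2 + 4 * τ / ν * (1 + Real.log Δ))) := by
  have hX : (0 : ℝ) ≤ (L : ℝ) - K := sub_nonneg.2 (by exact_mod_cast hKL)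
  have h_image : (((Finset.Ioc K L).image fun n => ⌊a n⌋).card : ℝ) ≤
      A * μ * ((L : ℝ) - K) + 2 := by
    refine card_image_floor_le _ (by positivity)
      (sub_le_mul_of_increment_le (by positivity) (fun m hm n hn => ?_) ha)
    rw [Finset.mem_Ioc] at hm hn
    exact_mod_cast (by omega : m - n ≤ L - K)
  calc (collisionCount (Finset.Ioc K L) c : ℝ)
      ≤ ((Finset.Ioc K L).image fun n => ⌊a n⌋).card *
          collisionCount (Finset.Ioc K L) fun n => (c n, ⌊a n⌋) := by
        exact_mod_cast collisionCount_le_card_image_mul _ c fun n => ⌊a n⌋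
    _ ≤ _ := mul_le_mul h_image
        (collisionCount_Ioc_le_of_second_difference hKL hA hν hΔ hτ hb
          fun m hm n hn hnm h_eq => hc m hm n hn hnm (Prod.mk.inj h_eq).1 (Prod.mk.inj h_eq).2)
        (Nat.cast_nonneg _) (by positivity)

end SecondDifference

/-! ### Taylor expansion -/

section Taylor

/-- `F 0, …, F k` are successive derivatives on `s`; carrying the family along avoids iterated
derivatives relative to varying subintervals. -/
def IsDerivChainOn (k : ℕ) (F : ℕ → ℝ → ℝ) (s : Set ℝ) : Prop :=
  ∀ j < k, ∀ x ∈ s, HasDerivWithinAt (F j) (F (j + 1) x) s x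

/-- The Taylor polynomial at `a`, of degree less than `k`, with derivatives `c 0, c 1, …`
at `a`. -/
def taylorSum (c : ℕ → ℝ) (a : ℝ) (k : ℕ) (x : ℝ) : ℝ :=
  ∑ j ∈ Finset.range k, c j * ((x - a) ^ j / (j.factorial : ℝ))

variable {k : ℕ} {F : ℕ → ℝ → ℝ} {s t : Set ℝ} {a x y B l : ℝ}

lemma IsDerivChainOn.mono (hF : IsDerivChainOn k F s) (hts : t ⊆ s) : IsDerivChainOn k F t :=
  fun j hj x hx => (hF j hj x (hts hx)).mono hts

lemma IsDerivChainOn.shift (hF : IsDerivChainOn (k + 1) F s) :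
    IsDerivChainOn k (fun j => F (j + 1)) s :=
  fun j hj => hF (j + 1) (Nat.succ_lt_succ hj)

lemma IsDerivChainOn.neg (hF : IsDerivChainOn k F s) : IsDerivChainOn k (fun j x => -F j x) s :=
  fun j hj x hx => (hF j hj x hx).fun_neg

lemma isDerivChainOn_iteratedDerivWithin {f : ℝ → ℝ} (hf : ContDiffOn ℝ k f s)
    (hs : UniqueDiffOn ℝ s) : IsDerivChainOn k (fun j => iteratedDerivWithin j f s) s := by
  intro j hj x hx
  simp only [iteratedDerivWithin_succ]
  exact (hf.differentiableOn_iteratedDerivWithin (by exact_mod_cast hj) hs x hx).hasDerivWithinAt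

lemma taylorSum_succ_self (c : ℕ → ℝ) (a : ℝ) (k : ℕ) : taylorSum c a (k + 1) a = c 0 := by
  simp [taylorSum, Finset.sum_range_succ']

lemma taylorSum_add (c : ℕ → ℝ) (a : ℝ) (k : ℕ) (h : ℝ) :
    taylorSum c a (k + 1) (a + h) = ∑ j : Fin k,
      c ((j : ℕ) + 1) / (((j : ℕ) + 1).factorial : ℝ) * h ^ ((j : ℕ) + 1) + c 0 := by
  rw [taylorSum, Finset.sum_range_succ', Finset.sum_range]
  simp only [add_sub_cancel_left, pow_zero, Nat.factorial_zero, Nat.cast_one, div_one, mul_one]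
  congr 1
  exact Finset.sum_congr rfl fun j _ => (mul_div_left_comm _ _ _).trans (mul_comm _ _)

lemma hasDerivAt_taylorSum (c : ℕ → ℝ) (a : ℝ) (k : ℕ) (x : ℝ) :
    HasDerivAt (taylorSum c a (k + 1)) (taylorSum (fun j => c (j + 1)) a k x) x := by
  have h_monomial : ∀ j : ℕ, HasDerivAt
      (fun x : ℝ => c (j + 1) * ((x - a) ^ (j + 1) / ((j + 1).factorial : ℝ)))
      (c (j + 1) * ((x - a) ^ j / (j.factorial : ℝ))) x := by
    intro j
    refine (((((hasDerivAt_id x).sub_const a).pow (j + 1)).div_const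
      ((j + 1).factorial : ℝ)).const_mul (c (j + 1))).congr_deriv ?_
    rw [Nat.factorial_succ]
    push_cast
    simp only [id]
    field_simp
  have h_split : taylorSum c a (k + 1) = fun x => ∑ j ∈ Finset.range k,
      c (j + 1) * ((x - a) ^ (j + 1) / ((j + 1).factorial : ℝ)) + c 0 := by
    funext x
    simp [taylorSum, Finset.sum_range_succ']
  rw [h_split]
  exact (HasDerivAt.fun_sum fun j _ => h_monomial j).add_const _

lemma IsDerivChainOn.hasDerivWithinAt_sub_taylorSum (hF : IsDerivChainOn (k + 1) F s)
    (hx : x ∈ s) :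
    HasDerivWithinAt (fun x => F 0 x - taylorSum (fun j => F j a) a (k + 1) x)
      (F 1 x - taylorSum (fun j => F (j + 1) a) a k x) s x :=
  (hF 0 k.succ_pos x hx).sub (hasDerivAt_taylorSum _ a k x).hasDerivWithinAt

lemma IsDerivChainOn.abs_sub_taylorSum_le (hF : IsDerivChainOn k F s) (hs : Convex ℝ s)
    (hB : ∀ x ∈ s, |F k x| ≤ B) (ha : a ∈ s) (hl : ∀ x ∈ s, |x - a| ≤ l) (hx : x ∈ s) :
    |F 0 x - taylorSum (fun j => F j a) a k x| ≤ B * l ^ k := by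
  induction k generalizing F x with
  | zero => simpa [taylorSum] using hB x hx
  | succ k ih =>
    have hB₀ : 0 ≤ B := (abs_nonneg _).trans (hB a ha)
    have hl₀ : 0 ≤ l := (abs_nonneg _).trans (hl a ha)
    have h_mean := hs.norm_image_sub_le_of_norm_hasDerivWithin_le
      (fun y hy => hF.hasDerivWithinAt_sub_taylorSum (a := a) hy)
      (fun y hy => ih hF.shift hB hy) ha hx
    rw [taylorSum_succ_self, sub_self, sub_zero] at h_mean
    refine h_mean.trans ?_
    rw [pow_succ, ← mul_assoc]
    exact mul_le_mul_of_nonneg_left (hl x hx) (by positivity)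

lemma IsDerivChainOn.abs_sub_taylorSum_sub_le (hF : IsDerivChainOn (k + 1) F s)
    (hs : Convex ℝ s) (hB : ∀ x ∈ s, |F (k + 1) x| ≤ B) (ha : a ∈ s)
    (hl : ∀ x ∈ s, |x - a| ≤ l) (hx : x ∈ s) (hy : y ∈ s) :
    |(F 0 y - taylorSum (fun j => F j a) a (k + 1) y) -
        (F 0 x - taylorSum (fun j => F j a) a (k + 1) x)| ≤ B * l ^ k * |y - x| :=
  hs.norm_image_sub_le_of_norm_hasDerivWithin_le
    (fun _ hz => hF.hasDerivWithinAt_sub_taylorSum hz)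
    (fun _ hz => hF.shift.abs_sub_taylorSum_le hs hB ha hl hz) hx hy

end Taylor

section Increments

variable {g g' : ℝ → ℝ} {s : Set ℝ} {lo hi x y : ℝ}

lemma image_sub_mem_Icc_of_hasDerivWithinAt (hs : Convex ℝ s)
    (hg : ∀ t ∈ s, HasDerivWithinAt g (g' t) s t) (hg' : ∀ t ∈ s, g' t ∈ Set.Icc lo hi)
    (hx : x ∈ s) (hy : y ∈ s) (hxy : x ≤ y) :
    g y - g x ∈ Set.Icc (lo * (y - x)) (hi * (y - x)) := by
  rcases hxy.eq_or_lt with rfl | hlt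
  · simp
  have h_sub : Set.Icc x y ⊆ s := hs.ordConnected.out hx hy
  obtain ⟨c, hc, h_slope⟩ := exists_hasDerivAt_eq_slope g g' hlt
    (fun t ht => ((hg t (h_sub ht)).mono h_sub).continuousWithinAt)
    (fun t ht => ((hg t (h_sub (Set.Ioo_subset_Icc_self ht))).mono h_sub).hasDerivAt
      (Icc_mem_nhds ht.1 ht.2))
  have h_bound := hg' c (h_sub (Set.Ioo_subset_Icc_self hc))
  rw [h_slope] at h_bound
  exact ⟨(le_div_iff₀ (sub_pos.2 hlt)).1 h_bound.1, (div_le_iff₀ (sub_pos.2 hlt)).1 h_bound.2⟩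

lemma second_difference_mem_Icc (hs : Convex ℝ s)
    (hg : ∀ t ∈ s, HasDerivWithinAt g (g' t) s t)
    (hg' : ∀ u ∈ s, ∀ v ∈ s, u ≤ v → g' v - g' u ∈ Set.Icc (lo * (v - u)) (hi * (v - u)))
    {δ : ℝ} (hδ : 0 ≤ δ) (hx : x ∈ s) (hyδ : y + δ ∈ s) (hxy : x ≤ y) :
    (g (y + δ) - g y) - (g (x + δ) - g x) ∈
      Set.Icc (lo * δ * (y - x)) (hi * δ * (y - x)) := by
  have h_mem : ∀ t ∈ Set.Icc x y, t ∈ s ∧ t + δ ∈ s := fun t ht =>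
    ⟨hs.ordConnected.out hx hyδ ⟨ht.1, by linarith [ht.2]⟩,
      hs.ordConnected.out hx hyδ ⟨by linarith [ht.1], by linarith [ht.2]⟩⟩
  refine image_sub_mem_Icc_of_hasDerivWithinAt (g := fun t => g (t + δ) - g t)
    (g' := fun t => g' (t + δ) - g' t) (convex_Icc x y) (fun t ht => ?_) (fun t ht => ?_)
    (Set.left_mem_Icc.2 hxy) (Set.right_mem_Icc.2 hxy) hxy
  · refine .fun_sub ?_ ((hg t (h_mem t ht).1).mono fun u hu => (h_mem u hu).1)
    exact ((hg (t + δ) (h_mem t ht).2).comp t ((hasDerivWithinAt_id t _).add_const δ)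
      fun u hu => (h_mem u hu).2).congr_deriv (mul_one _)
  · simpa only [add_sub_cancel_left] using
      hg' t (h_mem t ht).1 (t + δ) (h_mem t ht).2 (le_add_of_nonneg_right hδ)

end Increments

/-! ### Spacing of the Taylor coefficients -/

/-- The coefficients of `h, h ^ 2, …, h ^ d` in the Taylor expansion of `F 0 (n + h)` when
`F j` is the `j`-th derivative of `F 0`; the constant term is left out, so the coordinate `j`
belongs to the power `j + 1`. -/
def taylorCoeff {d : ℕ} (F : ℕ → ℝ → ℝ) (n : ℤ) (j : Fin d) : ℝ :=
  F ((j : ℕ) + 1) n / (((j : ℕ) + 1).factorial : ℝ)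

lemma abs_sub_sub_floor_le_of_cell_eq {d H : ℕ} (hH : 0 < H) {α β : Fin d → ℝ} {j : Fin d}
    (h : cell H α j = cell H β j) :
    |α j - β j - ((⌊α j⌋ - ⌊β j⌋ : ℤ) : ℝ)| ≤ 1 / (H : ℝ) ^ ((j : ℕ) + 1) := by
  have hU : (0 : ℝ) < (H : ℝ) ^ ((j : ℕ) + 1) := by positivity
  have h_floor : ⌊(H : ℝ) ^ ((j : ℕ) + 1) * Int.fract (α j)⌋ =
      ⌊(H : ℝ) ^ ((j : ℕ) + 1) * Int.fract (β j)⌋ := by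
    rw [← Int.natCast_floor_eq_floor (mul_nonneg hU.le (Int.fract_nonneg _)),
      ← Int.natCast_floor_eq_floor (mul_nonneg hU.le (Int.fract_nonneg _))]
    exact congrArg Nat.cast h
  have h_abs := Int.abs_sub_lt_one_of_floor_eq_floor h_floor
  rw [← mul_sub, abs_mul, abs_of_pos hU] at h_abs
  rw [le_div_iff₀' hU, Int.cast_sub, sub_sub_sub_comm]
  exact h_abs.le

section Spacing

variable {e H : ℕ} {F : ℕ → ℝ → ℝ} {s : Set ℝ} {lam A P : ℝ} {m n : ℤ}

lemma IsDerivChainOn.sub_le_of_cell_taylorCoeff_eq (hs : Convex ℝ s)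
    (hF : IsDerivChainOn (e + 3) F s) (hk : ∀ x ∈ s, F (e + 3) x ∈ Set.Icc lam (A * lam))
    (hH : 0 < H) (h_scale : 1 ≤ P * (lam * (H : ℝ) ^ (e + 3))) (hP : 0 ≤ P)
    (hn : (n : ℝ) ∈ s) (hm : (m : ℝ) ∈ s) (hnm : n ≤ m)
    (h_cell : cell H (taylorCoeff F m : Fin (e + 2) → ℝ) = cell H (taylorCoeff F n))
    (h_floor : ⌊F (e + 2) m / (e + 2).factorial⌋ = ⌊F (e + 2) n / (e + 2).factorial⌋) :
    (m : ℝ) - n ≤ (e + 2).factorial * P * H := by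
  have hnm' : (n : ℝ) ≤ m := by exact_mod_cast hnm
  have h_close : F (e + 2) m / (e + 2).factorial - F (e + 2) n / (e + 2).factorial ≤
      1 / (H : ℝ) ^ (e + 2) := by
    have h_abs := abs_sub_sub_floor_le_of_cell_eq hH (congrFun h_cell (Fin.last (e + 1)))
    simp only [taylorCoeff, Fin.val_last, h_floor, sub_self, Int.cast_zero, sub_zero] at h_abs
    exact (le_abs_self _).trans h_abs
  have h_slope : lam * ((m : ℝ) - n) * (H : ℝ) ^ (e + 2) ≤ (e + 2).factorial := by
    rw [← sub_div, div_le_div_iff₀ (by positivity) (by positivity), one_mul] at h_close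
    refine le_trans ?_ h_close
    gcongr
    exact (image_sub_mem_Icc_of_hasDerivWithinAt hs (hF (e + 2) (by omega)) hk hn hm hnm').1
  calc (m : ℝ) - n ≤ P * (lam * (H : ℝ) ^ (e + 3)) * ((m : ℝ) - n) :=
        le_mul_of_one_le_left (sub_nonneg.2 hnm') h_scale
    _ = P * H * (lam * ((m : ℝ) - n) * (H : ℝ) ^ (e + 2)) := by ring
    _ ≤ P * H * (e + 2).factorial := by gcongr
    _ = _ := by ring

lemma IsDerivChainOn.collisionCount_cell_taylorCoeff_le_raw (hs : Convex ℝ s)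
    (hF : IsDerivChainOn (e + 3) F s) (hk : ∀ x ∈ s, F (e + 3) x ∈ Set.Icc lam (A * lam))
    (hA : 0 ≤ A) (hlam : 0 < lam) (hH : 0 < H)
    (h_scale : 1 ≤ P * (lam * (H : ℝ) ^ (e + 3))) (hP : 1 ≤ P)
    {K L : ℤ} (hKL : K ≤ L) (hI : ∀ n ∈ Finset.Ioc K L, (n : ℝ) ∈ s) :
    (collisionCount (Finset.Ioc K L) fun n => cell H (taylorCoeff F n : Fin (e + 2) → ℝ) : ℝ) ≤
      (A * (lam / (e + 2).factorial) * ((L : ℝ) - K) + 2) * (((L : ℝ) - K) +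
        2 * ((e + 2).factorial * P * H * (2 * A * ((L : ℝ) - K) * (1 / (H : ℝ) ^ (e + 1)) + 2) +
          A * (lam / (e + 1).factorial) * ((L : ℝ) - K) * ((e + 2).factorial * P * H) ^ 2 +
          4 * (1 / (H : ℝ) ^ (e + 1)) / (lam / (e + 1).factorial) *
            (1 + Real.log ((e + 2).factorial * P * H)))) := by
  have h_inc : ∀ x ∈ s, ∀ y ∈ s, x ≤ y → _ := fun x hx y hy =>
    image_sub_mem_Icc_of_hasDerivWithinAt hs (hF (e + 2) (by omega)) hk hx hy
  refine collisionCount_Ioc_le_of_spacing (a := fun n => F (e + 2) n / (e + 2).factorial)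
    (b := fun n => F (e + 1) n / (e + 1).factorial) hKL hA (by positivity) (by positivity)
    ?_ (by positivity) (fun m hm n hn hnm => ?_) (fun δ hδ m n hn hnm hm => ?_)
    fun m hm n hn hnm h_cell h_floor => ⟨hF.sub_le_of_cell_taylorCoeff_eq hs hk hH h_scale
      (by linarith) (hI n hn) (hI m hm) hnm.le h_cell h_floor, _,
      abs_sub_sub_floor_le_of_cell_eq hH (congrFun h_cell (Fin.last e).castSucc)⟩
  · refine one_le_mul_of_one_le_of_one_le (one_le_mul_of_one_le_of_one_le ?_ hP) ?_
    · exact_mod_cast (e + 2).factorial_pos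
    · exact_mod_cast hH
  · have hnm' : (n : ℝ) ≤ m := by exact_mod_cast hnm.le
    obtain ⟨h_lower, h_upper⟩ := h_inc n (hI n hn) m (hI m hm) hnm'
    rw [← sub_div]
    exact ⟨div_nonneg ((mul_nonneg hlam.le (sub_nonneg.2 hnm')).trans h_lower) (by positivity),
      (div_le_div_of_nonneg_right h_upper (by positivity)).trans_eq (by ring)⟩
  · have hnm' : (n : ℝ) ≤ m := by exact_mod_cast hnm.le
    have hm_mem := hI (m + δ) (Finset.mem_Ioc.2 ⟨by omega, hm⟩)
    push_cast at hm_mem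
    obtain ⟨h_lower, h_upper⟩ := second_difference_mem_Icc hs (hF (e + 1) (by omega)) h_inc
      (Nat.cast_nonneg δ) (hI n (Finset.mem_Ioc.2 ⟨hn, by omega⟩)) hm_mem hnm'
    push_cast
    rw [← sub_div, ← sub_div, ← sub_div]
    constructor
    · calc _ = lam * δ * ((m : ℝ) - n) / (e + 1).factorial := by ring
        _ ≤ _ := div_le_div_of_nonneg_right h_lower (by positivity)
    · calc _ ≤ A * lam * δ * ((m : ℝ) - n) / (e + 1).factorial :=
            div_le_div_of_nonneg_right h_upper (by positivity)
        _ = _ := by ring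

lemma spacing_bound_le {c X N H μ ν τ lam A Λ : ℝ} (hA : 1 ≤ A) (hc : 1 ≤ c) (hX : 0 ≤ X)
    (hXN : X ≤ 2 * N) (hH : 1 ≤ H) (hHN : H ≤ N) (hμ : 0 ≤ μ) (hμ_le : μ ≤ lam) (hν : 0 ≤ ν)
    (hτ : 0 ≤ τ) (hνH : ν * H ^ 2 ≤ 1) (hτH : H * τ ≤ 1) (hτν : τ / ν ≤ c * H ^ 2) (hΛ : 1 ≤ Λ)
    (hlam : lam * H ^ 2 ≤ 1) :
    (A * μ * X + 2) * (X + 2 * (c * H * (2 * A * X * τ + 2) + A * ν * X * (c * H) ^ 2 +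
        4 * τ / ν * Λ)) ≤
      72 * A ^ 2 * c ^ 2 * Λ * (N ^ 2 * (lam + 1 / N + H ^ 2 / N ^ 2)) := by
  have hN : 1 ≤ N := hH.trans hHN
  have hlam₀ : 0 ≤ lam := hμ.trans hμ_le
  have hAcc : 1 ≤ A * c ^ 2 := one_le_mul_of_one_le_of_one_le hA (one_le_pow₀ hc)
  have hc_sq : c ≤ c ^ 2 := le_self_pow₀ hc two_ne_zero
  have hAc_le : A * c ≤ A * c ^ 2 := by gcongr
  have hc_le : c ≤ A * c ^ 2 := hc_sq.trans (le_mul_of_one_le_left (by positivity) hA)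
  have h_first : A * μ * X + 2 ≤ 2 * A * (lam * N + 1) := calc
    A * μ * X + 2 ≤ A * lam * (2 * N) + 2 * A := by gcongr; linarith
    _ = 2 * A * (lam * N + 1) := by ring
  have h_second : X + 2 * (c * H * (2 * A * X * τ + 2) + A * ν * X * (c * H) ^ 2 +
      4 * τ / ν * Λ) ≤ 18 * (A * c ^ 2) * Λ * (N + H ^ 2) := calc
    _ = X + 4 * (A * c) * X * (H * τ) + 4 * c * H + 2 * (A * c ^ 2) * X * (ν * H ^ 2) +
          8 * (τ / ν) * Λ := by ring
    _ ≤ 2 * N + 4 * (A * c) * (2 * N) * 1 + 4 * c * N + 2 * (A * c ^ 2) * (2 * N) * 1 +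
          8 * (c * H ^ 2) * Λ := by gcongr
    _ = (2 + 8 * (A * c) + 4 * c + 4 * (A * c ^ 2)) * 1 * N + 8 * c * Λ * H ^ 2 := by ring
    _ ≤ 18 * (A * c ^ 2) * Λ * N + 18 * (A * c ^ 2) * Λ * H ^ 2 := by
        refine add_le_add ?_ ?_
        · gcongr
          linarith
        · refine mul_le_mul_of_nonneg_right ?_ (sq_nonneg H)
          refine mul_le_mul_of_nonneg_right ?_ (by linarith)
          linarith
    _ = _ := by ring
  have h_product : (lam * N + 1) * (N + H ^ 2) ≤
      2 * (N ^ 2 * (lam + 1 / N + H ^ 2 / N ^ 2)) := by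
    have h_clear : N ^ 2 * (lam + 1 / N + H ^ 2 / N ^ 2) = lam * N ^ 2 + N + H ^ 2 := by
      field_simp
    rw [h_clear]
    nlinarith [mul_le_mul_of_nonneg_left hlam (by linarith : 0 ≤ N), sq_nonneg H,
      mul_nonneg hlam₀ (sq_nonneg N)]
  calc _ ≤ 2 * A * (lam * N + 1) * (18 * (A * c ^ 2) * Λ * (N + H ^ 2)) :=
        mul_le_mul h_first h_second (by positivity) (by positivity)
    _ = 36 * A ^ 2 * c ^ 2 * Λ * ((lam * N + 1) * (N + H ^ 2)) := by ring
    _ ≤ 36 * A ^ 2 * c ^ 2 * Λ * (2 * (N ^ 2 * (lam + 1 / N + H ^ 2 / N ^ 2))) := by gcongr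
    _ = _ := by ring

theorem IsDerivChainOn.collisionCount_cell_taylorCoeff_le (hs : Convex ℝ s)
    (hF : IsDerivChainOn (e + 3) F s) (hk : ∀ x ∈ s, F (e + 3) x ∈ Set.Icc lam (A * lam))
    (hA : 1 ≤ A) (hlam : 0 < lam) (hH : 0 < H) (h_small : lam * (H : ℝ) ^ (e + 3) ≤ 1)
    (h_scale : 1 ≤ P * (lam * (H : ℝ) ^ (e + 3))) {K L : ℤ} (hKL : K ≤ L)
    (hI : ∀ n ∈ Finset.Ioc K L, (n : ℝ) ∈ s) {N : ℝ} (hLK : (L : ℝ) - K ≤ 2 * N) (hHN : H ≤ N) :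
    (collisionCount (Finset.Ioc K L) fun n => cell H (taylorCoeff F n : Fin (e + 2) → ℝ) : ℝ) ≤
      72 * A ^ 2 * ((e + 2).factorial * P) ^ 2 *
        (1 + Real.log ((e + 2).factorial * P * H)) *
          (N ^ 2 * (lam + 1 / N + (H : ℝ) ^ 2 / N ^ 2)) := by
  have h_fact : ∀ j : ℕ, (1 : ℝ) ≤ j.factorial := fun j => by exact_mod_cast j.factorial_pos
  have hH₁ : (1 : ℝ) ≤ H := by exact_mod_cast hH
  have hP : 1 ≤ P := by
    have h_pos : 0 < lam * (H : ℝ) ^ (e + 3) := by positivity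
    nlinarith
  have hc : 1 ≤ (e + 2).factorial * P := one_le_mul_of_one_le_of_one_le (h_fact _) hP
  have h_div : ∀ j : ℕ, lam / j.factorial ≤ lam := fun j => div_le_self hlam.le (h_fact j)
  have h_sq : lam * (H : ℝ) ^ 2 ≤ 1 := le_trans (by gcongr; omega) h_small
  refine (hF.collisionCount_cell_taylorCoeff_le_raw hs hk (by linarith) hlam hH h_scale hP
    hKL hI).trans (spacing_bound_le hA hc (sub_nonneg.2 (by exact_mod_cast hKL)) hLK hH₁ hHN
      (by positivity) (h_div _) (by positivity) (by positivity)
      (le_trans (by gcongr; exact h_div _) h_sq) ?_ ?_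
      (le_add_of_nonneg_right (Real.log_nonneg (one_le_mul_of_one_le_of_one_le hc hH₁))) h_sq)
  · rw [mul_one_div, div_le_one (by positivity)]
    exact le_self_pow₀ hH₁ (by omega)
  · rw [div_div, div_le_iff₀ (by positivity)]
    have h_ratio : (1 : ℝ) ≤ (e + 2).factorial / (e + 1).factorial := by
      rw [one_le_div (by positivity)]
      exact_mod_cast Nat.factorial_le (by omega)
    calc (1 : ℝ) ≤ P * (lam * (H : ℝ) ^ (e + 3)) * ((e + 2).factorial / (e + 1).factorial) :=
          one_le_mul_of_one_le_of_one_le h_scale h_ratio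
      _ = _ := by
          field_simp
          ring

end Spacing

/-! ### Averaging over short shifts -/

section Shift

variable {E : Type*} [SeminormedAddCommGroup E] {a : ℤ → E} {K L : ℤ}

lemma norm_sum_le_card (ha : ∀ n, ‖a n‖ ≤ 1) (I : Finset ℤ) : ‖∑ n ∈ I, a n‖ ≤ I.card := by
  simpa only [Finset.sum_const, nsmul_eq_mul, mul_one] using norm_sum_le_of_le I fun n _ => ha n

lemma norm_sum_Ioc_le (ha : ∀ n, ‖a n‖ ≤ 1) {B : ℝ} (hB : 0 ≤ B) (h : (L : ℝ) - K ≤ B) :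
    ‖∑ n ∈ Finset.Ioc K L, a n‖ ≤ B := by
  rcases le_total L K with hLK | hKL
  · simpa only [Finset.Ioc_eq_empty_of_le hLK, Finset.sum_empty, norm_zero] using hB
  · exact (norm_sum_le_card ha _).trans ((card_Ioc_eq_sub hKL).trans_le h)

lemma norm_sum_Ioc_sub_sum_shift_le (ha : ∀ n, ‖a n‖ ≤ 1) {H h : ℕ} (hh : h ≤ H)
    (hKL : K ≤ L - H) :
    ‖∑ n ∈ Finset.Ioc K L, a n - ∑ n ∈ Finset.Ioc K (L - H), a (n + h)‖ ≤ H := by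
  have h_shift : ∑ n ∈ Finset.Ioc K (L - H), a (n + h) =
      ∑ n ∈ Finset.Ioc (K + h) (L - H + h), a n := by
    rw [← Finset.map_add_right_Ioc, Finset.sum_map]
    rfl
  have h_sub : Finset.Ioc (K + h) (L - H + h) ⊆ Finset.Ioc K L :=
    Finset.Ioc_subset_Ioc (by omega) (by omega)
  have h_card : (Finset.Ioc K L \ Finset.Ioc (K + h) (L - H + h)).card ≤ H := by
    rw [Finset.card_sdiff_of_subset h_sub, Int.card_Ioc, Int.card_Ioc]
    omega
  rw [h_shift, ← Finset.sum_sdiff h_sub, add_sub_cancel_right]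
  exact (norm_sum_le_card ha _).trans (by exact_mod_cast h_card)

lemma mul_norm_sum_Ioc_le [NormedSpace ℝ E] (ha : ∀ n, ‖a n‖ ≤ 1) {H : ℕ} (hKL : K ≤ L - H) :
    (H : ℝ) * ‖∑ n ∈ Finset.Ioc K L, a n‖ ≤
      ∑ n ∈ Finset.Ioc K (L - H), ‖∑ h ∈ Finset.Icc 1 H, a (n + (h : ℤ))‖ + (H : ℝ) ^ 2 := by
  have h_avg : H • ∑ n ∈ Finset.Ioc K L, a n =
      ∑ n ∈ Finset.Ioc K (L - H), ∑ h ∈ Finset.Icc 1 H, a (n + (h : ℤ)) +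
        ∑ h ∈ Finset.Icc 1 H,
          (∑ n ∈ Finset.Ioc K L, a n - ∑ n ∈ Finset.Ioc K (L - H), a (n + (h : ℤ))) := by
    rw [Finset.sum_sub_distrib, Finset.sum_comm (s := Finset.Ioc K (L - H)), add_sub_cancel,
      Finset.sum_const, Nat.card_Icc, Nat.add_sub_cancel]
  have h_error := norm_sum_le_of_le (Finset.Icc 1 H) fun h hh =>
    norm_sum_Ioc_sub_sum_shift_le ha (Finset.mem_Icc.1 hh).2 hKL
  rw [Finset.sum_const, Nat.card_Icc, Nat.add_sub_cancel, nsmul_eq_mul, ← sq] at h_error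
  rw [← Real.norm_natCast H, ← norm_smul, Nat.cast_smul_eq_nsmul, h_avg, Real.norm_natCast]
  exact (norm_add_le _ _).trans (add_le_add (norm_sum_le _ _) h_error)

end Shift

section ShortSums

variable {p e g : ℕ} {F : ℕ → ℝ → ℝ} {s : Set ℝ} {lam A N : ℝ} {K L : ℤ}

theorem IsDerivChainOn.sum_norm_sum_eC_pow_le [Fact p.Prime] {D : ℝ} (hD : 0 ≤ D)
    (hDec : DecouplingBound p (e + 2) g D) (hs : Convex ℝ s) (hF : IsDerivChainOn (e + 3) F s)
    (hk : ∀ x ∈ s, F (e + 3) x ∈ Set.Icc lam (A * lam)) (hA : 1 ≤ A) (hlam : 0 < lam)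
    (h_small : lam * ((p ^ g : ℕ) : ℝ) ^ (e + 3) ≤ 1)
    (h_scale : 1 ≤ (p : ℝ) ^ (e + 3) * (lam * ((p ^ g : ℕ) : ℝ) ^ (e + 3))) (hKL : K ≤ L)
    (hI : ∀ n ∈ Finset.Ioc K L, Set.Icc (n : ℝ) (n + (p ^ g : ℕ)) ⊆ s)
    (hLK : (L : ℝ) - K ≤ 2 * N) (hHN : (p ^ g : ℕ) ≤ N) :
    (∑ n ∈ Finset.Ioc K L, ‖∑ h ∈ Finset.Icc 1 (p ^ g), eC (F 0 ((n + (h : ℤ) : ℤ) : ℝ))‖) ^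
        (2 * critExp (e + 2)) ≤
      (2 * N) ^ (2 * critExp (e + 2) - 2) *
        (72 * A ^ 2 * ((e + 2).factorial * (p : ℝ) ^ (e + 3)) ^ 2 *
          (1 + Real.log ((e + 2).factorial * (p : ℝ) ^ (e + 3) * (p ^ g : ℕ))) *
            (N ^ 2 * (lam + 1 / N + ((p ^ g : ℕ) : ℝ) ^ 2 / N ^ 2))) *
        ((1 + 2 * Real.pi * ((e + 2 : ℕ) ^ 2 + A)) ^ 2 * D * ((p ^ g : ℕ) : ℝ) ^ 2) ^
          critExp (e + 2) := by
  have hH : 0 < p ^ g := pow_pos (Fact.out : p.Prime).pos g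
  have h_base : ∀ n ∈ Finset.Ioc K L, (n : ℝ) ∈ s := fun n hn =>
    hI n hn (Set.left_mem_Icc.2 (le_add_of_nonneg_right (Nat.cast_nonneg _)))
  have h_count := hF.collisionCount_cell_taylorCoeff_le hs hk hA hlam hH h_small h_scale hKL
    h_base hLK hHN
  have h_sum := hDec.sum_norm_sum_eC_pow_le (by omega) hD (by linarith) (Finset.Ioc K L)
    (taylorCoeff F) (A := A) (R := fun n h =>
      F 0 (n + h) - taylorSum (fun j => F j n) n (e + 3) (n + h) + F 0 n) fun n hn h _ hh => by
    have hh' : (h : ℝ) + 1 ≤ (p ^ g : ℕ) := by exact_mod_cast hh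
    have : (0 : ℝ) ≤ h := Nat.cast_nonneg h
    have h_taylor := (hF.mono (hI n hn)).abs_sub_taylorSum_sub_le (convex_Icc _ _)
      (B := A * lam) (l := (p ^ g : ℕ)) (a := n) (x := n + h) (y := n + (h + 1))
      (fun x hx => abs_le.2 ⟨by nlinarith [(hk x (hI n hn hx)).1], (hk x (hI n hn hx)).2⟩)
      (by simp) (fun x hx => abs_le.2 ⟨by linarith [hx.1, hx.2], by linarith [hx.2]⟩)
      ⟨by linarith, by linarith⟩ ⟨by linarith, by linarith⟩
    rw [Nat.cast_add_one, add_sub_add_right_eq_sub]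
    refine h_taylor.trans ?_
    rw [add_sub_add_left_eq_sub, add_sub_cancel_left, abs_one, mul_one, le_div_iff₀ (by positivity)]
    calc _ = A * (lam * ((p ^ g : ℕ) : ℝ) ^ (e + 3)) := by ring
      _ ≤ A := mul_le_of_le_one_right (by linarith) h_small
  have h_phase : ∀ (n : ℤ) (h : ℕ),
      ∑ j : Fin (e + 2), taylorCoeff F n j * (h : ℝ) ^ ((j : ℕ) + 1) +
        (F 0 (n + h) - taylorSum (fun j => F j n) n (e + 3) (n + h) + F 0 n) =
      F 0 ((n + (h : ℤ) : ℤ) : ℝ) := fun n h => by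
    rw [taylorSum_add]
    simp only [taylorCoeff]
    push_cast
    ring
  simp only [h_phase, card_Ioc_eq_sub hKL] at h_sum
  have hX : 0 ≤ (L : ℝ) - K := sub_nonneg.2 (by exact_mod_cast hKL)
  have hN : 0 ≤ N := (Nat.cast_nonneg _).trans hHN
  refine h_sum.trans ?_
  gcongr

lemma one_add_log_mul_le {c H ε : ℝ} (hc : 0 < c) (hH : 0 < H) (hHN : H ≤ N) (hN : 1 ≤ N)
    (hε : 0 < ε) : 1 + Real.log (c * H) ≤ (1 + c ^ ε / ε) * N ^ ε := calc
  1 + Real.log (c * H) ≤ 1 + (c * N) ^ ε / ε := by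
    gcongr
    exact (Real.log_le_log (by positivity) (by gcongr)).trans
      (Real.log_le_rpow_div (by positivity) hε)
  _ ≤ N ^ ε + c ^ ε / ε * N ^ ε := by
    rw [Real.mul_rpow hc.le (by linarith), mul_div_right_comm]
    gcongr
    exact Real.one_le_rpow hN hε.le
  _ = _ := by ring

lemma DecouplingExponent.exists_decouplingBound_le [NeZero p] {k : ℕ}
    (h : DecouplingExponent p k 0) {ε : ℝ} (hε : 0 < ε) :
    ∃ C : ℝ, 1 ≤ C ∧ ∀ (g : ℕ) (N : ℝ), (p ^ g : ℕ) ≤ N → DecouplingBound p k g (C * N ^ ε) := by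
  obtain ⟨C, hC, hDec⟩ := h ε hε
  refine ⟨C, hC, fun g N hHN => (hDec g).mono ?_⟩
  have h_pow : (p : ℝ) ^ ((0 + ε) * g) = ((p ^ g : ℕ) : ℝ) ^ ε := by
    rw [zero_add, mul_comm, Real.rpow_natCast_mul (Nat.cast_nonneg p), Nat.cast_pow]
  rw [h_pow]
  gcongr

lemma le_rpow_mul_of_pow_le {n : ℕ} (hn : n ≠ 0) {T C Y E H : ℝ} (hC : 0 ≤ C) (hY : 0 ≤ Y)
    (hE : 0 ≤ E) (hH : 0 ≤ H) (h : T ^ n ≤ C * Y ^ n * E * H ^ n) :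
    T ≤ C ^ (1 / n : ℝ) * Y * E ^ (1 / n : ℝ) * H := by
  refine le_of_pow_le_pow_left₀ hn (by positivity) (h.trans_eq ?_)
  rw [mul_pow, mul_pow, mul_pow, one_div, Real.rpow_inv_natCast_pow hC hn,
    Real.rpow_inv_natCast_pow hE hn]

lemma mul_mul_rpow_mul_pow_le {n : ℕ} (hn : 0 < n) {B c E H ε : ℝ} (hB : 0 ≤ B) (hc : 0 ≤ c)
    (hE : 0 ≤ E) (hH : 0 ≤ H) (hN : 1 ≤ N) (hε : 0 ≤ ε) :
    (2 * N) ^ (2 * n - 2) * (B * N ^ ε * (N ^ 2 * E)) * (c * N ^ ε * H ^ 2) ^ n ≤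
      2 ^ (2 * n - 2) * B * c ^ n * (N ^ (1 + ε)) ^ (2 * n) * E * H ^ (2 * n) := by
  have hZ : 1 ≤ N ^ ε := Real.one_le_rpow hN hε
  calc _ = 2 ^ (2 * n - 2) * B * c ^ n * (N ^ (2 * n - 2) * N ^ 2) * (N ^ ε) ^ (n + 1) * E *
          H ^ (2 * n) := by
        rw [pow_mul H 2 n]
        simp only [mul_pow]
        ring
    _ ≤ 2 ^ (2 * n - 2) * B * c ^ n * (N ^ (2 * n - 2) * N ^ 2) * (N ^ ε) ^ (2 * n) * E *
          H ^ (2 * n) := by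
        gcongr
        omega
    _ = _ := by
        rw [← pow_add, Nat.sub_add_cancel (by omega), Real.rpow_add (by linarith), Real.rpow_one,
          mul_pow]
        ring

lemma exists_sum_norm_sum_eC_pow_le [Fact p.Prime] (hp : e + 2 < p) (hA : 1 ≤ A) {ε : ℝ}
    (hε : 0 < ε) :
    ∃ C : ℝ, 0 < C ∧ ∀ {g : ℕ} {F : ℕ → ℝ → ℝ} {s : Set ℝ} {lam N : ℝ} {K L : ℤ},
      Convex ℝ s → IsDerivChainOn (e + 3) F s →
      (∀ x ∈ s, F (e + 3) x ∈ Set.Icc lam (A * lam)) → 0 < lam →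
      lam * ((p ^ g : ℕ) : ℝ) ^ (e + 3) ≤ 1 →
      1 ≤ (p : ℝ) ^ (e + 3) * (lam * ((p ^ g : ℕ) : ℝ) ^ (e + 3)) → K ≤ L →
      (∀ n ∈ Finset.Ioc K L, Set.Icc (n : ℝ) (n + (p ^ g : ℕ)) ⊆ s) →
      (L : ℝ) - K ≤ 2 * N → (p ^ g : ℕ) ≤ N →
      (∑ n ∈ Finset.Ioc K L, ‖∑ h ∈ Finset.Icc 1 (p ^ g), eC (F 0 ((n + (h : ℤ) : ℤ) : ℝ))‖) ^
          (2 * critExp (e + 2)) ≤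
        C * (N ^ (1 + ε)) ^ (2 * critExp (e + 2)) *
          (lam + 1 / N + ((p ^ g : ℕ) : ℝ) ^ 2 / N ^ 2) *
            ((p ^ g : ℕ) : ℝ) ^ (2 * critExp (e + 2)) := by
  have hp₀ : 0 < p := by omega
  obtain ⟨C₀, hC₀, hDec⟩ :=
    (decouplingExponent_zero (by omega) hp).exists_decouplingBound_le hε
  have : 0 < A := by linarith
  have : 0 < C₀ := by linarith
  have h_critExp : 0 < critExp (e + 2) := critExp_pos (by omega)
  generalize h_n : critExp (e + 2) = n at h_critExp
  set c : ℝ := (e + 2).factorial * (p : ℝ) ^ (e + 3)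
  set c' : ℝ := (1 + 2 * Real.pi * ((e + 2 : ℕ) ^ 2 + A)) ^ 2 * C₀
  have hc : 0 < c := by positivity
  have hc'₀ : 0 < c' := by positivity
  refine ⟨2 ^ (2 * n - 2) * (72 * A ^ 2 * c ^ 2 * (1 + c ^ ε / ε)) * c' ^ n, by positivity, ?_⟩
  intro g F s lam N K L hs hF hk hlam h_small h_scale hKL hI hLK hHN
  have hH : (1 : ℝ) ≤ (p ^ g : ℕ) := by exact_mod_cast pow_pos hp₀ g
  have hN : 1 ≤ N := hH.trans hHN
  have h_raw := hF.sum_norm_sum_eC_pow_le (by positivity) (hDec g N hHN) hs hk hA hlam h_small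
    h_scale hKL hI hLK hHN
  rw [h_n] at h_raw
  generalize ((p ^ g : ℕ) : ℝ) = H at *
  have h_log := one_add_log_mul_le hc (by linarith) hHN hN hε
  refine (h_raw.trans ?_).trans (mul_mul_rpow_mul_pow_le h_critExp (by positivity) hc'₀.le
    (by positivity) (by linarith) hN hε.le)
  rw [mul_assoc (72 * A ^ 2 * c ^ 2) (1 + c ^ ε / ε), mul_assoc _ C₀]
  gcongr

theorem exists_norm_sum_eC_le_add [Fact p.Prime] (hp : e + 2 < p) (hA : 1 ≤ A) {ε : ℝ}
    (hε : 0 < ε) :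
    ∃ C : ℝ, 0 < C ∧ ∀ {g : ℕ} {F : ℕ → ℝ → ℝ} {s : Set ℝ} {lam N : ℝ} {K L : ℤ},
      Convex ℝ s → IsDerivChainOn (e + 3) F s →
      (∀ x ∈ s, F (e + 3) x ∈ Set.Icc lam (A * lam)) → 0 < lam →
      lam * ((p ^ g : ℕ) : ℝ) ^ (e + 3) ≤ 1 →
      1 ≤ (p : ℝ) ^ (e + 3) * (lam * ((p ^ g : ℕ) : ℝ) ^ (e + 3)) →
      Set.Icc (K + 1 : ℝ) L ⊆ s → (L : ℝ) - K ≤ 2 * N → (p ^ g : ℕ) ≤ N →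
      ‖∑ n ∈ Finset.Ioc K L, eC (F 0 (n : ℝ))‖ ≤
        C * N ^ (1 + ε) * (lam + 1 / N + ((p ^ g : ℕ) : ℝ) ^ 2 / N ^ 2) ^
          (1 / (2 * critExp (e + 2) : ℕ) : ℝ) + (p ^ g : ℕ) := by
  obtain ⟨C, hC, h_moment⟩ := exists_sum_norm_sum_eC_pow_le hp hA hε
  refine ⟨C ^ (1 / (2 * critExp (e + 2) : ℕ) : ℝ), by positivity, ?_⟩
  intro g F s lam N K L hs hF hk hlam h_small h_scale h_sub hLK hHN
  have hH : (0 : ℝ) < (p ^ g : ℕ) := by exact_mod_cast pow_pos (by omega : 0 < p) g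
  have hN : 0 < N := hH.trans_le hHN
  have h_norm : ∀ n : ℤ, ‖eC (F 0 n)‖ ≤ 1 := fun n => (norm_eC _).le
  rcases lt_or_ge (L - (p ^ g : ℕ)) K with h_short | h_long
  · refine (norm_sum_Ioc_le h_norm hH.le ?_).trans (le_add_of_nonneg_left (by positivity))
    have : (L : ℝ) - (p ^ g : ℕ) < K := by exact_mod_cast h_short
    linarith
  have h_shifts := h_moment hs hF hk hlam h_small h_scale h_long (fun n hn => by
      obtain ⟨h_lower, h_upper⟩ := Finset.mem_Ioc.1 hn
      refine (Set.Icc_subset_Icc ?_ ?_).trans h_sub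
      · exact_mod_cast h_lower
      · exact_mod_cast le_sub_iff_add_le.1 h_upper)
    (by push_cast at hH ⊢; linarith) hHN
  have h_root := le_rpow_mul_of_pow_le
    (Nat.mul_pos two_pos (critExp_pos (by omega))).ne' hC.le (by positivity) (by positivity) hH.le
    h_shifts
  refine le_of_mul_le_mul_left ((mul_norm_sum_Ioc_le h_norm h_long).trans ?_) hH
  rw [mul_add, ← sq, mul_comm ((p ^ g : ℕ) : ℝ)]
  gcongr

end ShortSums

/-! ### The derivative estimate -/

/-- The saving over the trivial bound `N` in Heath-Brown's estimate for a sum of length about `N`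
whose phase has `k`-th derivative of size `lam`. -/
def heathBrownBound (k : ℕ) (N lam : ℝ) : ℝ :=
  lam ^ ((1 : ℝ) / ((k : ℝ) * ((k : ℝ) - 1))) +
    N ^ (-(1 : ℝ) / ((k : ℝ) * ((k : ℝ) - 1))) +
    N ^ (-(2 : ℝ) / ((k : ℝ) * ((k : ℝ) - 1))) *
      lam ^ (-(2 : ℝ) / ((k : ℝ) ^ 2 * ((k : ℝ) - 1)))

section HeathBrownBound

variable {k : ℕ} {N H lam : ℝ}

lemma heathBrownBound_nonneg (hN : 0 ≤ N) (hlam : 0 ≤ lam) : 0 ≤ heathBrownBound k N lam := by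
  unfold heathBrownBound
  positivity

lemma rpow_mul_rpow_eq_mul_pow_rpow (hk : k ≠ 0) (hN : 0 ≤ N) (hlam : 0 ≤ lam) :
    N ^ (-(2 : ℝ) / ((k : ℝ) * ((k : ℝ) - 1))) *
        lam ^ (-(2 : ℝ) / ((k : ℝ) ^ 2 * ((k : ℝ) - 1))) =
      (lam * N ^ k) ^ (-(2 : ℝ) / ((k : ℝ) ^ 2 * ((k : ℝ) - 1))) := by
  have h_exp : (k : ℝ) * (-2 / ((k : ℝ) ^ 2 * ((k : ℝ) - 1))) = -2 / ((k : ℝ) * ((k : ℝ) - 1)) := by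
    field_simp
  rw [Real.mul_rpow hlam (by positivity), ← Real.rpow_natCast_mul hN, h_exp, mul_comm]

lemma one_le_heathBrownBound_of_one_le (hk : 1 ≤ k) (hN : 0 ≤ N) (hlam : 1 ≤ lam) :
    1 ≤ heathBrownBound k N lam := by
  have hk' : (0 : ℝ) ≤ k - 1 := sub_nonneg.2 (by exact_mod_cast hk)
  have h_one := Real.one_le_rpow hlam (by positivity : 0 ≤ 1 / ((k : ℝ) * ((k : ℝ) - 1)))
  unfold heathBrownBound
  have : 0 ≤ lam := by linarith
  rw [add_assoc]
  exact le_add_of_le_of_nonneg h_one (by positivity)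

lemma one_le_heathBrownBound_of_mul_pow_le_one (hk : 1 ≤ k) (hN : 0 < N) (hlam : 0 < lam)
    (h : lam * N ^ k ≤ 1) : 1 ≤ heathBrownBound k N lam := by
  have hk' : (0 : ℝ) ≤ k - 1 := sub_nonneg.2 (by exact_mod_cast hk)
  rw [heathBrownBound, rpow_mul_rpow_eq_mul_pow_rpow (by omega) hN.le hlam.le]
  exact le_add_of_nonneg_of_le (by positivity)
    (Real.one_le_rpow_of_pos_of_le_one_of_nonpos (by positivity) h
      (div_nonpos_of_nonpos_of_nonneg (by norm_num) (by positivity)))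

lemma div_rpow_le_of_mul_pow_le_one (hk : 2 ≤ k) (hN : 0 < N) (hH : 0 ≤ H) (hlam : 0 < lam)
    (h : lam * H ^ k ≤ 1) :
    (H ^ 2 / N ^ 2) ^ ((1 : ℝ) / ((k : ℝ) * ((k : ℝ) - 1))) ≤
      N ^ (-(2 : ℝ) / ((k : ℝ) * ((k : ℝ) - 1))) *
        lam ^ (-(2 : ℝ) / ((k : ℝ) ^ 2 * ((k : ℝ) - 1))) := by
  have hk' : (0 : ℝ) < k - 1 := sub_pos.2 (by exact_mod_cast hk)
  have h_ratio : (H / N) ^ k ≤ (lam * N ^ k)⁻¹ := by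
    rw [div_pow, ← one_div, div_le_div_iff₀ (by positivity) (by positivity)]
    calc H ^ k * (lam * N ^ k) = lam * H ^ k * N ^ k := by ring
      _ ≤ 1 * N ^ k := by gcongr
  have h_exp : (2 : ℕ) * ((1 : ℝ) / ((k : ℝ) * ((k : ℝ) - 1))) =
      k * (2 / ((k : ℝ) ^ 2 * ((k : ℝ) - 1))) := by
    push_cast
    field_simp
  rw [rpow_mul_rpow_eq_mul_pow_rpow (by omega) hN.le hlam.le, ← div_pow,
    ← Real.rpow_natCast_mul (by positivity), h_exp, Real.rpow_natCast_mul (by positivity), neg_div,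
    Real.rpow_neg (by positivity), ← Real.inv_rpow (by positivity)]
  gcongr

lemma rpow_le_heathBrownBound (hk : 2 ≤ k) (hN : 0 < N) (hH : 0 ≤ H) (hlam : 0 < lam)
    (h : lam * H ^ k ≤ 1) :
    (lam + 1 / N + H ^ 2 / N ^ 2) ^ ((1 : ℝ) / ((k : ℝ) * ((k : ℝ) - 1))) ≤
      heathBrownBound k N lam := by
  have hk₂ : (2 : ℝ) ≤ k := by exact_mod_cast hk
  have h_exp₀ : 0 ≤ 1 / ((k : ℝ) * ((k : ℝ) - 1)) :=
    one_div_nonneg.2 (mul_nonneg (by linarith) (by linarith))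
  have h_exp₁ : 1 / ((k : ℝ) * ((k : ℝ) - 1)) ≤ 1 := by
    rw [div_le_one] <;> nlinarith
  have h_inv : (1 / N) ^ ((1 : ℝ) / ((k : ℝ) * ((k : ℝ) - 1))) =
      N ^ (-(1 : ℝ) / ((k : ℝ) * ((k : ℝ) - 1))) := by
    rw [one_div N, Real.inv_rpow hN.le, ← Real.rpow_neg hN.le, neg_div]
  calc _ ≤ (lam + 1 / N) ^ ((1 : ℝ) / ((k : ℝ) * ((k : ℝ) - 1))) +
          (H ^ 2 / N ^ 2) ^ ((1 : ℝ) / ((k : ℝ) * ((k : ℝ) - 1))) :=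
        Real.rpow_add_le_add_rpow (by positivity) (by positivity) h_exp₀ h_exp₁
    _ ≤ lam ^ ((1 : ℝ) / ((k : ℝ) * ((k : ℝ) - 1))) +
          (1 / N) ^ ((1 : ℝ) / ((k : ℝ) * ((k : ℝ) - 1))) +
          (H ^ 2 / N ^ 2) ^ ((1 : ℝ) / ((k : ℝ) * ((k : ℝ) - 1))) := by
        gcongr
        exact Real.rpow_add_le_add_rpow hlam.le (by positivity) h_exp₀ h_exp₁
    _ ≤ _ := by
        rw [h_inv]
        exact add_le_add_right (div_rpow_le_of_mul_pow_le_one hk hN hH hlam h) _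

lemma le_mul_heathBrownBound (hk : 2 ≤ k) (hN : 0 < N) (hH : 0 ≤ H) (hHN : H ≤ N) (hlam : 0 < lam)
    (h : lam * H ^ k ≤ 1) : H ≤ N * heathBrownBound k N lam := by
  have hk₂ : (2 : ℝ) ≤ k := by exact_mod_cast hk
  have h_exp₀ : 0 ≤ 1 / ((k : ℝ) * ((k : ℝ) - 1)) :=
    one_div_nonneg.2 (mul_nonneg (by linarith) (by linarith))
  have h_exp₁ : (2 : ℕ) * (1 / ((k : ℝ) * ((k : ℝ) - 1))) ≤ 1 := by
    rw [mul_one_div, div_le_one] <;> push_cast <;> nlinarith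
  rw [← div_le_iff₀' hN]
  calc H / N ≤ (H / N) ^ ((2 : ℕ) * (1 / ((k : ℝ) * ((k : ℝ) - 1)))) :=
        Real.self_le_rpow_of_le_one (by positivity) ((div_le_one hN).2 hHN) h_exp₁
    _ = (H ^ 2 / N ^ 2) ^ (1 / ((k : ℝ) * ((k : ℝ) - 1))) := by
        rw [Real.rpow_natCast_mul (by positivity), div_pow]
    _ ≤ (lam + 1 / N + H ^ 2 / N ^ 2) ^ (1 / ((k : ℝ) * ((k : ℝ) - 1))) := by
        gcongr
        exact le_add_of_nonneg_left (by positivity)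
    _ ≤ _ := rpow_le_heathBrownBound hk hN hH hlam h

lemma exists_pow_scale {p : ℕ} (hp : 1 < p) (hk : k ≠ 0) (hlam : 0 < lam) (hlam₁ : lam ≤ 1) :
    ∃ g : ℕ, lam * ((p ^ g : ℕ) : ℝ) ^ k ≤ 1 ∧
      1 ≤ (p : ℝ) ^ k * (lam * ((p ^ g : ℕ) : ℝ) ^ k) := by
  obtain ⟨g, h_lower, h_upper⟩ := exists_nat_pow_near ((one_le_inv₀ hlam).2 hlam₁)
    (one_lt_pow₀ (by exact_mod_cast hp : (1 : ℝ) < p) hk)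
  have h_pow : ((p ^ g : ℕ) : ℝ) ^ k = ((p : ℝ) ^ k) ^ g := by
    rw [Nat.cast_pow, pow_right_comm]
  refine ⟨g, ?_, ?_⟩ <;> rw [h_pow]
  · rwa [← le_inv_mul_iff₀ hlam, mul_one]
  · rw [mul_left_comm, ← pow_succ', ← inv_le_iff_one_le_mul₀' hlam]
    exact h_upper.le

end HeathBrownBound

lemma le_rpow_one_add {N ε : ℝ} (hN : 1 ≤ N) (hε : 0 ≤ ε) : N ≤ N ^ (1 + ε) :=
  Real.self_le_rpow_of_one_le hN (le_add_of_nonneg_right hε)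

theorem exists_norm_sum_eC_le_mul_heathBrownBound (e : ℕ) {A : ℝ} (hA : 1 ≤ A) {ε : ℝ}
    (hε : 0 < ε) :
    ∃ C : ℝ, 0 < C ∧ ∀ {F : ℕ → ℝ → ℝ} {N N₁ lam : ℝ}, 1 ≤ N → N₁ ≤ 2 * N → 0 < lam →
      IsDerivChainOn (e + 3) F (Set.Icc N N₁) →
      (∀ x ∈ Set.Icc N N₁, F (e + 3) x ∈ Set.Icc lam (A * lam)) →
      ‖∑ n ∈ Finset.Ioc ⌊N⌋ ⌊N₁⌋, eC (F 0 (n : ℝ))‖ ≤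
        C * N ^ (1 + ε) * heathBrownBound (e + 3) N lam := by
  obtain ⟨p, hp_le, hp⟩ := Nat.exists_infinite_primes (e + 3)
  have : Fact p.Prime := ⟨hp⟩
  obtain ⟨C, hC, h_sum⟩ := exists_norm_sum_eC_le_add hp_le hA hε
  refine ⟨C + 2, by linarith, ?_⟩
  intro F N N₁ lam hN hN₁ hlam hF hk
  have hN₀ : 0 < N := by linarith
  have h_bound := heathBrownBound_nonneg (k := e + 3) hN₀.le hlam.le
  have hNε := le_rpow_one_add hN hε.le
  have hLK : (⌊N₁⌋ : ℝ) - ⌊N⌋ ≤ 2 * N := by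
    linarith [Int.floor_le N₁, Int.lt_floor_add_one N]
  by_cases h_trivial : 1 ≤ heathBrownBound (e + 3) N lam
  · calc _ ≤ 2 * N := norm_sum_Ioc_le (fun n => (norm_eC _).le) (by linarith) hLK
      _ ≤ (C + 2) * N ^ (1 + ε) := by
        gcongr
        linarith
      _ ≤ _ := le_mul_of_one_le_right (by positivity) h_trivial
  have hlam₁ : lam < 1 := not_le.1
    (mt (one_le_heathBrownBound_of_one_le (by omega) hN₀.le) h_trivial)
  have h_large : 1 < lam * N ^ (e + 3) := not_le.1
    (mt (one_le_heathBrownBound_of_mul_pow_le_one (by omega) hN₀ hlam) h_trivial)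
  obtain ⟨g, h_small, h_scale⟩ := exists_pow_scale hp.one_lt (by omega : e + 3 ≠ 0) hlam hlam₁.le
  have hHN : ((p ^ g : ℕ) : ℝ) ≤ N := (lt_of_pow_lt_pow_left₀ (e + 3) hN₀.le
    (lt_of_mul_lt_mul_left (h_small.trans_lt h_large) hlam.le)).le
  have h_exp : ((2 * critExp (e + 2) : ℕ) : ℝ) = ((e + 3 : ℕ) : ℝ) * (((e + 3 : ℕ) : ℝ) - 1) := by
    rw [two_mul_critExp]
    push_cast
    ring
  have h_sub : Set.Icc ((⌊N⌋ : ℝ) + 1) ⌊N₁⌋ ⊆ Set.Icc N N₁ :=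
    Set.Icc_subset_Icc (Int.lt_floor_add_one N).le (Int.floor_le N₁)
  have h_raw := h_sum (convex_Icc _ _) hF hk hlam h_small h_scale h_sub hLK hHN
  rw [h_exp] at h_raw
  calc _ ≤ _ := h_raw
    _ ≤ C * N ^ (1 + ε) * heathBrownBound (e + 3) N lam +
          N ^ (1 + ε) * heathBrownBound (e + 3) N lam := by
        gcongr
        · exact rpow_le_heathBrownBound (by omega) hN₀ (Nat.cast_nonneg _) hlam h_small
        · exact (le_mul_heathBrownBound (by omega) hN₀ (Nat.cast_nonneg _) hHN hlam h_small).trans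
            (by gcongr)
    _ ≤ _ := by nlinarith [mul_nonneg (hN₀.le.trans hNε) h_bound]

lemma forall_pos_or_forall_neg_of_isPreconnected {X : Type*} [TopologicalSpace X] {s : Set X}
    (hs : IsPreconnected s) {f : X → ℝ} (hf : ContinuousOn f s) (h : ∀ x ∈ s, f x ≠ 0) :
    (∀ x ∈ s, 0 < f x) ∨ ∀ x ∈ s, f x < 0 := by
  by_contra! h_mixed
  obtain ⟨⟨x, hx, hx₀⟩, y, hy, hy₀⟩ := h_mixed
  obtain ⟨z, hz, hz₀⟩ := hs.intermediate_value hx hy hf ⟨hx₀, hy₀⟩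
  exact h z hz hz₀

/-- Heath-Brown's `k`-th derivative exponential sum estimate. -/
theorem stmt8 (k : ℕ) (hk : 3 ≤ k) (A : ℝ) (hA : 1 ≤ A) (ε : ℝ) (hε : 0 < ε) :
    ∃ C : ℝ, 0 < C ∧ ∃ N₀ : ℝ, ∀ N N₁ : ℝ, N₀ ≤ N → N ≤ N₁ → N₁ ≤ 2 * N →
      ∀ f : ℝ → ℝ, ∀ lam : ℝ, 0 < lam →
        ContDiffOn ℝ k f (Set.Icc N N₁) →
        (∀ t ∈ Set.Icc N N₁,
          lam ≤ |iteratedDerivWithin k f (Set.Icc N N₁) t| ∧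
          |iteratedDerivWithin k f (Set.Icc N N₁) t| ≤ A * lam) →
        ‖∑ n ∈ Finset.Ioc ⌊N⌋ ⌊N₁⌋, eC (f (n : ℝ))‖ ≤
          C * N ^ (1 + ε) *
            (lam ^ ((1 : ℝ) / ((k : ℝ) * ((k : ℝ) - 1))) +
              N ^ (-(1 : ℝ) / ((k : ℝ) * ((k : ℝ) - 1))) +
              N ^ (-(2 : ℝ) / ((k : ℝ) * ((k : ℝ) - 1))) *
                lam ^ (-(2 : ℝ) / ((k : ℝ) ^ 2 * ((k : ℝ) - 1)))) := by
  obtain ⟨e, rfl⟩ := Nat.exists_eq_add_of_le' hk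
  obtain ⟨C, hC, h_main⟩ := exists_norm_sum_eC_le_mul_heathBrownBound e hA hε
  refine ⟨C, hC, 1, fun N N₁ hN hNN₁ hN₁ f lam hlam hf hb => ?_⟩
  change _ ≤ C * N ^ (1 + ε) * heathBrownBound (e + 3) N lam
  have hN₀ : 0 < N := by linarith
  rcases hNN₁.eq_or_lt with rfl | hlt
  · simpa using mul_nonneg (by positivity) (heathBrownBound_nonneg hN₀.le hlam.le)
  have h_unique := uniqueDiffOn_Icc hlt
  have h_chain := isDerivChainOn_iteratedDerivWithin hf h_unique
  rcases forall_pos_or_forall_neg_of_isPreconnected isPreconnected_Icc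
      (hf.continuousOn_iteratedDerivWithin le_rfl h_unique)
      (fun x hx => abs_pos.1 (hlam.trans_le (hb x hx).1)) with h_pos | h_neg
  · simpa only [iteratedDerivWithin_zero] using h_main hN hN₁ hlam h_chain fun x hx => by
      simpa only [Set.mem_Icc, abs_of_pos (h_pos x hx)] using hb x hx
  · have h_conj := h_main hN hN₁ hlam h_chain.neg fun x hx => by
      simpa only [Set.mem_Icc, abs_of_neg (h_neg x hx)] using hb x hx
    simpa only [iteratedDerivWithin_zero, eC_neg, ← map_sum, RCLike.norm_conj] using h_conj
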